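/- arXiv:1904.01919 — 2 statements merged into one kernel-verified Lean document; each statement's English description precedes it below -/
import Mathlib

section
/- Suppose 2 < p < ∞ and 1 − 2/p < s ≤ 1, let p' be the conjugate exponent of p, and let g be holomorphic on the unit disc D. Then the multiplication operator M_g maps the Besov space B^p into Q_s if and only if g ∈ Q_{s,log,1/p'} ∩ H^∞. -/
open MeasureTheory Metric Complex Real Filter Set

noncomputable section

/-- `f` is holomorphic on the open unit disc. -/
def HolOn (f : ℂ → ℂ) : Prop := DifferentiableOn ℂ f (Metric.ball (0:ℂ) 1)

/-- The normalized Lebesgue area measure on `ℂ` (so the unit disc has total mass 1). -/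
def dA : Measure ℂ := (ENNReal.ofReal π)⁻¹ • volume

/-- Bounded holomorphic functions on the unit disc. -/
def Hinf : Set (ℂ → ℂ) :=
  {f | HolOn f ∧ ∃ C : ℝ, ∀ z ∈ Metric.ball (0:ℂ) 1, ‖f z‖ ≤ C}

/-- The Bloch space. -/
def Bloch : Set (ℂ → ℂ) :=
  {f | HolOn f ∧ ∃ C : ℝ, ∀ z ∈ Metric.ball (0:ℂ) 1,
      (1 - ‖z‖ ^ 2) * ‖deriv f z‖ ≤ C}

/-- The little Bloch space: `(1-|z|²)|f'(z)| → 0` as `|z| → 1⁻`. -/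
def littleBloch : Set (ℂ → ℂ) :=
  {f | HolOn f ∧ ∀ ε : ℝ, 0 < ε → ∃ r : ℝ, r < 1 ∧ ∀ z ∈ Metric.ball (0:ℂ) 1,
      r < ‖z‖ → (1 - ‖z‖ ^ 2) * ‖deriv f z‖ < ε}

/-- The `α`-logarithmic Bloch space. -/
def BlochLog (α : ℝ) : Set (ℂ → ℂ) :=
  {f | HolOn f ∧ ∃ C : ℝ, ∀ z ∈ Metric.ball (0:ℂ) 1,
      (1 - ‖z‖ ^ 2) * (Real.log (2 / (1 - ‖z‖ ^ 2))) ^ α *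
        ‖deriv f z‖ ≤ C}

/-- The Besov space `B¹`: holomorphic `f` with `∫_D |f''| dA < ∞`. -/
def Besov1 : Set (ℂ → ℂ) :=
  {f | HolOn f ∧ ∫⁻ z in Metric.ball (0:ℂ) 1,
      ENNReal.ofReal (‖deriv (deriv f) z‖) ∂dA < ⊤}

/-- The Besov space `Bᵖ` (`1 < p < ∞`): `∫_D (1-|z|)^(p-2) |f'(z)|^p dA(z) < ∞`. -/
def Besov (p : ℝ) : Set (ℂ → ℂ) :=
  {f | HolOn f ∧ ∫⁻ z in Metric.ball (0:ℂ) 1,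
      ENNReal.ofReal ((1 - ‖z‖) ^ (p - 2) * ‖deriv f z‖ ^ p) ∂dA < ⊤}

open scoped Classical in
/-- The Besov space `Bᵖ` for all `1 ≤ p < ∞` (with the special definition at `p = 1`). -/
def BesovFull (p : ℝ) : Set (ℂ → ℂ) := if p = 1 then Besov1 else Besov p

/-- The Möbius transformation `φ_a(z) = (a-z)/(1 - conj a · z)`. -/
def phi (a z : ℂ) : ℂ := (a - z) / (1 - (starRingEnd ℂ) a * z)

/-- The space `Q_s`. -/
def Qs (s : ℝ) : Set (ℂ → ℂ) :=
  {f | HolOn f ∧ ⨆ a ∈ Metric.ball (0:ℂ) 1, ∫⁻ z in Metric.ball (0:ℂ) 1,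
      ENNReal.ofReal (‖deriv f z‖ ^ 2 *
        (1 - ‖phi a z‖ ^ 2) ^ s) ∂dA < ⊤}

/-- The space `Q_{s,log,α}`. -/
def QsLog (s α : ℝ) : Set (ℂ → ℂ) :=
  {f | HolOn f ∧ ⨆ a ∈ Metric.ball (0:ℂ) 1,
      (ENNReal.ofReal ((Real.log (2 / (1 - ‖a‖))) ^ (2 * α)) *
        ∫⁻ z in Metric.ball (0:ℂ) 1,
          ENNReal.ofReal (‖deriv f z‖ ^ 2 *
            (1 - ‖phi a z‖ ^ 2) ^ s) ∂dA) < ⊤}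

/-- The Volterra operator `T_g(f)(z) = ∫_0^z g'(ξ) f(ξ) dξ` (along the segment from 0 to z). -/
def Tg (g f : ℂ → ℂ) : ℂ → ℂ :=
  fun z => z * ∫ t in (0:ℝ)..1, deriv g ((t : ℂ) * z) * f ((t : ℂ) * z)

/-- The companion operator `I_g(f)(z) = ∫_0^z g(ξ) f'(ξ) dξ` (along the segment from 0 to z). -/
def Ig (g f : ℂ → ℂ) : ℂ → ℂ :=
  fun z => z * ∫ t in (0:ℝ)..1, g ((t : ℂ) * z) * deriv f ((t : ℂ) * z)

/-- The multiplication operator `M_g(f) = g · f`. -/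
def Mg (g f : ℂ → ℂ) : ℂ → ℂ := fun z => g z * f z

/-- `T` maps `X` into `Y`. -/
def MapsInto (T : (ℂ → ℂ) → (ℂ → ℂ)) (X Y : Set (ℂ → ℂ)) : Prop :=
  ∀ f ∈ X, T f ∈ Y

/-- The Hardy space `H^q`. -/
def Hardy (q : ℝ) : Set (ℂ → ℂ) :=
  {f | HolOn f ∧ ∃ C : ℝ, ∀ r : ℝ, 0 < r → r < 1 →
      (1 / (2 * π)) * ∫ t in (0:ℝ)..(2 * π),
        ‖f ((r : ℂ) * Complex.exp ((t : ℂ) * Complex.I))‖ ^ q ≤ C}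

/-- An inner function: bounded holomorphic with radial boundary values of modulus 1 a.e. -/
def IsInner (g : ℂ → ℂ) : Prop :=
  g ∈ Hinf ∧ ∀ᵐ t : ℝ ∂(volume.restrict (Set.Ioc (0:ℝ) (2 * π))),
    Filter.Tendsto (fun r : ℝ => ‖g ((r : ℂ) * Complex.exp ((t : ℂ) * Complex.I))‖)
      (nhdsWithin 1 (Set.Iio 1)) (nhds 1)

/-- `X` has the f-property (division by inner functions). -/
def FProperty (X : Set (ℂ → ℂ)) : Prop :=
  ∀ h ∈ X, ∀ g : ℂ → ℂ, IsInner g →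
    (fun z => h z / g z) ∈ Hardy 1 → (fun z => h z / g z) ∈ X

/-- The space of multipliers `M(X,Y)`. -/
def Mult (X Y : Set (ℂ → ℂ)) : Set (ℂ → ℂ) :=
  {g | HolOn g ∧ ∀ f ∈ X, (fun z => g z * f z) ∈ Y}

end

open scoped ENNReal NNReal

lemma mem_D {z : ℂ} : z ∈ ball (0:ℂ) 1 ↔ ‖z‖ < 1 := by simp

lemma re_conj_mul_le (a z : ℂ) : ((starRingEnd ℂ) a * z).re ≤ ‖a‖ * ‖z‖ := by
  calc _ ≤ ‖(starRingEnd ℂ) a * z‖ := Complex.re_le_norm _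
    _ = _ := by simp

/-- `1 - |z| ≤ |1 - conj a z|`. -/
lemma one_sub_le_norm {a z : ℂ} (ha : ‖a‖ ≤ 1) : 1 - ‖z‖ ≤ ‖1 - (starRingEnd ℂ) a * z‖ := by
  have h1 : ‖(1:ℂ)‖ - ‖(starRingEnd ℂ) a * z‖ ≤ ‖1 - (starRingEnd ℂ) a * z‖ := norm_sub_norm_le _ _
  simp only [norm_one, norm_mul, RCLike.norm_conj] at h1
  nlinarith [norm_nonneg z, norm_nonneg a]

lemma one_sub_le_norm' {a z : ℂ} (hz : ‖z‖ ≤ 1) : 1 - ‖a‖ ≤ ‖1 - (starRingEnd ℂ) a * z‖ := by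
  have h1 : ‖(1:ℂ)‖ - ‖(starRingEnd ℂ) a * z‖ ≤ ‖1 - (starRingEnd ℂ) a * z‖ := norm_sub_norm_le _ _
  simp only [norm_one, norm_mul, RCLike.norm_conj] at h1
  nlinarith [norm_nonneg z, norm_nonneg a]

lemma den_pos {a z : ℂ} (ha : ‖a‖ < 1) (hz : ‖z‖ < 1) : 0 < ‖1 - (starRingEnd ℂ) a * z‖ :=
  lt_of_lt_of_le (by linarith) (one_sub_le_norm ha.le)

lemma den_ne {a z : ℂ} (ha : ‖a‖ < 1) (hz : ‖z‖ < 1) : 1 - (starRingEnd ℂ) a * z ≠ 0 :=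
  norm_pos_iff.1 (den_pos ha hz)

lemma norm_den_comm (a z : ℂ) : ‖1 - (starRingEnd ℂ) a * z‖ = ‖1 - (starRingEnd ℂ) z * a‖ := by
  rw [← RCLike.norm_conj]; simp [mul_comm]

lemma one_sub_phi {a z : ℂ} (ha : ‖a‖ < 1) (hz : ‖z‖ < 1) :
    1 - ‖phi a z‖ ^ 2 = (1 - ‖a‖ ^ 2) * (1 - ‖z‖ ^ 2) / ‖1 - (starRingEnd ℂ) a * z‖ ^ 2 := by
  have h := den_pos ha hz
  rw [phi, norm_div, div_pow, eq_div_iff (by positivity), sub_mul, div_mul_cancel₀ _ (by positivity)]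
  simp only [← Complex.normSq_eq_norm_sq, Complex.normSq_apply]
  simp
  ring

lemma one_sub_sq_pos {a : ℂ} (ha : ‖a‖ < 1) : 0 < 1 - ‖a‖ ^ 2 := by nlinarith [norm_nonneg a]

lemma one_sub_phi_pos {a z : ℂ} (ha : ‖a‖ < 1) (hz : ‖z‖ < 1) : 0 < 1 - ‖phi a z‖ ^ 2 := by
  rw [one_sub_phi ha hz]
  have := den_pos ha hz
  have := one_sub_sq_pos ha
  have := one_sub_sq_pos hz
  positivity

lemma phi_lt {a z : ℂ} (ha : ‖a‖ < 1) (hz : ‖z‖ < 1) : ‖phi a z‖ < 1 := by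
  have := one_sub_phi_pos ha hz
  nlinarith [norm_nonneg (phi a z)]

lemma phi_phi {a z : ℂ} (ha : ‖a‖ < 1) (hz : ‖z‖ < 1) : phi a (phi a z) = z := by
  have h := den_ne ha hz
  have h2 := den_ne ha (phi_lt ha hz)
  have h3 : (1 - (starRingEnd ℂ) a * a) ≠ 0 := den_ne ha ha
  rw [phi, div_eq_iff h2]
  rw [phi]
  generalize (starRingEnd ℂ) a = c at *
  have h' : 1 - z * c ≠ 0 := by rwa [mul_comm]
  field_simp
  ring

lemma phi_zero (a : ℂ) : phi a 0 = a := by simp [phi]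

lemma phi_self (a : ℂ) : phi a a = 0 := by simp [phi]

lemma one_sub_phi_comp {a b w : ℂ} (ha : ‖a‖ < 1) (hb : ‖b‖ < 1) (hw : ‖w‖ < 1) :
    1 - ‖phi b (phi a w)‖ ^ 2 = 1 - ‖phi (phi a b) w‖ ^ 2 := by
  have hN1 : 1 - (starRingEnd ℂ) b * phi a w =
      (1 - (starRingEnd ℂ) a * w - (starRingEnd ℂ) b * (a - w)) / (1 - (starRingEnd ℂ) a * w) := by
    have := den_ne ha hw
    rw [mul_comm] at this
    rw [phi]; field_simp
  have hN2 : 1 - (starRingEnd ℂ) (phi a b) * w =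
      (1 - (starRingEnd ℂ) a * w - (starRingEnd ℂ) b * (a - w)) / (1 - (starRingEnd ℂ) b * a) := by
    have := den_ne hb ha
    have h' : 1 - a * (starRingEnd ℂ) b ≠ 0 := by rwa [mul_comm]
    rw [phi]; simp only [map_div₀, map_sub, map_mul, map_one, Complex.conj_conj]; field_simp; ring
  have hne : 0 < ‖1 - (starRingEnd ℂ) a * w - (starRingEnd ℂ) b * (a - w)‖ := by
    have h1 := den_ne hb (phi_lt ha hw)
    rw [hN1] at h1
    rw [norm_pos_iff]
    intro h; simp [h] at h1
  rw [one_sub_phi hb (phi_lt ha hw), one_sub_phi (phi_lt ha hb) hw, one_sub_phi ha hw,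
    one_sub_phi ha hb, hN1, hN2, norm_div, norm_div]
  have h1 := den_pos ha hw
  have h2 := den_pos hb ha
  rw [norm_den_comm a b]
  field_simp

lemma hasDerivAt_phi {a z : ℂ} (ha : ‖a‖ < 1) (hz : ‖z‖ < 1) :
    HasDerivAt (phi a) (((starRingEnd ℂ) a * a - 1) / (1 - (starRingEnd ℂ) a * z) ^ 2) z := by
  have h1 : HasDerivAt (fun z => a - z) (-1) z := by
    simpa using (hasDerivAt_id z).const_sub a
  have h2 : HasDerivAt (fun z => 1 - (starRingEnd ℂ) a * z) (-((starRingEnd ℂ) a)) z := by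
    simpa using ((hasDerivAt_id z).const_mul ((starRingEnd ℂ) a)).const_sub 1
  refine (h1.fun_div h2 (den_ne ha hz)).congr_deriv ?_
  congr 1; ring

lemma norm_deriv_phi {a z : ℂ} (ha : ‖a‖ < 1) (hz : ‖z‖ < 1) :
    ‖deriv (phi a) z‖ = (1 - ‖a‖ ^ 2) / ‖1 - (starRingEnd ℂ) a * z‖ ^ 2 := by
  rw [(hasDerivAt_phi ha hz).deriv, norm_div, norm_pow]
  congr 1
  have : (starRingEnd ℂ) a * a - 1 = ((‖a‖ ^ 2 - 1 : ℝ) : ℂ) := by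
    rw [mul_comm, Complex.mul_conj, Complex.normSq_eq_norm_sq]; push_cast; ring
  rw [this, Complex.norm_real, Real.norm_eq_abs, abs_of_neg (by linarith [one_sub_sq_pos ha])]
  ring

lemma norm_deriv_phi' {a z : ℂ} (ha : ‖a‖ < 1) (hz : ‖z‖ < 1) :
    ‖deriv (phi a) z‖ = (1 - ‖phi a z‖ ^ 2) / (1 - ‖z‖ ^ 2) := by
  rw [norm_deriv_phi ha hz, one_sub_phi ha hz]
  have := one_sub_sq_pos hz
  field_simp

lemma phi_image {a : ℂ} (ha : ‖a‖ < 1) : phi a '' ball 0 1 = ball 0 1 := by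
  ext z
  simp only [mem_image, mem_D]
  constructor
  · rintro ⟨w, hw, rfl⟩; exact phi_lt ha hw
  · intro hz; exact ⟨phi a z, phi_lt ha hz, phi_phi ha hz⟩

lemma phi_injOn {a : ℂ} (ha : ‖a‖ < 1) : InjOn (phi a) (ball 0 1) := by
  intro x hx y hy h
  rw [← phi_phi ha (mem_D.1 hx), h, phi_phi ha (mem_D.1 hy)]

lemma lintegral_image_hol {U : Set ℂ} (hU : IsOpen U) {φ φ' : ℂ → ℂ}
    (hφ : ∀ z ∈ U, HasDerivAt φ (φ' z) z) (hinj : InjOn φ U) (H : ℂ → ℝ≥0∞) :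
    ∫⁻ z in φ '' U, H z = ∫⁻ w in U, ENNReal.ofReal (‖φ' w‖ ^ 2) * H (φ w) := by
  have := lintegral_image_eq_lintegral_abs_det_fderiv_mul volume hU.measurableSet
    (f := φ) (f' := fun z => (ContinuousLinearMap.toSpanSingleton ℂ (φ' z)).restrictScalars ℝ)
    (fun z hz => ((hφ z hz).hasFDerivAt.restrictScalars ℝ).hasFDerivWithinAt) hinj H
  rw [this]
  refine lintegral_congr fun w => ?_
  congr 2
  have : ((ContinuousLinearMap.toSpanSingleton ℂ (φ' w)).restrictScalars ℝ).det = ‖φ' w‖ ^ 2 := by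
    simp [ContinuousLinearMap.det, LinearMap.det_restrictScalars, Algebra.norm_complex_apply, Complex.normSq_eq_norm_sq]
  rw [this, abs_of_nonneg (by positivity)]

lemma lintegral_phi {a : ℂ} (ha : ‖a‖ < 1) (H : ℂ → ℝ≥0∞) :
    ∫⁻ z in ball 0 1, H z =
      ∫⁻ w in ball 0 1, ENNReal.ofReal (‖deriv (phi a) w‖ ^ 2) * H (phi a w) := by
  conv_lhs => rw [← phi_image ha]
  exact lintegral_image_hol isOpen_ball (fun z hz => by
    have h := hasDerivAt_phi ha (mem_D.1 hz)
    exact h.differentiableAt.hasDerivAt) (phi_injOn ha) H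

lemma lintegral_one_sub_rpow {c : ℝ} (hc : -1 < c) :
    ∫⁻ w in ball (0:ℂ) 1, ENNReal.ofReal ((1 - ‖w‖ ^ 2) ^ c) < ⊤ := by
  have hbd : ∫⁻ w in ball (0:ℂ) 1, ENNReal.ofReal ((1 - ‖w‖) ^ (min c 0)) < ⊤ := by
    have : IntegrableOn (fun w : ℂ => (1 - ‖w‖) ^ (min c 0)) (ball 0 1) := by
      rw [integrableOn_fun_norm_addHaar volume (f := fun t : ℝ => (1 - t) ^ (min c 0))]
      have h1 : IntervalIntegrable (fun t : ℝ => t ^ (min c 0)) volume 0 1 :=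
        intervalIntegral.intervalIntegrable_rpow' (by simp [hc])
      have h2 := (h1.comp_sub_left 1)
      simp only [sub_zero, sub_self] at h2
      have h3 := h2.symm
      rw [intervalIntegrable_iff_integrableOn_Ioo_of_le zero_le_one] at h3
      simp only [Complex.finrank_real_complex, smul_eq_mul]
      refine Integrable.mono' h3 ?_ ?_
      · apply Measurable.aestronglyMeasurable; fun_prop
      · refine (ae_restrict_iff' measurableSet_Ioo).2 (Eventually.of_forall fun t ht => ?_)
        have : (0:ℝ) ≤ (1 - t) ^ (min c 0) := Real.rpow_nonneg (by linarith [ht.2]) _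
        rw [Real.norm_eq_abs, abs_of_nonneg (mul_nonneg (by have := ht.1; positivity) this)]
        norm_num
        nlinarith [ht.1, ht.2]
    exact this.lintegral_lt_top
  refine lt_of_le_of_lt (setLIntegral_mono' measurableSet_ball fun w hw => ?_) hbd
  apply ENNReal.ofReal_le_ofReal
  have hw := mem_D.1 hw
  have h0 := norm_nonneg w
  rcases le_total c 0 with h | h
  · rw [min_eq_left h]
    exact Real.rpow_le_rpow_of_nonpos (by linarith) (by nlinarith) h
  · rw [min_eq_right h, Real.rpow_zero]
    exact Real.rpow_le_one (one_sub_sq_pos hw).le (by nlinarith) h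

/-- unnormalized Q_s-integral at `a`. -/
noncomputable def JJ (s : ℝ) (f : ℂ → ℂ) (a : ℂ) : ℝ≥0∞ :=
  ∫⁻ z in ball (0:ℂ) 1, ENNReal.ofReal (‖deriv f z‖ ^ 2 * (1 - ‖phi a z‖ ^ 2) ^ s)

/-- unnormalized Besov integral. -/
noncomputable def BB (p : ℝ) (f : ℂ → ℂ) : ℝ≥0∞ :=
  ∫⁻ z in ball (0:ℂ) 1, ENNReal.ofReal ((1 - ‖z‖) ^ (p - 2) * ‖deriv f z‖ ^ p)

lemma measurable_phi (a : ℂ) : Measurable (phi a) := by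
  unfold phi; fun_prop

lemma measurable_dv (f : ℂ → ℂ) : Measurable (deriv f) := measurable_deriv f

lemma emb {p t : ℝ} (hp : 2 < p) (ht : 1 - 2 / p < t) :
    ∃ C : ℝ≥0∞, C ≠ ⊤ ∧ ∀ (f : ℂ → ℂ) (a : ℂ), ‖a‖ < 1 → JJ t f a ≤ C * BB p f ^ (2 / p) := by
  set q : ℝ := p / (p - 2) with hq
  have hp2 : 0 < p - 2 := by linarith
  have hp0 : 0 < p := by linarith
  have hq0 : 0 < q := by positivity
  have hPq : (p / 2).HolderConjugate q := by
    rw [Real.holderConjugate_iff]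
    refine ⟨by linarith, ?_⟩
    rw [hq]; field_simp; ring
  have hc : -1 < t * q - 2 := by
    have : 1 < t * q := by
      calc 1 = (1 - 2 / p) * q := by rw [hq]; field_simp
        _ < t * q := by gcongr
    linarith
  have hK := lintegral_one_sub_rpow hc
  set K := ∫⁻ w in ball (0:ℂ) 1, ENNReal.ofReal ((1 - ‖w‖ ^ 2) ^ (t * q - 2)) with hKdef
  refine ⟨(4 * K) ^ (1 / q), ENNReal.rpow_ne_top_of_nonneg (by positivity)
    (ENNReal.mul_ne_top (by simp) hK.ne), fun f a ha => ?_⟩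
  set e : ℝ := (p - 2) * (2 / p) with he
  let A : ℂ → ℝ≥0∞ := fun z => ENNReal.ofReal ((1 - ‖z‖) ^ e * ‖deriv f z‖ ^ 2)
  let B : ℂ → ℝ≥0∞ := fun z => ENNReal.ofReal ((1 - ‖phi a z‖ ^ 2) ^ t * (1 - ‖z‖) ^ (-e))
  have hAm : Measurable A := by
    have := measurable_dv f
    fun_prop
  have hBm : Measurable B := by
    have := measurable_phi a
    fun_prop
  have h1 : JJ t f a = ∫⁻ z in ball 0 1, (A * B) z := by
    refine setLIntegral_congr_fun measurableSet_ball fun z hz => ?_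
    have hz := mem_D.1 hz
    have hz1 : 0 < 1 - ‖z‖ := by linarith
    have hph := one_sub_phi_pos ha hz
    simp only [A, B, Pi.mul_apply]
    rw [← ENNReal.ofReal_mul (by positivity), Real.rpow_neg hz1.le]
    congr 1
    have : (1 - ‖z‖) ^ e ≠ 0 := by positivity
    field_simp
  have h2 : ∫⁻ z in ball 0 1, A z ^ (p / 2) = BB p f := by
    refine setLIntegral_congr_fun measurableSet_ball fun z hz => ?_
    have hz := mem_D.1 hz
    have hz1 : 0 < 1 - ‖z‖ := by linarith
    simp only [A]
    rw [ENNReal.ofReal_rpow_of_nonneg (by positivity) (by positivity),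
      Real.mul_rpow (by positivity) (by positivity), ← Real.rpow_mul hz1.le,
      ← Real.rpow_natCast, ← Real.rpow_mul (norm_nonneg _)]
    congr 3
    · rw [he]; field_simp
    · push_cast; field_simp
  have h3 : ∫⁻ z in ball 0 1, B z ^ q ≤ 4 * K := by
    rw [hKdef, lintegral_phi ha (fun w => ENNReal.ofReal ((1 - ‖w‖ ^ 2) ^ (t * q - 2))), ← lintegral_const_mul' _ _ (by simp)]
    refine setLIntegral_mono' measurableSet_ball fun z hz => ?_
    have hz := mem_D.1 hz
    have hz1 : 0 < 1 - ‖z‖ := by linarith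
    have hz2 := one_sub_sq_pos hz
    have hph := one_sub_phi_pos ha hz
    simp only [B]
    rw [ENNReal.ofReal_rpow_of_nonneg (by positivity) (by positivity),
      Real.mul_rpow (by positivity) (by positivity), ← Real.rpow_mul hz1.le,
      ← Real.rpow_mul hph.le, ← ENNReal.ofReal_mul (by positivity),
      show (4:ℝ≥0∞) = ENNReal.ofReal 4 by norm_num, ← ENNReal.ofReal_mul (by positivity)]
    apply ENNReal.ofReal_le_ofReal
    rw [norm_deriv_phi' ha hz]
    have e1 : -e * q = -2 := by rw [he, hq]; field_simp
    rw [e1, Real.rpow_sub hph, Real.rpow_neg hz1.le, Real.rpow_two, Real.rpow_two, div_pow]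
    have : 4 * ((1 - ‖phi a z‖ ^ 2) ^ 2 / (1 - ‖z‖ ^ 2) ^ 2 *
      ((1 - ‖phi a z‖ ^ 2) ^ (t * q) / (1 - ‖phi a z‖ ^ 2) ^ 2)) =
      (1 - ‖phi a z‖ ^ 2) ^ (t * q) * (4 * ((1 - ‖z‖ ^ 2) ^ 2)⁻¹) := by field_simp
    rw [this]
    gcongr
    rw [← div_eq_mul_inv, le_div_iff₀ (by positivity), inv_mul_le_iff₀ (by positivity)]
    have : 1 - ‖z‖ ^ 2 ≤ 2 * (1 - ‖z‖) := by nlinarith [norm_nonneg z]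
    nlinarith
  have h4 := ENNReal.lintegral_mul_le_Lp_mul_Lq (volume.restrict (ball (0:ℂ) 1)) hPq
    hAm.aemeasurable hBm.aemeasurable
  rw [h1]
  refine h4.trans ?_
  rw [h2, mul_comm, one_div_div p 2]
  exact mul_le_mul_left (ENNReal.rpow_le_rpow h3 (by positivity)) _

lemma submean1 {h : ℂ → ℂ} (hm : Measurable h) {c : ℂ} {R : ℝ}
    (hd : DifferentiableOn ℂ h (ball c R)) :
    ‖h c‖ₑ * volume (ball c R) ≤ ∫⁻ z in ball c R, ‖h z‖ₑ := by
  have key : ∫⁻ z in ball (0:ℂ) R, ‖h c‖ₑ ≤ ∫⁻ z in ball (0:ℂ) R, ‖h (c + z)‖ₑ := by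
    rw [← lintegral_indicator measurableSet_ball, ← lintegral_indicator measurableSet_ball,
      ← Complex.lintegral_comp_polarCoord_symm, ← Complex.lintegral_comp_polarCoord_symm,
      polarCoord_target, Measure.volume_eq_prod, setLIntegral_prod, setLIntegral_prod]
    rotate_left
    · apply Measurable.aemeasurable
      have : Measurable fun z => h (c + z) := by fun_prop
      have h1 : Measurable ((ball (0:ℂ) R).indicator fun z => ‖h (c + z)‖ₑ) :=
        (this.enorm).indicator measurableSet_ball
      have h2 : Measurable (fun p : ℝ × ℝ => Complex.polarCoord.symm p) := by
        simp only [Complex.polarCoord_symm_apply]; fun_prop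
      exact (measurable_fst.ennreal_ofReal).smul (h1.comp h2)
    · apply Measurable.aemeasurable
      have h1 : Measurable ((ball (0:ℂ) R).indicator fun z => ‖h c‖ₑ) :=
        (measurable_const).indicator measurableSet_ball
      have h2 : Measurable (fun p : ℝ × ℝ => Complex.polarCoord.symm p) := by
        simp only [Complex.polarCoord_symm_apply]; fun_prop
      exact (measurable_fst.ennreal_ofReal).smul (h1.comp h2)
    refine setLIntegral_mono' measurableSet_Ioi fun ρ hρ => ?_
    have hρ : 0 < ρ := hρ
    simp only [smul_eq_mul]
    rw [lintegral_const_mul' _ _ (by simp), lintegral_const_mul' _ _ (by simp)]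
    refine mul_le_mul_right ?_ _
    have hnorm : ∀ θ : ℝ, ‖Complex.polarCoord.symm (ρ, θ)‖ = ρ := by
      intro θ; rw [Complex.norm_polarCoord_symm]; simp [abs_of_pos hρ]
    by_cases hR : ρ < R
    · have e1 : ∀ θ : ℝ, Complex.polarCoord.symm (ρ, θ) ∈ ball (0:ℂ) R := by
        intro θ; rw [mem_ball_zero_iff, hnorm]; exact hR
      simp only [indicator_of_mem (e1 _)]
      have hav := (DifferentiableOn.diffContOnCl (f := h) (s := ball c |ρ|) (by
        rw [abs_of_pos hρ]
        refine hd.mono ((closure_ball_subset_closedBall).trans ?_)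
        exact closedBall_subset_ball hR)).circleAverage
      have e2 : ∀ θ : ℝ, c + Complex.polarCoord.symm (ρ, θ) = circleMap c ρ θ := by
        intro θ
        rw [Complex.polarCoord_symm_apply, circleMap, Complex.exp_mul_I]
        simp
      simp only [e2]
      have e3 : (2 * π) • h c = ∫ θ in (-π)..π, h (circleMap c ρ θ) := by
        rw [← hav, circleAverage_def, smul_smul, mul_inv_cancel₀ (by positivity), one_smul]
        have hper : Function.Periodic (fun θ => h (circleMap c ρ θ)) (2 * π) := by
          intro θ; simp [periodic_circleMap c ρ θ]
        have := hper.intervalIntegral_add_eq (-π) 0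
        rw [show -π + 2 * π = π by ring, zero_add] at this
        exact this.symm
      rw [setLIntegral_const, Real.volume_Ioo]
      have e4 : ‖(2 * π) • h c‖ₑ ≤ ∫⁻ θ in Ioc (-π) π, ‖h (circleMap c ρ θ)‖ₑ := by
        rw [e3, intervalIntegral.integral_of_le (by linarith [Real.pi_pos])]
        exact enorm_integral_le_lintegral_enorm _
      rw [enorm_smul, ← restrict_Ioo_eq_restrict_Ioc] at e4
      convert e4 using 1
      rw [mul_comm]
      congr 1
      rw [Real.enorm_eq_ofReal (by positivity)]
      congr 1; ring
    · have e1 : ∀ θ : ℝ, Complex.polarCoord.symm (ρ, θ) ∉ ball (0:ℂ) R := by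
        intro θ; rw [mem_ball_zero_iff, hnorm]; exact hR
      simp only [indicator_of_notMem (e1 _), le_refl]
  have h2 : ∫⁻ z in ball c R, ‖h z‖ₑ = ∫⁻ z in ball (0:ℂ) R, ‖h (c + z)‖ₑ := by
    have hmp : MeasurePreserving (fun z : ℂ => c + z) volume volume := measurePreserving_add_left volume c
    rw [← hmp.setLIntegral_comp_preimage measurableSet_ball hm.enorm]
    congr 2
    ext z; simp
  rw [h2, Measure.addHaar_ball_center volume c R]
  simpa using key

lemma submean {h : ℂ → ℂ} (hm : Measurable h) {c : ℂ} {R : ℝ} (hR : 0 < R)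
    (hd : DifferentiableOn ℂ h (ball c R)) {q : ℝ} (hq : 1 < q) :
    ‖h c‖ₑ ^ q * volume (ball c R) ≤ ∫⁻ z in ball c R, ‖h z‖ₑ ^ q := by
  have h1 := submean1 hm hd
  have hc : q.HolderConjugate (q / (q - 1)) := Real.HolderConjugate.conjExponent hq
  have h2 := ENNReal.lintegral_mul_le_Lp_mul_Lq (volume.restrict (ball c R)) hc
    (f := fun z => ‖h z‖ₑ) (g := fun _ => 1) hm.enorm.aemeasurable aemeasurable_const
  simp only [Pi.mul_apply, mul_one, ENNReal.one_rpow, lintegral_one, Measure.restrict_apply, 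
    MeasurableSet.univ, univ_inter] at h2
  have hV0 : volume (ball c R) ≠ 0 := (measure_ball_pos _ _ hR).ne'
  have hVt : volume (ball c R) ≠ ⊤ := measure_ball_lt_top.ne
  set V := volume (ball c R)
  set I := ∫⁻ z in ball c R, ‖h z‖ₑ ^ q
  have h3 : (‖h c‖ₑ * V) ^ q ≤ (I ^ (1 / q) * V ^ (1 / (q / (q - 1)))) ^ q := by
    exact ENNReal.rpow_le_rpow (h1.trans h2) (by linarith)
  have hq0 : 0 < q := by linarith
  have hq1 : 0 < q - 1 := by linarith
  rw [ENNReal.mul_rpow_of_nonneg _ _ hq0.le, ENNReal.mul_rpow_of_nonneg _ _ hq0.le,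
    ← ENNReal.rpow_mul, ← ENNReal.rpow_mul, one_div_mul_cancel hq0.ne', ENNReal.rpow_one,
    show 1 / (q / (q - 1)) * q = q - 1 by field_simp] at h3
  have h4 : V ^ q = V * V ^ (q - 1) := by
    have h5 := ENNReal.rpow_add 1 (q - 1) hV0 hVt
    rwa [ENNReal.rpow_one, show 1 + (q - 1) = q by ring] at h5
  rw [h4, ← mul_assoc] at h3
  exact (ENNReal.mul_le_mul_iff_left (ENNReal.rpow_pos (pos_iff_ne_zero.2 hV0) hVt).ne'
    (ENNReal.rpow_ne_top_of_nonneg hq1.le hVt)).1 h3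

/-- nontangential type region -/
def Gam (w : ℂ) : Set ℂ := {u | ‖1 - (starRingEnd ℂ) u * w‖ ≤ 5 * (1 - ‖u‖)}

lemma rpow_compare {x y e : ℝ} (hx : 0 < x) (hy : 0 < y) (h1 : x ≤ 2 * y) (h2 : y ≤ 2 * x) :
    x ^ e ≤ 2 ^ |e| * y ^ e := by
  rcases le_total 0 e with h | h
  · rw [abs_of_nonneg h, ← Real.mul_rpow (by norm_num) hy.le]
    exact Real.rpow_le_rpow hx.le h1 h
  · rw [abs_of_nonpos h]
    have : x ^ e ≤ (y / 2) ^ e := Real.rpow_le_rpow_of_nonpos (by positivity) (by linarith) h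
    rwa [Real.div_rpow hy.le (by norm_num), div_eq_mul_inv, ← Real.rpow_neg (by norm_num), mul_comm] at this

lemma geom_facts {w u : ℂ} {r : ℝ} (hw : ‖w‖ < 1) (hr0 : 0 < r) (hr1 : r < 1)
    (hu : dist u (r * w) < (1 - r * ‖w‖) / 2) :
    (1 - r * ‖w‖) / 2 < 1 - ‖u‖ ∧ 1 - ‖u‖ < 3 / 2 * (1 - r * ‖w‖) ∧ u ∈ Gam w ∧
      |‖u‖ - r * ‖w‖| < 1 - ‖u‖ := by
  rw [dist_eq_norm] at hu
  have hrw : ‖(r:ℂ) * w‖ = r * ‖w‖ := by rw [norm_mul, Complex.norm_real, Real.norm_of_nonneg hr0.le]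
  have h1 := abs_norm_sub_norm_le u (r * w)
  rw [hrw] at h1
  have h2 := abs_le.1 h1
  have h3 : (1 - r * ‖w‖) / 2 < 1 - ‖u‖ := by linarith [h2.2]
  have hX : 0 < 1 - r * ‖w‖ := by nlinarith [norm_nonneg w]
  refine ⟨h3, by linarith [h2.1], ?_, by linarith⟩
  have e1 : 1 - (starRingEnd ℂ) u * w = ((1 - ‖u‖ ^ 2 : ℝ) : ℂ) + (starRingEnd ℂ) u * ((u - r * w) - (1 - r) * w) := by
    have : (starRingEnd ℂ) u * u = ((‖u‖ ^ 2 : ℝ) : ℂ) := by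
      rw [mul_comm, Complex.mul_conj, Complex.normSq_eq_norm_sq]
    push_cast at this ⊢
    linear_combination -this
  have hu1 : ‖u‖ ≤ 1 := by linarith
  have e2 : ‖((1 - r : ℂ)) * w‖ = (1 - r) * ‖w‖ := by
    rw [norm_mul]; congr 1
    rw [show (1 - r : ℂ) = ((1 - r : ℝ) : ℂ) by push_cast; ring, Complex.norm_real, Real.norm_of_nonneg (by linarith)]
  show ‖1 - (starRingEnd ℂ) u * w‖ ≤ 5 * (1 - ‖u‖)
  rw [e1]
  calc _ ≤ ‖((1 - ‖u‖ ^ 2 : ℝ) : ℂ)‖ + ‖(starRingEnd ℂ) u * ((u - r * w) - (1 - r) * w)‖ := norm_add_le _ _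
    _ ≤ (1 - ‖u‖ ^ 2) + 1 * (‖u - r * w‖ + ‖(1 - r : ℂ) * w‖) := by
        rw [Complex.norm_real, Real.norm_of_nonneg (by nlinarith [norm_nonneg u]), norm_mul, RCLike.norm_conj]
        gcongr
        exact norm_sub_le _ _
    _ ≤ _ := by
        rw [e2]
        nlinarith [norm_nonneg u, norm_nonneg w]

/-- constant -/
noncomputable def KK (γ : ℝ) : ℝ≥0∞ := ENNReal.ofReal (4 / π * 2 ^ |γ - 1|) * 2

lemma radial {h : ℂ → ℂ} (hm : Measurable h) (hd : DifferentiableOn ℂ h (ball 0 1)) {w : ℂ}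
    (hw : ‖w‖ < 1) {q : ℝ} (hq : 1 < q) (γ : ℝ) :
    ∫⁻ r in Ioo (0:ℝ) 1, ENNReal.ofReal ((1 - r * ‖w‖) ^ (γ + 1)) * ‖h (r * w)‖ₑ ^ q * ‖w‖ₑ ≤
      KK γ * ∫⁻ u in ball (0:ℂ) 1,
        (Gam w).indicator (fun u => ENNReal.ofReal ((1 - ‖u‖) ^ γ) * ‖h u‖ₑ ^ q) u := by
  set k : ℝ := 4 / π * 2 ^ |γ - 1| with hk
  have hk0 : 0 < k := by positivity
  let c : ℂ → ℝ≥0∞ := fun u => ENNReal.ofReal (k * (1 - ‖u‖) ^ (γ - 1)) * ‖h u‖ₑ ^ q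
  have hcm : Measurable c := by fun_prop
  let T : Set (ℝ × ℂ) := {x | dist x.2 (x.1 * w) < (1 - x.1 * ‖w‖) / 2}
  have hT : MeasurableSet T := by
    apply measurableSet_lt <;> fun_prop
  let S : ℝ → ℂ → ℝ≥0∞ := fun r u => T.indicator (fun x => c x.2) (r, u)
  have hSm : Measurable (Function.uncurry S) :=
    (hcm.comp measurable_snd).indicator hT
  -- pointwise in r
  have step1 : ∀ r ∈ Ioo (0:ℝ) 1,
      ENNReal.ofReal ((1 - r * ‖w‖) ^ (γ + 1)) * ‖h (r * w)‖ₑ ^ q * ‖w‖ₑ ≤ ∫⁻ u, S r u * ‖w‖ₑ := by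
    intro r hr
    rw [lintegral_mul_const' _ _ (by simp)]
    refine mul_le_mul_left ?_ _
    have hX : 0 < 1 - r * ‖w‖ := by nlinarith [norm_nonneg w, hr.1, hr.2]
    set X := 1 - r * ‖w‖ with hXd
    have hsub : ball ((r:ℂ) * w) (X / 2) ⊆ ball 0 1 := by
      intro u hu
      rw [mem_D]
      have := (geom_facts hw hr.1 hr.2 hu).1
      linarith
    have h1 := submean hm (c := (r:ℂ) * w) (R := X / 2) (by positivity) (hd.mono hsub) hq
    have hV : volume (ball ((r:ℂ) * w) (X / 2)) = ENNReal.ofReal (π * (X / 2) ^ 2) := by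
      rw [Complex.volume_ball, ENNReal.ofReal_mul (by positivity), mul_comm,
        ENNReal.ofReal_pow (by positivity)]
      congr 1
      rw [← ENNReal.ofReal_coe_nnreal]; rfl
    have h2 : ENNReal.ofReal (X ^ (γ + 1)) * ‖h (r * w)‖ₑ ^ q =
        ENNReal.ofReal (4 / π * X ^ (γ - 1)) * (‖h (r * w)‖ₑ ^ q * volume (ball ((r:ℂ) * w) (X / 2))) := by
      rw [hV, mul_comm (‖h (r * w)‖ₑ ^ q), ← mul_assoc, ← ENNReal.ofReal_mul (by positivity)]
      congr 2
      rw [show γ + 1 = (γ - 1) + 2 by ring, Real.rpow_add hX, Real.rpow_two]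
      field_simp
      norm_num
    rw [h2]
    calc _ ≤ ENNReal.ofReal (4 / π * X ^ (γ - 1)) * ∫⁻ z in ball ((r:ℂ) * w) (X / 2), ‖h z‖ₑ ^ q := by gcongr
      _ = ∫⁻ z in ball ((r:ℂ) * w) (X / 2), ENNReal.ofReal (4 / π * X ^ (γ - 1)) * ‖h z‖ₑ ^ q := by
        rw [lintegral_const_mul' _ _ (by simp)]
      _ ≤ ∫⁻ z in ball ((r:ℂ) * w) (X / 2), c z := by
        refine setLIntegral_mono' measurableSet_ball fun u hu => ?_
        have hg := geom_facts hw hr.1 hr.2 hu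
        simp only [c]
        refine mul_le_mul_left (ENNReal.ofReal_le_ofReal ?_) _
        rw [hk, mul_assoc]
        refine mul_le_mul_of_nonneg_left ?_ (by positivity)
        exact rpow_compare hX (by linarith [hg.1]) (by linarith [hg.1]) (by linarith [hg.2.1])
      _ = ∫⁻ u, S r u := by
        rw [← lintegral_indicator measurableSet_ball]
        rfl
  refine (setLIntegral_mono' measurableSet_Ioo step1).trans ?_
  rw [lintegral_lintegral_swap]
  swap
  · exact (hSm.mul_const _).aemeasurable
  rw [← lintegral_indicator measurableSet_ball, ← lintegral_const_mul']
  swap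
  · unfold KK; exact ENNReal.mul_ne_top (by simp) (by simp)
  refine lintegral_mono fun u => ?_
  by_cases hu : ∃ r ∈ Ioo (0:ℝ) 1, dist u (r * w) < (1 - r * ‖w‖) / 2
  · obtain ⟨r0, hr0, hd0⟩ := hu
    have hg := geom_facts hw hr0.1 hr0.2 hd0
    have hX0 : 0 < 1 - r0 * ‖w‖ := by nlinarith [norm_nonneg w, hr0.1, hr0.2]
    have hu1 : 0 < 1 - ‖u‖ := by linarith [hg.1]
    rw [indicator_of_mem (mem_D.2 (by linarith)), indicator_of_mem hg.2.2.1]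
    rcases eq_or_ne w 0 with h0 | h0
    · simp [h0]
    have hwpos : 0 < ‖w‖ := norm_pos_iff.2 h0
    have hsub : ∀ r ∈ Ioo (0:ℝ) 1, S r u * ‖w‖ₑ ≤
        (Ioo ((‖u‖ - (1 - ‖u‖)) / ‖w‖) ((‖u‖ + (1 - ‖u‖)) / ‖w‖)).indicator (fun _ => c u * ‖w‖ₑ) r := by
      intro r hr
      by_cases hd1 : dist u (r * w) < (1 - r * ‖w‖) / 2
      · have hg1 := abs_lt.1 (geom_facts hw hr.1 hr.2 hd1).2.2.2
        rw [indicator_of_mem]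
        · have : S r u = c u := indicator_of_mem (s := T) (a := (r, u)) hd1 _
          rw [this]
        · constructor
          · rw [div_lt_iff₀ hwpos]; linarith [hg1.2]
          · rw [lt_div_iff₀ hwpos]; linarith [hg1.1]
      · have : S r u = 0 := indicator_of_notMem (s := T) (a := (r, u)) hd1 _
        simp [this]
    calc _ ≤ ∫⁻ r in Ioo (0:ℝ) 1, (Ioo ((‖u‖ - (1 - ‖u‖)) / ‖w‖) ((‖u‖ + (1 - ‖u‖)) / ‖w‖)).indicator (fun _ => c u * ‖w‖ₑ) r :=
          setLIntegral_mono' measurableSet_Ioo hsub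
      _ ≤ ∫⁻ r, (Ioo ((‖u‖ - (1 - ‖u‖)) / ‖w‖) ((‖u‖ + (1 - ‖u‖)) / ‖w‖)).indicator (fun _ => c u * ‖w‖ₑ) r :=
          setLIntegral_le_lintegral _ _
      _ = c u * ‖w‖ₑ * ENNReal.ofReal (2 * (1 - ‖u‖) / ‖w‖) := by
          rw [lintegral_indicator_const measurableSet_Ioo, Real.volume_Ioo]
          congr 2; ring
      _ = KK γ * (ENNReal.ofReal ((1 - ‖u‖) ^ γ) * ‖h u‖ₑ ^ q) := by
          simp only [c, KK, ← hk]
          rw [← ofReal_norm w, mul_assoc, ← ENNReal.ofReal_mul (norm_nonneg _), mul_right_comm,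
            ← ENNReal.ofReal_mul (by positivity), ← mul_assoc (ENNReal.ofReal k * 2)]
          refine congrArg₂ _ ?_ rfl
          rw [show (2:ℝ≥0∞) = ENNReal.ofReal 2 by norm_num, ← ENNReal.ofReal_mul (by positivity),
            ← ENNReal.ofReal_mul (by positivity), show γ = (γ - 1) + 1 by ring, Real.rpow_add hu1,
            Real.rpow_one]
          congr 1
          rw [show γ - 1 + 1 - 1 = γ - 1 by ring]
          field_simp
  · push Not at hu
    have : ∫⁻ r in Ioo (0:ℝ) 1, S r u * ‖w‖ₑ = 0 := by
      rw [setLIntegral_congr_fun (g := fun _ => 0) measurableSet_Ioo]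
      · simp
      · intro r hr
        have : S r u = 0 := indicator_of_notMem (s := T) (a := (r, u)) (by
          show ¬ (dist u (r * w) < (1 - r * ‖w‖) / 2)
          exact not_lt.2 (hu r hr)) _
        simp [this]
    rw [this]; exact zero_le

lemma pointwise_growth {f : ℂ → ℂ} (hf : HolOn f) {w : ℂ} (hw : ‖w‖ < 1) {q : ℝ} (hq : 1 < q) (γ : ℝ) :
    ‖f w - f 0‖ₑ ^ q ≤ KK γ * (∫⁻ u in ball (0:ℂ) 1,
        (Gam w).indicator (fun u => ENNReal.ofReal ((1 - ‖u‖) ^ γ) * ‖deriv f u‖ₑ ^ q) u) *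
      (∫⁻ r in Ioo (0:ℝ) 1, ENNReal.ofReal ((1 - r * ‖w‖) ^ (-(γ + 1) / (q - 1))) * ‖w‖ₑ) ^ (q - 1) := by
  have hdd : DifferentiableOn ℂ (deriv f) (ball 0 1) := DifferentiableOn.deriv hf isOpen_ball
  have hq0 : 0 < q := by linarith
  have hq1 : 0 < q - 1 := by linarith
  have hmem : ∀ r : ℝ, r ∈ Icc (0:ℝ) 1 → (r:ℂ) * w ∈ ball (0:ℂ) 1 := by
    intro r hr
    rw [mem_D, norm_mul, Complex.norm_real, Real.norm_of_nonneg hr.1]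
    nlinarith [norm_nonneg w, hr.1, hr.2]
  have hftc : ∫ r in (0:ℝ)..1, deriv f (r * w) * w = f w - f 0 := by
    have := intervalIntegral.integral_eq_sub_of_hasDerivAt (a := 0) (b := 1)
      (f := fun r : ℝ => f (r * w)) (f' := fun r : ℝ => deriv f (r * w) * w) ?_ ?_
    · simpa using this
    · intro r hr
      rw [uIcc_of_le zero_le_one] at hr
      have h1 : HasDerivAt f (deriv f (r * w)) ((r:ℂ) * w) :=
        (hf.differentiableAt (isOpen_ball.mem_nhds (hmem r hr))).hasDerivAt
      have h2 : HasDerivAt (fun r : ℝ => (r:ℂ) * w) w r := by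
        simpa using (Complex.ofRealCLM.hasDerivAt (x := r)).mul_const w
      exact h1.comp_of_eq r h2 rfl
    · apply ContinuousOn.intervalIntegrable
      rw [uIcc_of_le zero_le_one]
      refine ContinuousOn.mul ?_ continuousOn_const
      exact hdd.continuousOn.comp (by fun_prop) hmem
  have h1 : ‖f w - f 0‖ₑ ≤ ∫⁻ r in Ioo (0:ℝ) 1, ‖deriv f (r * w)‖ₑ * ‖w‖ₑ := by
    rw [← hftc, intervalIntegral.integral_of_le zero_le_one, ← restrict_Ioo_eq_restrict_Ioc]
    refine (enorm_integral_le_lintegral_enorm _).trans_eq ?_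
    simp only [enorm_mul]
  have hmd : Measurable (fun r : ℝ => deriv f (r * w)) := (measurable_dv f).comp (by fun_prop)
  let μ : Measure ℝ := ‖w‖ₑ • volume.restrict (Ioo (0:ℝ) 1)
  let A : ℝ → ℝ≥0∞ := fun r => ENNReal.ofReal ((1 - r * ‖w‖) ^ ((γ + 1) / q)) * ‖deriv f (r * w)‖ₑ
  let B : ℝ → ℝ≥0∞ := fun r => ENNReal.ofReal ((1 - r * ‖w‖) ^ (-(γ + 1) / q))
  have hA : Measurable A := by fun_prop
  have hB : Measurable B := by fun_prop
  have hX : ∀ r ∈ Ioo (0:ℝ) 1, 0 < 1 - r * ‖w‖ := by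
    intro r hr; nlinarith [norm_nonneg w, hr.1, hr.2]
  have hc : q.HolderConjugate (q / (q - 1)) := Real.HolderConjugate.conjExponent hq
  have h2 := ENNReal.lintegral_mul_le_Lp_mul_Lq μ hc hA.aemeasurable hB.aemeasurable
  simp only [μ, lintegral_smul_measure, smul_eq_mul] at h2
  rw [← lintegral_const_mul' _ _ (by simp), ← lintegral_const_mul' _ _ (by simp),
    ← lintegral_const_mul' _ _ (by simp)] at h2
  have e1 : ∫⁻ r in Ioo (0:ℝ) 1, ‖w‖ₑ * (A * B) r = ∫⁻ r in Ioo (0:ℝ) 1, ‖deriv f (r * w)‖ₑ * ‖w‖ₑ := by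
    refine setLIntegral_congr_fun measurableSet_Ioo fun r hr => ?_
    have := hX r hr
    simp only [Pi.mul_apply, A, B]
    have e0 : ENNReal.ofReal ((1 - r * ‖w‖) ^ ((γ + 1) / q)) * ENNReal.ofReal ((1 - r * ‖w‖) ^ (-(γ + 1) / q)) = 1 := by
      rw [← ENNReal.ofReal_mul (by positivity), ← Real.rpow_add this,
        show (γ + 1) / q + -(γ + 1) / q = 0 by ring]
      simp
    rw [mul_right_comm, e0, one_mul, mul_comm]
  have e2 : ∫⁻ r in Ioo (0:ℝ) 1, ‖w‖ₑ * A r ^ q =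
      ∫⁻ r in Ioo (0:ℝ) 1, ENNReal.ofReal ((1 - r * ‖w‖) ^ (γ + 1)) * ‖deriv f (r * w)‖ₑ ^ q * ‖w‖ₑ := by
    refine setLIntegral_congr_fun measurableSet_Ioo fun r hr => ?_
    have := hX r hr
    simp only [A]
    rw [mul_comm, ENNReal.mul_rpow_of_nonneg _ _ hq0.le, ENNReal.ofReal_rpow_of_nonneg (by positivity) hq0.le,
      ← Real.rpow_mul this.le, div_mul_cancel₀ _ hq0.ne']
  have e3 : ∫⁻ r in Ioo (0:ℝ) 1, ‖w‖ₑ * B r ^ (q / (q - 1)) =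
      ∫⁻ r in Ioo (0:ℝ) 1, ENNReal.ofReal ((1 - r * ‖w‖) ^ (-(γ + 1) / (q - 1))) * ‖w‖ₑ := by
    refine setLIntegral_congr_fun measurableSet_Ioo fun r hr => ?_
    have := hX r hr
    simp only [B]
    rw [mul_comm, ENNReal.ofReal_rpow_of_nonneg (by positivity) (by positivity),
      ← Real.rpow_mul this.le]
    congr 3
    field_simp
  rw [e1, e2, e3] at h2
  have h3 := ENNReal.rpow_le_rpow (h1.trans h2) hq0.le
  rw [ENNReal.mul_rpow_of_nonneg _ _ hq0.le, 
    ← ENNReal.rpow_mul, ← ENNReal.rpow_mul, one_div_mul_cancel hq0.ne', ENNReal.rpow_one,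
    show 1 / (q / (q - 1)) * q = q - 1 by field_simp] at h3
  refine h3.trans (mul_le_mul_left ?_ _)
  exact radial (measurable_dv f) hdd hw hq γ

lemma lintegral_ftc {P P' : ℝ → ℝ} (hd : ∀ r ∈ Icc (0:ℝ) 1, HasDerivAt P (P' r) r)
    (hc : ContinuousOn P' (Icc 0 1)) (h0 : ∀ r ∈ Icc (0:ℝ) 1, 0 ≤ P' r) :
    ∫⁻ r in Ioo (0:ℝ) 1, ENNReal.ofReal (P' r) = ENNReal.ofReal (P 1 - P 0) := by
  have hi : IntervalIntegrable P' volume 0 1 := by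
    apply ContinuousOn.intervalIntegrable
    rwa [uIcc_of_le zero_le_one]
  have h1 := intervalIntegral.integral_eq_sub_of_hasDerivAt (a := 0) (b := 1)
    (f := P) (f' := P') (by rwa [uIcc_of_le zero_le_one]) hi
  rw [← h1, intervalIntegral.integral_of_le zero_le_one, restrict_Ioo_eq_restrict_Ioc,
    ofReal_integral_eq_lintegral_ofReal]
  · exact (intervalIntegrable_iff_integrableOn_Ioc_of_le zero_le_one).1 hi
  · exact (ae_restrict_iff' measurableSet_Ioc).2 (Eventually.of_forall fun r hr => h0 r ⟨hr.1.le, hr.2⟩)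

lemma radint_pow {w : ℂ} (hw : ‖w‖ < 1) {κ : ℝ} (hκ : κ < 1) :
    ∫⁻ r in Ioo (0:ℝ) 1, ENNReal.ofReal ((1 - r * ‖w‖) ^ (-κ)) * ‖w‖ₑ ≤ ENNReal.ofReal (1 / (1 - κ)) := by
  have hX : ∀ r ∈ Icc (0:ℝ) 1, 0 < 1 - r * ‖w‖ := by
    intro r hr; nlinarith [norm_nonneg w, hr.1, hr.2]
  have hk : 0 < 1 - κ := by linarith
  have h1 := lintegral_ftc (P := fun r => - ((1 - r * ‖w‖) ^ (1 - κ) / (1 - κ)))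
    (P' := fun r => (1 - r * ‖w‖) ^ (-κ) * ‖w‖) ?_ ?_ ?_
  · have h2 : ∀ r ∈ Ioo (0:ℝ) 1, ENNReal.ofReal ((1 - r * ‖w‖) ^ (-κ)) * ‖w‖ₑ =
        ENNReal.ofReal ((1 - r * ‖w‖) ^ (-κ) * ‖w‖) := by
      intro r hr
      have := hX r ⟨hr.1.le, hr.2.le⟩
      rw [ENNReal.ofReal_mul (by positivity), ofReal_norm]
    rw [setLIntegral_congr_fun measurableSet_Ioo h2, h1]
    apply ENNReal.ofReal_le_ofReal
    have := hX 1 (by simp)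
    have h3 : 0 ≤ (1 - 1 * ‖w‖) ^ (1 - κ) / (1 - κ) := by positivity
    simp only [zero_mul, sub_zero, Real.one_rpow]
    linarith
  · intro r hr
    have h4 : HasDerivAt (fun r : ℝ => 1 - r * ‖w‖) (-‖w‖) r := by
      simpa using ((hasDerivAt_id r).mul_const ‖w‖).const_sub 1
    have h5 := ((h4.rpow_const (p := 1 - κ) (Or.inl (hX r hr).ne')).div_const (1 - κ)).neg
    refine h5.congr_deriv ?_
    rw [show 1 - κ - 1 = -κ by ring]
    field_simp
  · refine ContinuousOn.mul (ContinuousOn.rpow_const (by fun_prop) fun r hr => Or.inl (hX r hr).ne') continuousOn_const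
  · intro r hr
    have := hX r hr
    positivity

lemma radint_log {w : ℂ} (hw : ‖w‖ < 1) :
    ∫⁻ r in Ioo (0:ℝ) 1, ENNReal.ofReal ((1 - r * ‖w‖) ^ (-1 : ℝ)) * ‖w‖ₑ ≤
      ENNReal.ofReal (Real.log (2 / (1 - ‖w‖))) := by
  have hX : ∀ r ∈ Icc (0:ℝ) 1, 0 < 1 - r * ‖w‖ := by
    intro r hr; nlinarith [norm_nonneg w, hr.1, hr.2]
  have h1 := lintegral_ftc (P := fun r => - Real.log (1 - r * ‖w‖))
    (P' := fun r => (1 - r * ‖w‖) ^ (-1 : ℝ) * ‖w‖) ?_ ?_ ?_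
  · have h2 : ∀ r ∈ Ioo (0:ℝ) 1, ENNReal.ofReal ((1 - r * ‖w‖) ^ (-1:ℝ)) * ‖w‖ₑ =
        ENNReal.ofReal ((1 - r * ‖w‖) ^ (-1:ℝ) * ‖w‖) := by
      intro r hr
      have := hX r ⟨hr.1.le, hr.2.le⟩
      rw [ENNReal.ofReal_mul (by positivity), ofReal_norm]
    rw [setLIntegral_congr_fun measurableSet_Ioo h2, h1]
    apply ENNReal.ofReal_le_ofReal
    rw [Real.log_div (by norm_num) (by linarith)]
    simp only [one_mul, zero_mul, sub_zero, Real.log_one]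
    linarith [Real.log_pos (show (1:ℝ) < 2 by norm_num)]
  · intro r hr
    have h4 : HasDerivAt (fun r : ℝ => 1 - r * ‖w‖) (-‖w‖) r := by
      simpa using ((hasDerivAt_id r).mul_const ‖w‖).const_sub 1
    refine (h4.log (hX r hr).ne').neg.congr_deriv ?_
    rw [Real.rpow_neg_one]
    ring
  · refine ContinuousOn.mul (ContinuousOn.rpow_const (by fun_prop) fun r hr => Or.inl (hX r hr).ne') continuousOn_const
  · intro r hr
    have := hX r hr
    positivity

lemma KK_ne_top (γ : ℝ) : KK γ ≠ ⊤ := ENNReal.mul_ne_top (by simp) (by simp)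

lemma besov_growth {p : ℝ} (hp : 2 < p) {f : ℂ → ℂ} (hf : HolOn f) {a : ℂ} (ha : ‖a‖ < 1) :
    ‖f a - f 0‖ₑ ^ p ≤ KK (p - 2) * BB p f * ENNReal.ofReal (Real.log (2 / (1 - ‖a‖))) ^ (p - 1) := by
  have h1 := pointwise_growth hf ha (q := p) (by linarith) (p - 2)
  rw [show -(p - 2 + 1) / (p - 1) = -1 by
    have : p - 1 ≠ 0 := by linarith
    field_simp; ring] at h1
  refine h1.trans ?_
  refine mul_le_mul' (mul_le_mul_right ?_ _) (ENNReal.rpow_le_rpow (radint_log ha) (by linarith))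
  · unfold BB
    refine setLIntegral_mono' measurableSet_ball fun u hu => ?_
    have hu1 : 0 < 1 - ‖u‖ := by linarith [mem_D.1 hu]
    refine (indicator_le_self' (fun _ _ => zero_le) _).trans_eq ?_
    rw [ENNReal.ofReal_mul (by positivity), ← ENNReal.ofReal_rpow_of_nonneg (norm_nonneg _) (by linarith),
      ofReal_norm]

lemma measurable_phi2 : Measurable (fun x : ℂ × ℂ => phi x.1 x.2) := by
  unfold phi
  have : Measurable (starRingEnd ℂ) := Complex.continuous_conj.measurable
  fun_prop

lemma carl_key {s t : ℝ} (ht : 0 < t) (hts : t < s) {u w : ℂ} (hu : ‖u‖ < 1) (hw : ‖w‖ < 1)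
    (hug : ‖1 - (starRingEnd ℂ) u * w‖ ≤ 5 * (1 - ‖u‖)) :
    (1 - ‖w‖ ^ 2) ^ s * (1 - ‖u‖) ^ (t - s) ≤
      25 ^ s * ((1 - ‖u‖ ^ 2) ^ t * (1 - ‖phi u w‖ ^ 2) ^ s) := by
  have hs0 : 0 < s := ht.trans hts
  have hu1 : 0 < 1 - ‖u‖ := by linarith
  have hu2 := one_sub_sq_pos hu
  have hw2 := one_sub_sq_pos hw
  have hden := den_pos hu hw
  have hph := one_sub_phi_pos hu hw
  have k1 : (1 - ‖w‖ ^ 2) * (1 - ‖u‖)⁻¹ ≤ 25 * (1 - ‖phi u w‖ ^ 2) := by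
    rw [one_sub_phi hu hw, ← div_eq_mul_inv, div_le_iff₀ hu1]
    rw [show 25 * ((1 - ‖u‖ ^ 2) * (1 - ‖w‖ ^ 2) / ‖1 - (starRingEnd ℂ) u * w‖ ^ 2) * (1 - ‖u‖) =
      (1 - ‖w‖ ^ 2) * ((1 - ‖u‖ ^ 2) * 25 * (1 - ‖u‖) / ‖1 - (starRingEnd ℂ) u * w‖ ^ 2) by ring]
    refine le_mul_of_one_le_right hw2.le ?_
    rw [one_le_div (by positivity)]
    calc ‖1 - (starRingEnd ℂ) u * w‖ ^ 2 ≤ (5 * (1 - ‖u‖)) ^ 2 := by gcongr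
      _ = (1 - ‖u‖) * 25 * (1 - ‖u‖) := by ring
      _ ≤ _ := by
        gcongr
        nlinarith [norm_nonneg u]
  have k2 := Real.rpow_le_rpow (by positivity) k1 hs0.le
  rw [Real.mul_rpow hw2.le (by positivity), Real.mul_rpow (by norm_num) hph.le,
    Real.inv_rpow hu1.le] at k2
  have k3 : (1 - ‖u‖) ^ t ≤ (1 - ‖u‖ ^ 2) ^ t :=
    Real.rpow_le_rpow hu1.le (by nlinarith [norm_nonneg u]) ht.le
  calc _ = ((1 - ‖w‖ ^ 2) ^ s * ((1 - ‖u‖) ^ s)⁻¹) * (1 - ‖u‖) ^ t := by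
        rw [Real.rpow_sub hu1]; field_simp
    _ ≤ (25 ^ s * (1 - ‖phi u w‖ ^ 2) ^ s) * (1 - ‖u‖ ^ 2) ^ t := by gcongr
    _ = _ := by ring

lemma carl_pt {s t : ℝ} (ht : 0 < t) (hts : t < s) (F G : ℂ → ℂ) {u w : ℂ} (hu : ‖u‖ < 1) (hw : ‖w‖ < 1)
    (hug : ‖1 - (starRingEnd ℂ) u * w‖ ≤ 5 * (1 - ‖u‖)) :
    ENNReal.ofReal (‖deriv G w‖ ^ 2 * (1 - ‖w‖ ^ 2) ^ s) *
      (ENNReal.ofReal ((1 - ‖u‖) ^ (t - s)) * ‖deriv F u‖ₑ ^ (2:ℝ)) ≤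
    ENNReal.ofReal (25 ^ s) * (ENNReal.ofReal (‖deriv F u‖ ^ 2 * (1 - ‖u‖ ^ 2) ^ t) *
      ENNReal.ofReal (‖deriv G w‖ ^ 2 * (1 - ‖phi u w‖ ^ 2) ^ s)) := by
  have hu1 : 0 < 1 - ‖u‖ := by linarith
  have hu2 := one_sub_sq_pos hu
  have hw2 := one_sub_sq_pos hw
  have hph := one_sub_phi_pos hu hw
  rw [← ofReal_norm, ENNReal.ofReal_rpow_of_nonneg (norm_nonneg _) (by norm_num), Real.rpow_two,
    ← ENNReal.ofReal_mul (by positivity), ← ENNReal.ofReal_mul (by positivity),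
    ← ENNReal.ofReal_mul (by positivity), ← ENNReal.ofReal_mul (by positivity)]
  apply ENNReal.ofReal_le_ofReal
  have key := carl_key ht hts hu hw hug
  calc _ = ‖deriv G w‖ ^ 2 * ‖deriv F u‖ ^ 2 * ((1 - ‖w‖ ^ 2) ^ s * (1 - ‖u‖) ^ (t - s)) := by ring
    _ ≤ ‖deriv G w‖ ^ 2 * ‖deriv F u‖ ^ 2 * (25 ^ s * ((1 - ‖u‖ ^ 2) ^ t * (1 - ‖phi u w‖ ^ 2) ^ s)) := by gcongr
    _ = _ := by ring

lemma carl_step {s t : ℝ} (ht : 0 < t) (hts : t < s) {F : ℂ → ℂ} (G : ℂ → ℂ) (hF : HolOn F) {w : ℂ} (hw : ‖w‖ < 1) :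
    ‖F w - F 0‖ₑ ^ 2 * ENNReal.ofReal (‖deriv G w‖ ^ 2 * (1 - ‖w‖ ^ 2) ^ s) ≤
      (KK (t - s) * ENNReal.ofReal (1 / (s - t)) * ENNReal.ofReal (25 ^ s)) *
      ∫⁻ u in ball (0:ℂ) 1, (ENNReal.ofReal (‖deriv F u‖ ^ 2 * (1 - ‖u‖ ^ 2) ^ t) *
      ENNReal.ofReal (‖deriv G w‖ ^ 2 * (1 - ‖phi u w‖ ^ 2) ^ s)) := by
  have h1 := pointwise_growth hF hw (q := 2) (by norm_num) (t - s)
  have e1 : -(t - s + 1) / (2 - 1) = -(1 - (s - t)) := by ring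
  have h2 := radint_pow hw (κ := 1 - (s - t)) (by linarith)
  rw [e1, show (2:ℝ) - 1 = 1 by norm_num, ENNReal.rpow_one] at h1
  rw [show 1 - (1 - (s - t)) = s - t by ring] at h2
  have h3 := h1.trans (mul_le_mul_right h2 _)
  rw [ENNReal.rpow_two] at h3
  refine (mul_le_mul_left h3 _).trans ?_
  have h4 : ENNReal.ofReal (‖deriv G w‖ ^ 2 * (1 - ‖w‖ ^ 2) ^ s) * (∫⁻ u in ball (0:ℂ) 1,
            (Gam w).indicator (fun u => ENNReal.ofReal ((1 - ‖u‖) ^ (t - s)) * ‖deriv F u‖ₑ ^ (2:ℝ)) u) ≤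
      ENNReal.ofReal (25 ^ s) * ∫⁻ u in ball (0:ℂ) 1, (ENNReal.ofReal (‖deriv F u‖ ^ 2 * (1 - ‖u‖ ^ 2) ^ t) *
      ENNReal.ofReal (‖deriv G w‖ ^ 2 * (1 - ‖phi u w‖ ^ 2) ^ s)) := by
    rw [← lintegral_const_mul' _ _ ENNReal.ofReal_ne_top, ← lintegral_const_mul' _ _ ENNReal.ofReal_ne_top]
    refine setLIntegral_mono' measurableSet_ball fun u hu' => ?_
    have hu := mem_D.1 hu'
    by_cases hug : u ∈ Gam w
    · rw [indicator_of_mem hug]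
      exact carl_pt ht hts F G hu hw hug
    · rw [indicator_of_notMem hug, mul_zero]; exact zero_le
  have h5 := mul_le_mul_right h4 (KK (t - s) * ENNReal.ofReal (1 / (s - t)))
  generalize (∫⁻ u in ball (0:ℂ) 1,
            (Gam w).indicator (fun u => ENNReal.ofReal ((1 - ‖u‖) ^ (t - s)) * ‖deriv F u‖ₑ ^ (2:ℝ)) u) = I1 at *
  generalize (∫⁻ u in ball (0:ℂ) 1, (ENNReal.ofReal (‖deriv F u‖ ^ 2 * (1 - ‖u‖ ^ 2) ^ t) *
      ENNReal.ofReal (‖deriv G w‖ ^ 2 * (1 - ‖phi u w‖ ^ 2) ^ s))) = I2 at *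
  generalize ENNReal.ofReal (‖deriv G w‖ ^ 2 * (1 - ‖w‖ ^ 2) ^ s) = x at *
  generalize KK (t - s) = k at *
  generalize ENNReal.ofReal (1 / (s - t)) = y at *
  calc _ = k * y * (x * I1) := by ring
    _ ≤ _ := h5
    _ = _ := by ring

lemma carl_fub (X : ℂ → ℝ≥0∞) (Y : ℂ → ℂ → ℝ≥0∞) (hXm : Measurable X) (hYm : Measurable (Function.uncurry Y))
    (M : ℝ≥0∞) (hM : ∀ u, ‖u‖ < 1 → ∫⁻ w in ball (0:ℂ) 1, Y w u ≤ M) :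
    ∫⁻ w in ball (0:ℂ) 1, ∫⁻ u in ball (0:ℂ) 1, X u * Y w u ≤ M * ∫⁻ u in ball (0:ℂ) 1, X u := by
  rw [lintegral_lintegral_swap]
  swap
  · refine Measurable.aemeasurable ?_
    have : Measurable (fun x : ℂ × ℂ => X x.2 * Function.uncurry Y x) := by fun_prop
    exact this
  rw [← lintegral_const_mul M hXm]
  refine setLIntegral_mono' measurableSet_ball fun u hu' => ?_
  have hu := mem_D.1 hu'
  have hYu : Measurable (fun w => Y w u) := hYm.comp (measurable_id.prodMk measurable_const)
  rw [lintegral_const_mul _ hYu, mul_comm (X u)]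
  exact mul_le_mul_left (hM u hu) _

lemma carleson0 {s t : ℝ} (ht : 0 < t) (hts : t < s) :
    ∃ C : ℝ≥0∞, C ≠ ⊤ ∧ ∀ (F G : ℂ → ℂ) (M : ℝ≥0∞), HolOn F → (∀ b, ‖b‖ < 1 → JJ s G b ≤ M) →
      ∫⁻ w in ball (0:ℂ) 1, ‖F w - F 0‖ₑ ^ 2 * ENNReal.ofReal (‖deriv G w‖ ^ 2 * (1 - ‖w‖ ^ 2) ^ s) ≤
        C * M * ∫⁻ u in ball (0:ℂ) 1, ENNReal.ofReal (‖deriv F u‖ ^ 2 * (1 - ‖u‖ ^ 2) ^ t) := by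
  have hC1t : KK (t - s) * ENNReal.ofReal (1 / (s - t)) * ENNReal.ofReal (25 ^ s) ≠ ⊤ :=
    ENNReal.mul_ne_top (ENNReal.mul_ne_top (KK_ne_top _) ENNReal.ofReal_ne_top) ENNReal.ofReal_ne_top
  refine ⟨_, hC1t, fun F G M hF hG => ?_⟩
  refine (setLIntegral_mono' measurableSet_ball
    (fun w hw => carl_step ht hts G hF (mem_D.1 hw))).trans ?_
  rw [lintegral_const_mul' _ _ hC1t]
  generalize KK (t - s) * ENNReal.ofReal (1 / (s - t)) * ENNReal.ofReal (25 ^ s) = K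
  rw [mul_assoc]
  refine mul_le_mul_right ?_ _
  refine carl_fub (fun u => ENNReal.ofReal (‖deriv F u‖ ^ 2 * (1 - ‖u‖ ^ 2) ^ t))
    (fun w u => ENNReal.ofReal (‖deriv G w‖ ^ 2 * (1 - ‖phi u w‖ ^ 2) ^ s)) ?_ ?_ M hG
  · have := measurable_dv F
    fun_prop
  · have h1 := measurable_dv G
    have h2 : Measurable (fun x : ℂ × ℂ => phi x.2 x.1) := measurable_phi2.comp measurable_swap
    simp only [Function.uncurry_def]
    fun_prop

lemma deriv_comp_phi {f : ℂ → ℂ} (hf : HolOn f) {a w : ℂ} (ha : ‖a‖ < 1) (hw : ‖w‖ < 1) :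
    HasDerivAt (fun w => f (phi a w)) (deriv f (phi a w) * deriv (phi a) w) w := by
  have h1 : HasDerivAt f (deriv f (phi a w)) (phi a w) :=
    (hf.differentiableAt (isOpen_ball.mem_nhds (mem_D.2 (phi_lt ha hw)))).hasDerivAt
  exact h1.comp w (hasDerivAt_phi ha hw).differentiableAt.hasDerivAt

lemma JJ_comp {s : ℝ} {f : ℂ → ℂ} (hf : HolOn f) {a c : ℂ} (ha : ‖a‖ < 1) (hc : ‖c‖ < 1) :
    JJ s f c = JJ s (fun w => f (phi a w)) (phi a c) := by
  unfold JJ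
  rw [lintegral_phi ha]
  refine setLIntegral_congr_fun measurableSet_ball fun w hw => ?_
  have hw := mem_D.1 hw
  rw [(deriv_comp_phi hf ha hw).deriv, one_sub_phi_comp ha hc hw, ← ENNReal.ofReal_mul (by positivity),
    norm_mul]
  congr 1; ring

lemma carleson {s t : ℝ} (ht : 0 < t) (hts : t < s) :
    ∃ C : ℝ≥0∞, C ≠ ⊤ ∧ ∀ (f g : ℂ → ℂ) (M : ℝ≥0∞), HolOn f → HolOn g →
      (∀ b, ‖b‖ < 1 → JJ s g b ≤ M) → ∀ a, ‖a‖ < 1 → 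
      ∫⁻ z in ball (0:ℂ) 1, ‖f z - f a‖ₑ ^ 2 * ENNReal.ofReal (‖deriv g z‖ ^ 2 * (1 - ‖phi a z‖ ^ 2) ^ s) ≤
        C * M * JJ t f a := by
  obtain ⟨C, hC, H⟩ := carleson0 ht hts
  refine ⟨C, hC, fun f g M hf hg hM a ha => ?_⟩
  have hF : HolOn (fun w => f (phi a w)) := fun w hw =>
    (deriv_comp_phi hf ha (mem_D.1 hw)).differentiableAt.differentiableWithinAt
  have h1 := H (fun w => f (phi a w)) (fun w => g (phi a w)) M hF (by
    intro b hb
    have := JJ_comp (s := s) hg ha (phi_lt ha hb)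
    rw [phi_phi ha hb] at this
    rw [← this]
    exact hM _ (phi_lt ha hb))
  have h2 : JJ t f a = ∫⁻ u in ball (0:ℂ) 1, ENNReal.ofReal (‖deriv (fun w => f (phi a w)) u‖ ^ 2 * (1 - ‖u‖ ^ 2) ^ t) := by
    rw [JJ_comp hf ha ha, phi_self]
    unfold JJ
    simp [phi]
  rw [h2]
  refine le_trans (le_of_eq ?_) h1
  rw [lintegral_phi ha]
  refine setLIntegral_congr_fun measurableSet_ball fun w hw => ?_
  have hw := mem_D.1 hw
  rw [(deriv_comp_phi hg ha hw).deriv, phi_zero, phi_phi ha hw, mul_left_comm, ← ENNReal.ofReal_mul (by positivity),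
    norm_mul]
  congr 2; ring

lemma pi_inv_ne_top : (ENNReal.ofReal π)⁻¹ ≠ ⊤ := by
  simp [Real.pi_pos]

lemma pi_inv_ne_zero : (ENNReal.ofReal π)⁻¹ ≠ 0 := by simp

lemma lintegral_dA (F : ℂ → ℝ≥0∞) :
    ∫⁻ z in ball (0:ℂ) 1, F z ∂dA = (ENNReal.ofReal π)⁻¹ * ∫⁻ z in ball (0:ℂ) 1, F z := by
  unfold dA
  rw [Measure.restrict_smul, lintegral_smul_measure, smul_eq_mul]

lemma pi_mul_cancel (x : ℝ≥0∞) : ENNReal.ofReal π * ((ENNReal.ofReal π)⁻¹ * x) = x := by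
  rw [← mul_assoc, ENNReal.mul_inv_cancel (by simp [Real.pi_pos]) ENNReal.ofReal_ne_top, one_mul]

lemma sup_lt_top_iff (F : ℂ → ℝ≥0∞) :
    (⨆ a ∈ ball (0:ℂ) 1, (ENNReal.ofReal π)⁻¹ * F a) < ⊤ ↔ ∃ M : ℝ≥0∞, M ≠ ⊤ ∧ ∀ a, ‖a‖ < 1 → F a ≤ M := by
  constructor
  · intro h
    refine ⟨ENNReal.ofReal π * (⨆ a ∈ ball (0:ℂ) 1, (ENNReal.ofReal π)⁻¹ * F a),
      ENNReal.mul_ne_top ENNReal.ofReal_ne_top h.ne, fun a ha => ?_⟩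
    calc F a = ENNReal.ofReal π * ((ENNReal.ofReal π)⁻¹ * F a) := (pi_mul_cancel _).symm
      _ ≤ _ := mul_le_mul_right (le_iSup₂ (f := fun a (_ : a ∈ ball (0:ℂ) 1) => (ENNReal.ofReal π)⁻¹ * F a) a (mem_D.2 ha)) _
  · rintro ⟨M, hM, h⟩
    refine lt_of_le_of_lt (iSup₂_le fun a ha => mul_le_mul_right (h a (mem_D.1 ha)) _)
      (ENNReal.mul_lt_top pi_inv_ne_top.lt_top hM.lt_top)

lemma Besov_iff {p : ℝ} {f : ℂ → ℂ} : f ∈ Besov p ↔ HolOn f ∧ BB p f ≠ ⊤ := by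
  unfold Besov BB
  rw [mem_ofPred_eq, lintegral_dA]
  refine and_congr_right fun _ => ⟨fun h => ?_, fun h => ENNReal.mul_lt_top pi_inv_ne_top.lt_top h.lt_top⟩
  intro h1
  rw [h1, ENNReal.mul_top pi_inv_ne_zero] at h
  exact lt_irrefl _ h

lemma Qs_iff {s : ℝ} {f : ℂ → ℂ} : f ∈ Qs s ↔ HolOn f ∧ ∃ M : ℝ≥0∞, M ≠ ⊤ ∧ ∀ a, ‖a‖ < 1 → JJ s f a ≤ M := by
  unfold Qs
  rw [mem_ofPred_eq, ← sup_lt_top_iff (JJ s f)]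
  simp only [lintegral_dA]
  rfl

lemma QsLog_iff {s α : ℝ} {f : ℂ → ℂ} : f ∈ QsLog s α ↔ HolOn f ∧ ∃ M : ℝ≥0∞, M ≠ ⊤ ∧ ∀ a, ‖a‖ < 1 →
    ENNReal.ofReal ((Real.log (2 / (1 - ‖a‖))) ^ (2 * α)) * JJ s f a ≤ M := by
  unfold QsLog
  rw [mem_ofPred_eq, ← sup_lt_top_iff (fun a => ENNReal.ofReal ((Real.log (2 / (1 - ‖a‖))) ^ (2 * α)) * JJ s f a)]
  simp only [lintegral_dA, mul_left_comm]
  rfl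

lemma HolOn.at {f : ℂ → ℂ} (hf : HolOn f) {z : ℂ} (hz : ‖z‖ < 1) : DifferentiableAt ℂ f z :=
  hf.differentiableAt (isOpen_ball.mem_nhds (mem_D.2 hz))

lemma deriv_congr_D {f h : ℂ → ℂ} (e : ∀ z, ‖z‖ < 1 → f z = h z) {z : ℂ} (hz : ‖z‖ < 1) :
    deriv f z = deriv h z := by
  apply EventuallyEq.deriv_eq
  filter_upwards [isOpen_ball.mem_nhds (mem_D.2 hz)] with w hw using e w (mem_D.1 hw)

lemma JJ_congr {s : ℝ} {f h : ℂ → ℂ} (e : ∀ z, ‖z‖ < 1 → f z = h z) (a : ℂ) : JJ s f a = JJ s h a := by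
  unfold JJ
  refine setLIntegral_congr_fun measurableSet_ball fun z hz => ?_
  have := deriv_congr_D e (mem_D.1 hz)
  simp only [this]

lemma ofReal_split {y : ℝ} {b : ℂ} : ENNReal.ofReal (‖b‖ ^ 2 * y) = ‖b‖ₑ ^ 2 * ENNReal.ofReal y := by
  rw [ENNReal.ofReal_mul (by positivity), ENNReal.ofReal_pow (norm_nonneg _), ofReal_norm]

lemma enorm_add_sq (x y : ℂ) : ‖x + y‖ₑ ^ 2 ≤ 2 * ‖x‖ₑ ^ 2 + 2 * ‖y‖ₑ ^ 2 := by
  rw [← ofReal_norm, ← ofReal_norm, ← ofReal_norm, ← ENNReal.ofReal_pow (norm_nonneg _),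
    ← ENNReal.ofReal_pow (norm_nonneg _), ← ENNReal.ofReal_pow (norm_nonneg _),
    ← ENNReal.ofReal_ofNat 2, ← ENNReal.ofReal_mul (by norm_num), ← ENNReal.ofReal_mul (by norm_num),
    ← ENNReal.ofReal_add (by positivity) (by positivity)]
  apply ENNReal.ofReal_le_ofReal
  have := norm_add_le x y
  nlinarith [norm_nonneg (x + y), norm_nonneg x, norm_nonneg y, sq_nonneg (‖x‖ - ‖y‖)]

lemma JJ_add {s : ℝ} {f h : ℂ → ℂ} (hf : HolOn f) (hh : HolOn h) (a : ℂ) :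
    JJ s (fun z => f z + h z) a ≤ 2 * JJ s f a + 2 * JJ s h a := by
  unfold JJ
  rw [← lintegral_const_mul' _ _ (by simp), ← lintegral_const_mul' _ _ (by simp), ← lintegral_add_left]
  · refine setLIntegral_mono' measurableSet_ball fun z hz => ?_
    have hz := mem_D.1 hz
    rw [deriv_fun_add (hf.at hz) (hh.at hz), ENNReal.ofReal_mul (by positivity), ENNReal.ofReal_mul (by positivity),
      ENNReal.ofReal_mul (by positivity), ← mul_assoc, ← mul_assoc, ← add_mul]
    refine mul_le_mul_left ?_ _
    simp only [ENNReal.ofReal_pow (norm_nonneg _), ofReal_norm]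
    exact enorm_add_sq _ _
  · have := measurable_dv f
    have := measurable_phi a
    fun_prop

lemma JJ_smul {s : ℝ} {f : ℂ → ℂ} (c : ℂ) (a : ℂ) :
    JJ s (fun z => c * f z) a = ‖c‖ₑ ^ 2 * JJ s f a := by
  unfold JJ
  rw [← lintegral_const_mul' _ _ (by simp)]
  congr 1
  ext z
  rw [deriv_const_mul_field, norm_mul, mul_pow, mul_assoc, ENNReal.ofReal_mul (by positivity),
    ENNReal.ofReal_pow (norm_nonneg _), ofReal_norm]

/-- coefficients of the random sum. -/
noncomputable def ee (c : ℕ → Bool) (n : ℕ) : ℂ := if c n then (1/4 : ℂ) ^ n else 0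

/-- the random sum. -/
noncomputable def SS (h : ℕ → ℂ → ℂ) (c : ℕ → Bool) (z : ℂ) : ℂ := ∑' n, ee c n * h n z

lemma norm_ee (c : ℕ → Bool) (n : ℕ) : ‖ee c n‖ ≤ (1/4 : ℝ) ^ n := by
  unfold ee
  split_ifs <;> simp

lemma continuous_ee (n : ℕ) : Continuous (fun c => ee c n) := by
  have h1 : Continuous (fun b : Bool => if b then (1/4 : ℂ) ^ n else 0) := continuous_of_discreteTopology
  exact h1.comp (continuous_apply n)

lemma SS_facts {h : ℕ → ℂ → ℂ} (hh : ∀ n, HolOn (h n))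
    (hloc : ∀ r < 1, ∃ C : ℝ, ∀ n z, ‖z‖ < r → ‖h n z‖ ≤ C) {z : ℂ} (hz : ‖z‖ < 1) (c : ℕ → Bool) :
    Summable (fun n => ee c n * h n z) ∧ DifferentiableAt ℂ (SS h c) z ∧
      HasSum (fun n => ee c n * deriv (h n) z) (deriv (SS h c) z) := by
  obtain ⟨r, hr1, hr2⟩ := exists_between hz
  obtain ⟨C, hC⟩ := hloc r hr2
  have hC0 : 0 ≤ C := (norm_nonneg _).trans (hC 0 z hr1)
  have hu : Summable (fun n : ℕ => (1/4:ℝ) ^ n * C) :=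
    (summable_geometric_of_lt_one (by norm_num) (by norm_num)).mul_right C
  have hd : ∀ n, DifferentiableOn ℂ (fun w => ee c n * h n w) (ball 0 r) := fun n =>
    ((hh n).mono (ball_subset_ball hr2.le)).const_mul _
  have hb : ∀ n w, w ∈ ball (0:ℂ) r → ‖ee c n * h n w‖ ≤ (1/4:ℝ) ^ n * C := by
    intro n w hw
    rw [norm_mul]
    have := hC n w (by simpa using hw)
    have := norm_ee c n
    gcongr
  have hzr : z ∈ ball (0:ℂ) r := by simpa using hr1
  refine ⟨Summable.of_norm_bounded hu (fun n => hb n z hzr), ?_, ?_⟩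
  · exact (differentiableOn_tsum_of_summable_norm hu hd isOpen_ball hb).differentiableAt (isOpen_ball.mem_nhds hzr)
  · have := hasSum_deriv_of_summable_norm hu hd isOpen_ball hb hzr
    simp only [deriv_const_mul_field] at this
    exact this

lemma SS_cont {h : ℕ → ℂ → ℂ} (hh : ∀ n, HolOn (h n))
    (hloc : ∀ r < 1, ∃ C : ℝ, ∀ n z, ‖z‖ < r → ‖h n z‖ ≤ C) {z : ℂ} (hz : ‖z‖ < 1) :
    Continuous (fun c => SS h c z) ∧ Continuous (fun c => deriv (SS h c) z) := by
  have h1 := SS_facts hh hloc hz (fun _ => true)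
  have key : ∀ x : ℕ → ℂ, Summable (fun n => ee (fun _ => true) n * x n) →
      Continuous (fun c => ∑' n, ee c n * x n) := by
    intro x hx
    refine continuous_tsum (fun n => (continuous_ee n).mul continuous_const) hx.norm ?_
    intro n c
    rw [norm_mul, norm_mul]
    refine mul_le_mul_of_nonneg_right ?_ (norm_nonneg _)
    refine (norm_ee c n).trans (le_of_eq ?_)
    simp [ee]
  refine ⟨key _ h1.1, ?_⟩
  have : (fun c => deriv (SS h c) z) = fun c => ∑' n, ee c n * deriv (h n) z := by
    ext c
    exact (SS_facts hh hloc hz c).2.2.tsum_eq.symm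
  rw [this]
  exact key _ h1.2.2.summable

lemma tsum_half : ∑' n : ℕ, (2⁻¹ : ℝ≥0∞) ^ n = 2 := by
  rw [ENNReal.tsum_geometric, ENNReal.one_sub_inv_two, inv_inv]

lemma tsum_pow_le {p : ℝ} (hp : 1 ≤ p) (x : ℕ → ℝ≥0∞) :
    (∑' n, (4⁻¹ : ℝ≥0∞) ^ n * x n) ^ p ≤ 2 ^ p * ∑' n, (2⁻¹ : ℝ≥0∞) ^ n * x n ^ p := by
  have hp0 : 0 < p := by linarith
  set T := ∑' n, (2⁻¹ : ℝ≥0∞) ^ n * x n ^ p with hT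
  have h1 : ∀ n, (2⁻¹ : ℝ≥0∞) ^ n * x n ≤ T ^ (1 / p) := by
    intro n
    rw [one_div, ENNReal.le_rpow_inv_iff hp0, ENNReal.mul_rpow_of_nonneg _ _ hp0.le]
    refine le_trans ?_ (ENNReal.le_tsum n)
    refine mul_le_mul_left ?_ _
    calc ((2⁻¹ : ℝ≥0∞) ^ n) ^ p ≤ ((2⁻¹ : ℝ≥0∞) ^ n) ^ (1:ℝ) :=
          ENNReal.rpow_le_rpow_of_exponent_ge (pow_le_one' (by simp) n) hp
      _ = _ := ENNReal.rpow_one _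
  have h2 : ∑' n, (4⁻¹ : ℝ≥0∞) ^ n * x n ≤ 2 * T ^ (1 / p) := by
    calc _ = ∑' n, (2⁻¹ : ℝ≥0∞) ^ n * ((2⁻¹ : ℝ≥0∞) ^ n * x n) := by
          congr 1; ext n
          rw [← mul_assoc, ← mul_pow, ← ENNReal.mul_inv (by simp) (by simp)]
          norm_num
      _ ≤ ∑' n, (2⁻¹ : ℝ≥0∞) ^ n * T ^ (1 / p) := ENNReal.tsum_le_tsum fun n => mul_le_mul_right (h1 n) _
      _ = _ := by rw [ENNReal.tsum_mul_right, tsum_half]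
  calc _ ≤ (2 * T ^ (1 / p)) ^ p := ENNReal.rpow_le_rpow h2 hp0.le
    _ = _ := by
      rw [ENNReal.mul_rpow_of_nonneg _ _ hp0.le, ← ENNReal.rpow_mul, one_div_mul_cancel hp0.ne', ENNReal.rpow_one]

lemma BB_eq {p : ℝ} (hp : 0 ≤ p) (f : ℂ → ℂ) :
    BB p f = ∫⁻ z in ball (0:ℂ) 1, ENNReal.ofReal ((1 - ‖z‖) ^ (p - 2)) * ‖deriv f z‖ₑ ^ p := by
  unfold BB
  refine setLIntegral_congr_fun measurableSet_ball fun u hu => ?_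
  have hu1 : 0 < 1 - ‖u‖ := by linarith [mem_D.1 hu]
  rw [ENNReal.ofReal_mul (by positivity), ← ENNReal.ofReal_rpow_of_nonneg (norm_nonneg _) hp, ofReal_norm]

lemma SS_BB {p : ℝ} (hp : 1 ≤ p) {h : ℕ → ℂ → ℂ} (hh : ∀ n, HolOn (h n))
    (hloc : ∀ r < 1, ∃ C : ℝ, ∀ n z, ‖z‖ < r → ‖h n z‖ ≤ C) {K : ℝ≥0∞} (hK : ∀ n, BB p (h n) ≤ K)
    (c : ℕ → Bool) : BB p (SS h c) ≤ 2 ^ p * (2 * K) := by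
  have hp0 : 0 ≤ p := by linarith
  have h1 : ∀ z, ‖z‖ < 1 → ‖deriv (SS h c) z‖ₑ ^ p ≤
      2 ^ p * ∑' n, (2⁻¹ : ℝ≥0∞) ^ n * ‖deriv (h n) z‖ₑ ^ p := by
    intro z hz
    refine le_trans (ENNReal.rpow_le_rpow ?_ hp0) (tsum_pow_le hp _)
    rw [← (SS_facts hh hloc hz c).2.2.tsum_eq]
    refine (enorm_tsum_le_tsum_enorm).trans (ENNReal.tsum_le_tsum fun n => ?_)
    rw [enorm_mul]
    refine mul_le_mul_left ?_ _
    unfold ee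
    split_ifs
    · rw [enorm_pow, ← ofReal_norm]
      apply le_of_eq
      congr 1
      rw [norm_div, norm_one, one_div, ENNReal.ofReal_inv_of_pos (by simp)]
      simp
    · simp
  rw [BB_eq hp0]
  calc _ ≤ ∫⁻ z in ball (0:ℂ) 1, 2 ^ p * ∑' n, (2⁻¹ : ℝ≥0∞) ^ n *
        (ENNReal.ofReal ((1 - ‖z‖) ^ (p - 2)) * ‖deriv (h n) z‖ₑ ^ p) := by
        refine setLIntegral_mono' measurableSet_ball fun z hz => ?_
        refine (mul_le_mul_right (h1 z (mem_D.1 hz)) _).trans (le_of_eq ?_)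
        rw [mul_left_comm, ← ENNReal.tsum_mul_left]
        congr 2; ext n; ring
    _ = 2 ^ p * ∑' n, (2⁻¹ : ℝ≥0∞) ^ n * BB p (h n) := by
        rw [lintegral_const_mul' _ _ (by simp), lintegral_tsum]
        · congr 2; ext n
          rw [lintegral_const_mul' _ _ (by simp), BB_eq hp0]
        · intro n
          have := measurable_dv (h n)
          fun_prop
    _ ≤ 2 ^ p * ∑' n, (2⁻¹ : ℝ≥0∞) ^ n * K :=
        mul_le_mul_right (ENNReal.tsum_le_tsum fun n => mul_le_mul_right (hK n) _) _
    _ = _ := by rw [ENNReal.tsum_mul_right, tsum_half]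

lemma SS_closed {s : ℝ} {g : ℂ → ℂ} (hg : HolOn g) {h : ℕ → ℂ → ℂ} (hh : ∀ n, HolOn (h n))
    (hloc : ∀ r < 1, ∃ C : ℝ, ∀ n z, ‖z‖ < r → ‖h n z‖ ≤ C) (k : ℝ≥0∞) (a : ℂ) :
    IsClosed {c : ℕ → Bool | JJ s (Mg g (SS h c)) a ≤ k} := by
  apply IsSeqClosed.isClosed
  intro u c hu hc
  have hd : ∀ c z, ‖z‖ < 1 → deriv (Mg g (SS h c)) z = deriv g z * SS h c z + g z * deriv (SS h c) z := by
    intro c z hz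
    exact ((hg.at hz).hasDerivAt.mul (SS_facts hh hloc hz c).2.1.hasDerivAt).deriv
  have h1 : ∀ z ∈ ball (0:ℂ) 1, ENNReal.ofReal (‖deriv (Mg g (SS h c)) z‖ ^ 2 * (1 - ‖phi a z‖ ^ 2) ^ s) =
      liminf (fun j => ENNReal.ofReal (‖deriv (Mg g (SS h (u j))) z‖ ^ 2 * (1 - ‖phi a z‖ ^ 2) ^ s)) atTop := by
    intro z hz
    have hz := mem_D.1 hz
    symm
    apply Tendsto.liminf_eq
    simp only [hd _ z hz]
    have hcont : Continuous (fun c => ENNReal.ofReal (‖deriv g z * SS h c z + g z * deriv (SS h c) z‖ ^ 2 *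
        (1 - ‖phi a z‖ ^ 2) ^ s)) := by
      have h1 := (SS_cont hh hloc hz).1
      have h2 := (SS_cont hh hloc hz).2
      exact ENNReal.continuous_ofReal.comp (by fun_prop)
    exact (hcont.tendsto c).comp hc
  show JJ s (Mg g (SS h c)) a ≤ k
  unfold JJ
  rw [setLIntegral_congr_fun measurableSet_ball h1]
  refine (lintegral_liminf_le ?_).trans ?_
  · intro j
    have := measurable_dv (Mg g (SS h (u j)))
    have := measurable_phi a
    fun_prop
  · refine (liminf_le_liminf (Eventually.of_forall fun j => hu j)).trans ?_
    simp

lemma UB_seq {p s : ℝ} (hp : 2 < p) {g : ℂ → ℂ} (hg : HolOn g) (H : MapsInto (Mg g) (Besov p) (Qs s))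
    {h : ℕ → ℂ → ℂ} (hh : ∀ n, HolOn (h n))
    (hloc : ∀ r < 1, ∃ C : ℝ, ∀ n z, ‖z‖ < r → ‖h n z‖ ≤ C) {K : ℝ≥0∞} (hKt : K ≠ ⊤)
    (hK : ∀ n, BB p (h n) ≤ K) : ∃ k : ℕ, ∀ᶠ n in atTop, ∀ a, ‖a‖ < 1 → JJ s (Mg g (h n)) a ≤ 16 ^ n * (4 * k) := by
  have hhol : ∀ c, HolOn (SS h c) := fun c z hz => (SS_facts hh hloc (mem_D.1 hz) c).2.1.differentiableWithinAt
  have hghol : ∀ c, HolOn (Mg g (SS h c)) := fun c => hg.mul (hhol c)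
  have hmem : ∀ c, Mg g (SS h c) ∈ Qs s := by
    intro c
    apply H
    rw [Besov_iff]
    refine ⟨hhol c, ne_top_of_le_ne_top ?_ (SS_BB (by linarith) hh hloc hK c)⟩
    exact ENNReal.mul_ne_top (by simp) (ENNReal.mul_ne_top (by simp) hKt)
  let E : ℕ → Set (ℕ → Bool) := fun k => {c | ∀ a, ‖a‖ < 1 → JJ s (Mg g (SS h c)) a ≤ k}
  have hE : ∀ k, IsClosed (E k) := by
    intro k
    have : E k = ⋂ a : ℂ, ⋂ _ : ‖a‖ < 1, {c | JJ s (Mg g (SS h c)) a ≤ k} := by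
      ext c; simp [E]
    rw [this]
    exact isClosed_iInter fun a => isClosed_iInter fun _ => SS_closed hg hh hloc _ a
  have hU : ⋃ k, E k = univ := by
    rw [eq_univ_iff_forall]
    intro c
    obtain ⟨_, M, hM, hb⟩ := Qs_iff.1 (hmem c)
    obtain ⟨k, hk⟩ := ENNReal.exists_nat_gt hM
    exact mem_iUnion.2 ⟨k, fun a ha => (hb a ha).trans hk.le⟩
  obtain ⟨k, c0, hc0⟩ := nonempty_interior_of_iUnion_of_closed hE hU
  have hc0E : c0 ∈ E k := interior_subset hc0
  refine ⟨k, ?_⟩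
  have htend : Tendsto (fun n => Function.update c0 n (!c0 n)) atTop (nhds c0) := by
    rw [tendsto_pi_nhds]
    intro i
    apply tendsto_const_nhds.congr'
    filter_upwards [eventually_gt_atTop i] with n hn
    rw [Function.update_of_ne (by omega)]
  filter_upwards [htend.eventually (isOpen_interior.mem_nhds hc0)] with n hn a ha
  have hnE := interior_subset hn
  set c1 := Function.update c0 n (!c0 n) with hc1
  obtain ⟨σ, hσ, hσ2⟩ : ∃ σ : ℂ, ‖σ‖ₑ ^ 2 = 16 ^ n ∧ σ * (ee c1 n - ee c0 n) = 1 := by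
    have h44 : (4:ℂ) ^ n * ((1/4 : ℂ)) ^ n = 1 := by rw [← mul_pow]; norm_num
    have hn4 : ‖(4:ℂ) ^ n‖ₑ ^ 2 = 16 ^ n := by
      rw [← ofReal_norm, ← ENNReal.ofReal_pow (norm_nonneg _), norm_pow, ← pow_mul, mul_comm n 2, pow_mul,
        ENNReal.ofReal_pow (by positivity)]
      congr 1
      rw [show ‖(4:ℂ)‖ ^ 2 = 16 by norm_num]
      simp
    by_cases hb : c0 n = true
    · refine ⟨-(4:ℂ) ^ n, by rw [enorm_neg, hn4], ?_⟩
      simp only [ee, hc1, Function.update_self, hb]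
      simp only [Bool.not_true, Bool.false_eq_true, if_false, if_true]
      linear_combination h44
    · refine ⟨(4:ℂ) ^ n, hn4, ?_⟩
      simp only [ee, hc1, Function.update_self, hb]
      simp only [Bool.not_false, Bool.false_eq_true, if_false, if_true]
      linear_combination h44
  have hdiff : ∀ z, ‖z‖ < 1 → Mg g (h n) z =
      σ * (Mg g (SS h c1) z + (-1) * Mg g (SS h c0) z) := by
    intro z hz
    have e1 : SS h c1 z - SS h c0 z = (ee c1 n - ee c0 n) * h n z := by
      unfold SS
      rw [← (SS_facts hh hloc hz c1).1.tsum_sub (SS_facts hh hloc hz c0).1, tsum_eq_single n, sub_mul]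
      intro m hm
      have : ee c1 m = ee c0 m := by simp [ee, hc1, Function.update_of_ne hm]
      rw [this, sub_self]
    unfold Mg
    calc g z * h n z = g z * ((σ * (ee c1 n - ee c0 n)) * h n z) := by rw [hσ2, one_mul]
      _ = σ * (g z * ((ee c1 n - ee c0 n) * h n z)) := by ring
      _ = _ := by rw [← e1]; ring
  rw [JJ_congr hdiff, JJ_smul, hσ]
  refine mul_le_mul_right ?_ _
  refine (JJ_add (hghol c1) ((hghol c0).const_mul _) a).trans ?_
  rw [JJ_smul]
  have i1 := hnE a ha
  have i2 := hc0E a ha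
  calc _ ≤ 2 * (k : ℝ≥0∞) + 2 * (‖(-1 : ℂ)‖ₑ ^ 2 * k) := by gcongr
    _ = _ := by simp; ring

lemma UB {p s : ℝ} (hp : 2 < p) {g : ℂ → ℂ} (hg : HolOn g) (H : MapsInto (Mg g) (Besov p) (Qs s))
    {ι : Type*} {h : ι → ℂ → ℂ} (hh : ∀ n, HolOn (h n))
    (hloc : ∀ r < 1, ∃ C : ℝ, ∀ n z, ‖z‖ < r → ‖h n z‖ ≤ C) {K : ℝ≥0∞} (hKt : K ≠ ⊤)
    (hK : ∀ n, BB p (h n) ≤ K) : ∃ M : ℝ≥0∞, M ≠ ⊤ ∧ ∀ i a, ‖a‖ < 1 → JJ s (Mg g (h i)) a ≤ M := by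
  by_contra! hcon
  have h1 : ∀ n : ℕ, ∃ i a, ‖a‖ < 1 ∧ 16 ^ n * (4 * (n : ℝ≥0∞)) < JJ s (Mg g (h i)) a := fun n =>
    hcon (16 ^ n * (4 * (n : ℝ≥0∞))) (ENNReal.mul_ne_top (by simp) (ENNReal.mul_ne_top (by simp) (by simp)))
  choose i a ha hi using h1
  obtain ⟨k, hk⟩ := UB_seq hp hg H (h := fun n => h (i n)) (fun n => hh _)
    (fun r hr => (hloc r hr).imp fun C hC n => hC (i n)) hKt (fun n => hK _)
  obtain ⟨n, hn, hnk⟩ := (hk.and (eventually_ge_atTop k)).exists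
  have := (hi n).trans_le (hn (a n) (ha n))
  refine absurd this (not_lt.2 ?_)
  gcongr

lemma JJ_eq (s : ℝ) (f : ℂ → ℂ) (a : ℂ) :
    JJ s f a = ∫⁻ z in ball (0:ℂ) 1, ‖deriv f z‖ₑ ^ 2 * ENNReal.ofReal ((1 - ‖phi a z‖ ^ 2) ^ s) := by
  unfold JJ
  simp only [ofReal_split]

lemma phi_near {a z : ℂ} (ha : ‖a‖ < 1) (hz : z ∈ ball a ((1 - ‖a‖) / 2)) :
    ‖z‖ < 1 ∧ (2/25 : ℝ) ≤ 1 - ‖phi a z‖ ^ 2 := by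
  have hza : ‖z - a‖ < (1 - ‖a‖) / 2 := by simpa [dist_eq_norm] using hz
  have h1 : ‖z‖ ≤ ‖a‖ + ‖z - a‖ := by
    calc ‖z‖ = ‖a + (z - a)‖ := by congr 1; ring
      _ ≤ _ := norm_add_le _ _
  have hz1 : ‖z‖ < 1 := by linarith
  refine ⟨hz1, ?_⟩
  have hd := den_pos ha hz1
  have h2 : ‖1 - (starRingEnd ℂ) a * z‖ ≤ 5 / 2 * (1 - ‖a‖) := by
    have e : 1 - (starRingEnd ℂ) a * z = ((1 - ‖a‖ ^ 2 : ℝ) : ℂ) - (starRingEnd ℂ) a * (z - a) := by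
      have : (starRingEnd ℂ) a * a = ((‖a‖ ^ 2 : ℝ) : ℂ) := by
        rw [mul_comm, Complex.mul_conj, Complex.normSq_eq_norm_sq]
      push_cast at this ⊢
      linear_combination -this
    rw [e]
    refine (norm_sub_le _ _).trans ?_
    rw [norm_mul, RCLike.norm_conj, Complex.norm_real, Real.norm_of_nonneg (one_sub_sq_pos ha).le]
    nlinarith [norm_nonneg a, norm_nonneg (z - a)]
  rw [one_sub_phi ha hz1, le_div_iff₀ (by positivity)]
  have h3 : ‖1 - (starRingEnd ℂ) a * z‖ ^ 2 ≤ (5 / 2 * (1 - ‖a‖)) ^ 2 := by gcongr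
  have h4 : (1 - ‖a‖) * ((1 - ‖a‖) / 2) ≤ (1 - ‖a‖ ^ 2) * (1 - ‖z‖ ^ 2) := by
    apply mul_le_mul
    · nlinarith [norm_nonneg a]
    · nlinarith [norm_nonneg z]
    · linarith
    · exact (one_sub_sq_pos ha).le
  nlinarith

lemma bloch_est {s : ℝ} (hs : 0 < s) : ∃ c : ℝ≥0∞, c ≠ 0 ∧ c ≠ ⊤ ∧ ∀ (F : ℂ → ℂ) (a : ℂ), HolOn F → ‖a‖ < 1 →
    ‖deriv F a‖ₑ ^ 2 * ENNReal.ofReal ((1 - ‖a‖) ^ 2) * c ≤ JJ s F a := by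
  refine ⟨ENNReal.ofReal (1 / 4 * π * (2/25) ^ s), ?_, ENNReal.ofReal_ne_top, fun F a hF ha => ?_⟩
  · have := Real.pi_pos
    rw [Ne, ENNReal.ofReal_eq_zero, not_le]
    positivity
  have hR : 0 < (1 - ‖a‖) / 2 := by linarith
  have hsub : ball a ((1 - ‖a‖) / 2) ⊆ ball 0 1 := fun z hz => mem_D.2 (phi_near ha hz).1
  have h1 := submean (measurable_dv F) hR ((hF.deriv isOpen_ball).mono hsub) (q := 2) (by norm_num)
  simp only [ENNReal.rpow_two, Complex.volume_ball] at h1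
  rw [JJ_eq]
  calc _ = ‖deriv F a‖ₑ ^ 2 * (ENNReal.ofReal ((1 - ‖a‖) / 2) ^ 2 * NNReal.pi) * ENNReal.ofReal ((2/25) ^ s) := by
        rw [← ENNReal.ofReal_pow hR.le, mul_assoc (‖deriv F a‖ₑ ^ 2), mul_assoc (‖deriv F a‖ₑ ^ 2)]
        refine congrArg (fun x => ‖deriv F a‖ₑ ^ 2 * x) ?_
        rw [show ((NNReal.pi : ℝ≥0) : ℝ≥0∞) = ENNReal.ofReal π by
          rw [ENNReal.ofReal, ← NNReal.coe_real_pi, Real.toNNReal_coe]]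
        have := Real.pi_pos
        rw [← ENNReal.ofReal_mul (by positivity), ← ENNReal.ofReal_mul (by positivity),
          ← ENNReal.ofReal_mul (by positivity)]
        congr 1; ring
    _ ≤ (∫⁻ z in ball a ((1 - ‖a‖) / 2), ‖deriv F z‖ₑ ^ 2) * ENNReal.ofReal ((2/25) ^ s) := mul_le_mul_left h1 _
    _ = ∫⁻ z in ball a ((1 - ‖a‖) / 2), ‖deriv F z‖ₑ ^ 2 * ENNReal.ofReal ((2/25) ^ s) :=
        (lintegral_mul_const' _ _ ENNReal.ofReal_ne_top).symm
    _ ≤ ∫⁻ z in ball a ((1 - ‖a‖) / 2), ‖deriv F z‖ₑ ^ 2 * ENNReal.ofReal ((1 - ‖phi a z‖ ^ 2) ^ s) := by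
        refine setLIntegral_mono' measurableSet_ball fun z hz => mul_le_mul_right ?_ _
        apply ENNReal.ofReal_le_ofReal
        exact Real.rpow_le_rpow (by norm_num) (phi_near ha hz).2 hs.le
    _ ≤ _ := lintegral_mono_set hsub

lemma rpow_split {p x y : ℝ} (hx : 0 < x) (hy : 0 ≤ y) (hp : 2 < p) :
    x ^ (p - 2) * y ^ p = (x * y) ^ (p - 2) * y ^ 2 := by
  rw [Real.mul_rpow hx.le hy, mul_assoc, ← Real.rpow_two, ← Real.rpow_add_of_nonneg hy (by linarith) (by norm_num)]
  congr 2; ring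

lemma phi_hol {a : ℂ} (ha : ‖a‖ < 1) : HolOn (phi a) := fun z hz =>
  (hasDerivAt_phi ha (mem_D.1 hz)).differentiableAt.differentiableWithinAt

lemma phi_BB {p : ℝ} (hp : 2 < p) {a : ℂ} (ha : ‖a‖ < 1) :
    BB p (phi a) ≤ ENNReal.ofReal (2 ^ (p - 2)) * volume (ball (0:ℂ) 1) := by
  have h1 := lintegral_phi ha (fun _ => 1)
  simp only [lintegral_const, one_mul, mul_one, Measure.restrict_apply, MeasurableSet.univ, univ_inter] at h1
  rw [h1, ← lintegral_const_mul' _ _ ENNReal.ofReal_ne_top]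
  unfold BB
  refine setLIntegral_mono' measurableSet_ball fun z hz => ?_
  have hz := mem_D.1 hz
  have hz1 : 0 < 1 - ‖z‖ := by linarith
  rw [rpow_split hz1 (norm_nonneg _) hp, ← ENNReal.ofReal_mul (by positivity)]
  apply ENNReal.ofReal_le_ofReal
  refine mul_le_mul_of_nonneg_right ?_ (by positivity)
  refine Real.rpow_le_rpow (by positivity) ?_ (by linarith)
  have hd := den_pos ha hz
  rw [norm_deriv_phi ha hz, ← mul_div_assoc, div_le_iff₀ (by positivity)]
  have e1 := one_sub_le_norm (a := a) (z := z) ha.le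
  have e2 := one_sub_le_norm' (a := a) (z := z) hz.le
  have e3 : 1 - ‖a‖ ^ 2 ≤ 2 * ‖1 - (starRingEnd ℂ) a * z‖ := by nlinarith [norm_nonneg a]
  calc _ ≤ ‖1 - (starRingEnd ℂ) a * z‖ * (2 * ‖1 - (starRingEnd ℂ) a * z‖) :=
        mul_le_mul e1 e3 (one_sub_sq_pos ha).le hd.le
    _ = _ := by ring

lemma nec_Hinf {p s : ℝ} (hp : 2 < p) (hs : 0 < s) {g : ℂ → ℂ} (hg : HolOn g)
    (H : MapsInto (Mg g) (Besov p) (Qs s)) : ∃ B : ℝ, 0 ≤ B ∧ ∀ z, ‖z‖ < 1 → ‖g z‖ ≤ B := by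
  obtain ⟨c, hc0, hct, hc⟩ := bloch_est hs
  obtain ⟨M, hM, hU⟩ := UB (ι := {a : ℂ // ‖a‖ < 1}) hp hg H (h := fun a => phi a.1)
    (fun a => phi_hol a.2) (fun r hr => ⟨1, fun a z hz => (phi_lt a.2 (hz.trans hr)).le⟩)
    (K := ENNReal.ofReal (2 ^ (p - 2)) * volume (ball (0:ℂ) 1))
    (ENNReal.mul_ne_top ENNReal.ofReal_ne_top measure_ball_lt_top.ne) (fun a => phi_BB hp a.2)
  have key : ∀ a, ‖a‖ < 1 → ‖g a‖ₑ ^ 2 ≤ 4 * (M / c) := by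
    intro a ha
    have h1 := (hc _ a (hg.mul (phi_hol ha)) ha).trans (hU ⟨a, ha⟩ a ha)
    have hd : deriv (Mg g (phi a)) a = g a * deriv (phi a) a := by
      have := ((hg.at ha).hasDerivAt.mul ((phi_hol ha).at ha).hasDerivAt).deriv
      rw [phi_self, mul_zero, zero_add] at this
      exact this
    have h2 := (ENNReal.le_div_iff_mul_le (Or.inl hc0) (Or.inl hct)).2 h1
    have h3 : ‖deriv (fun y => g y * phi a y) a‖ₑ ^ 2 * ENNReal.ofReal ((1 - ‖a‖) ^ 2) =
      ‖g a‖ₑ ^ 2 * ENNReal.ofReal (((1 + ‖a‖)⁻¹) ^ 2) := by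
      change ‖deriv (Mg g (phi a)) a‖ₑ ^ 2 * _ = _
      rw [hd, enorm_mul, mul_pow, mul_assoc]
      congr 1
      rw [← ofReal_norm, ← ENNReal.ofReal_pow (norm_nonneg _), ← ENNReal.ofReal_mul (by positivity), ← mul_pow]
      congr 2
      rw [norm_deriv_phi ha ha]
      have e : ‖1 - (starRingEnd ℂ) a * a‖ = 1 - ‖a‖ ^ 2 := by
        have : 1 - (starRingEnd ℂ) a * a = ((1 - ‖a‖ ^ 2 : ℝ) : ℂ) := by
          rw [mul_comm, Complex.mul_conj, Complex.normSq_eq_norm_sq]; push_cast; ring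
        rw [this, Complex.norm_real, Real.norm_of_nonneg (one_sub_sq_pos ha).le]
      rw [e]
      have p1 : 1 - ‖a‖ ≠ 0 := by linarith
      have p2 : 1 + ‖a‖ ≠ 0 := by positivity
      rw [show 1 - ‖a‖ ^ 2 = (1 - ‖a‖) * (1 + ‖a‖) by ring]
      field_simp
    have h4 : ‖g a‖ₑ ^ 2 * ENNReal.ofReal (((1 + ‖a‖)⁻¹) ^ 2) ≤ M / c := by
      rw [← h3]; exact h2
    calc ‖g a‖ₑ ^ 2 = ‖g a‖ₑ ^ 2 * 1 := (mul_one _).symm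
      _ ≤ ‖g a‖ₑ ^ 2 * (4 * ENNReal.ofReal (((1 + ‖a‖)⁻¹) ^ 2)) := by
          refine mul_le_mul_right ?_ _
          rw [← ENNReal.ofReal_one, ← ENNReal.ofReal_ofNat 4, ← ENNReal.ofReal_mul (by norm_num)]
          apply ENNReal.ofReal_le_ofReal
          have p2 : 0 < 1 + ‖a‖ := by positivity
          rw [inv_pow, ← div_eq_mul_inv, one_le_div (by positivity)]
          nlinarith [norm_nonneg a]
      _ = 4 * (‖g a‖ₑ ^ 2 * ENNReal.ofReal (((1 + ‖a‖)⁻¹) ^ 2)) := by ring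
      _ ≤ _ := mul_le_mul_right h4 _
  have hfin : 4 * (M / c) ≠ ⊤ := ENNReal.mul_ne_top (by simp) (ENNReal.div_ne_top hM hc0)
  refine ⟨√((4 * (M / c)).toReal), Real.sqrt_nonneg _, fun z hz => ?_⟩
  apply Real.le_sqrt_of_sq_le
  have := ENNReal.toReal_mono hfin (key z hz)
  rwa [ENNReal.toReal_pow, toReal_enorm] at this

/-- logarithmic weight. -/
noncomputable def LL (a : ℂ) : ℝ := Real.log (2 / (1 - ‖a‖))

lemma LL_ge {a : ℂ} (ha : ‖a‖ < 1) : Real.log 2 ≤ LL a := by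
  unfold LL
  apply Real.log_le_log (by norm_num)
  rw [le_div_iff₀ (by linarith)]
  nlinarith [norm_nonneg a]

lemma log2_pos : 0 < Real.log 2 := Real.log_pos (by norm_num)

lemma LL_pos {a : ℂ} (ha : ‖a‖ < 1) : 0 < LL a := lt_of_lt_of_le log2_pos (LL_ge ha)

/-- logarithmic test functions. -/
noncomputable def ff (p : ℝ) (a z : ℂ) : ℂ :=
  ((LL a ^ (-1 / p) : ℝ) : ℂ) * ((Real.log 2 : ℂ) - Complex.log (1 - (starRingEnd ℂ) a * z))

lemma den_slit {a z : ℂ} (ha : ‖a‖ < 1) (hz : ‖z‖ < 1) : 1 - (starRingEnd ℂ) a * z ∈ Complex.slitPlane := by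
  refine Complex.mem_slitPlane_iff.2 (Or.inl ?_)
  have h1 : ‖(starRingEnd ℂ) a * z‖ < 1 := by
    rw [norm_mul, RCLike.norm_conj]
    nlinarith [norm_nonneg a, norm_nonneg z]
  have := (Complex.re_le_norm _).trans_lt h1
  rw [Complex.sub_re, Complex.one_re]
  linarith

lemma hasDerivAt_clog {a z : ℂ} (ha : ‖a‖ < 1) (hz : ‖z‖ < 1) :
    HasDerivAt (fun z => Complex.log (1 - (starRingEnd ℂ) a * z))
      (-((starRingEnd ℂ) a) / (1 - (starRingEnd ℂ) a * z)) z := by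
  have h2 : HasDerivAt (fun z => 1 - (starRingEnd ℂ) a * z) (-((starRingEnd ℂ) a)) z := by
    simpa using ((hasDerivAt_id z).const_mul ((starRingEnd ℂ) a)).const_sub 1
  exact h2.clog (den_slit ha hz)

lemma hasDerivAt_ff (p : ℝ) {a z : ℂ} (ha : ‖a‖ < 1) (hz : ‖z‖ < 1) :
    HasDerivAt (ff p a) (((LL a ^ (-1 / p) : ℝ) : ℂ) * ((starRingEnd ℂ) a / (1 - (starRingEnd ℂ) a * z))) z := by
  have := ((hasDerivAt_clog ha hz).const_sub (Real.log 2 : ℂ)).const_mul ((LL a ^ (-1 / p) : ℝ) : ℂ)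
  rw [neg_div (1 - (starRingEnd ℂ) a * z) ((starRingEnd ℂ) a), neg_neg] at this
  exact this

lemma den_le {a z : ℂ} (ha : ‖a‖ < 1) (hz : ‖z‖ < 1) : ‖1 - (starRingEnd ℂ) a * z‖ ≤ 2 := by
  refine (norm_sub_le _ _).trans ?_
  rw [norm_mul, RCLike.norm_conj, norm_one]
  nlinarith [norm_nonneg a, norm_nonneg z]

lemma vol_rect (x y : ℝ) (u v : ℝ) :
    volume {w : ℂ | w.re ∈ Icc x y ∧ w.im ∈ Icc u v} = ENNReal.ofReal (y - x) * ENNReal.ofReal (v - u) := by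
  have h := Complex.volume_preserving_equiv_real_prod.measure_preimage
    (s := Icc x y ×ˢ Icc u v) (measurableSet_Icc.prod measurableSet_Icc).nullMeasurableSet
  rw [Measure.volume_eq_prod, Measure.prod_prod, Real.volume_Icc, Real.volume_Icc] at h
  exact h

lemma log_int {a : ℂ} (ha : ‖a‖ < 1) :
    ∫⁻ z in ball (0:ℂ) 1, ENNReal.ofReal (‖-((starRingEnd ℂ) a) / (1 - (starRingEnd ℂ) a * z)‖ ^ 2) ≤
      ENNReal.ofReal (LL a) * ENNReal.ofReal (2 * π) := by
  by_cases h0 : a = 0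
  · simp [h0]
  have h1 := lintegral_image_hol (U := ball (0:ℂ) 1) isOpen_ball
    (fun z hz => hasDerivAt_clog ha (mem_D.1 hz)) ?_ (fun _ => 1)
  · simp only [lintegral_const, one_mul, mul_one, Measure.restrict_apply, MeasurableSet.univ, univ_inter] at h1
    rw [← h1]
    have hsub : (fun z => Complex.log (1 - (starRingEnd ℂ) a * z)) '' ball (0:ℂ) 1 ⊆
        {w : ℂ | w.re ∈ Icc (Real.log (1 - ‖a‖)) (Real.log 2) ∧ w.im ∈ Icc (-π) π} := by
      rintro _ ⟨z, hz, rfl⟩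
      have hz := mem_D.1 hz
      refine ⟨⟨?_, ?_⟩, ⟨?_, ?_⟩⟩
      · rw [Complex.log_re]
        exact Real.log_le_log (by linarith) (one_sub_le_norm' hz.le)
      · rw [Complex.log_re]
        exact Real.log_le_log (den_pos ha hz) (den_le ha hz)
      · exact (Complex.neg_pi_lt_log_im _).le
      · exact Complex.log_im_le_pi _
    refine (measure_mono hsub).trans ?_
    rw [vol_rect]
    apply le_of_eq
    unfold LL
    rw [Real.log_div (by norm_num) (by linarith)]
    congr 2; ring
  · intro z hz w hw e
    have e2 := congrArg Complex.exp e
    simp only at e2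
    rw [Complex.exp_log (den_ne ha (mem_D.1 hz)), Complex.exp_log (den_ne ha (mem_D.1 hw))] at e2
    have e3 : (starRingEnd ℂ) a * z = (starRingEnd ℂ) a * w := by linear_combination -e2
    exact mul_left_cancel₀ (by simpa using h0) e3

lemma ff_hol (p : ℝ) {a : ℂ} (ha : ‖a‖ < 1) : HolOn (ff p a) := fun z hz =>
  (hasDerivAt_ff p ha (mem_D.1 hz)).differentiableAt.differentiableWithinAt

lemma ff_BB {p : ℝ} (hp : 2 < p) {a : ℂ} (ha : ‖a‖ < 1) : BB p (ff p a) ≤ ENNReal.ofReal (2 * π) := by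
  have hL := LL_pos ha
  have hp0 : 0 < p := by linarith
  have h1 : BB p (ff p a) ≤ ∫⁻ z in ball (0:ℂ) 1, ENNReal.ofReal ((LL a)⁻¹) *
      ENNReal.ofReal (‖-((starRingEnd ℂ) a) / (1 - (starRingEnd ℂ) a * z)‖ ^ 2) := by
    unfold BB
    refine setLIntegral_mono' measurableSet_ball fun z hz => ?_
    have hz := mem_D.1 hz
    have hz1 : 0 < 1 - ‖z‖ := by linarith
    have hd := den_pos ha hz
    rw [← ENNReal.ofReal_mul (by positivity)]
    apply ENNReal.ofReal_le_ofReal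
    rw [(hasDerivAt_ff p ha hz).deriv, norm_mul, Complex.norm_real, Real.norm_of_nonneg (by positivity),
      neg_div (1 - (starRingEnd ℂ) a * z) ((starRingEnd ℂ) a), norm_neg]
    set x := ‖(starRingEnd ℂ) a / (1 - (starRingEnd ℂ) a * z)‖ with hx
    have hx0 : 0 ≤ x := norm_nonneg _
    rw [Real.mul_rpow (by positivity) hx0, ← Real.rpow_mul hL.le, div_mul_cancel₀ _ hp0.ne', Real.rpow_neg_one,
      mul_left_comm, rpow_split hz1 hx0 hp]
    refine mul_le_mul_of_nonneg_left ?_ (by positivity)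
    refine mul_le_of_le_one_left (by positivity) ?_
    refine Real.rpow_le_one (by positivity) ?_ (by linarith)
    rw [hx, norm_div, RCLike.norm_conj, ← mul_div_assoc, div_le_one hd]
    have := one_sub_le_norm (a := a) (z := z) ha.le
    nlinarith [norm_nonneg a]
  refine h1.trans ?_
  rw [lintegral_const_mul' _ _ ENNReal.ofReal_ne_top]
  refine (mul_le_mul_right (log_int ha) _).trans (le_of_eq ?_)
  rw [← mul_assoc, ← ENNReal.ofReal_mul (by positivity), inv_mul_cancel₀ hL.ne', ENNReal.ofReal_one, one_mul]

lemma ff_loc {p : ℝ} (hp : 2 < p) (r : ℝ) (hr : r < 1) :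
    ∃ C : ℝ, ∀ (a : {a : ℂ // ‖a‖ < 1}) z, ‖z‖ < r → ‖ff p a.1 z‖ ≤ C := by
  refine ⟨Real.log 2 ^ (-1 / p) * (Real.log 2 + ((Real.log 2 - Real.log (1 - r)) + π)), ?_⟩
  rintro ⟨a, ha⟩ z hzr
  have hz := hzr.trans hr
  have hr0 : 0 < r := (norm_nonneg z).trans_lt hzr
  have hl2 := log2_pos
  have hd := den_pos ha hz
  unfold ff
  rw [norm_mul, Complex.norm_real, Real.norm_of_nonneg (by have := LL_pos ha; positivity)]
  refine mul_le_mul ?_ ?_ (norm_nonneg _) (by positivity)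
  · refine Real.rpow_le_rpow_of_nonpos hl2 (LL_ge ha) ?_
    apply div_nonpos_of_nonpos_of_nonneg <;> linarith
  · refine (norm_sub_le _ _).trans ?_
    rw [Complex.norm_real, Real.norm_of_nonneg hl2.le]
    refine add_le_add le_rfl ((Complex.norm_le_abs_re_add_abs_im _).trans (add_le_add ?_ ?_))
    · rw [Complex.log_re]
      have e1 : Real.log (1 - r) ≤ Real.log ‖1 - (starRingEnd ℂ) a * z‖ := by
        refine Real.log_le_log (by linarith) (le_trans ?_ (one_sub_le_norm ha.le))
        linarith
      have e2 : Real.log ‖1 - (starRingEnd ℂ) a * z‖ ≤ Real.log 2 := Real.log_le_log hd (den_le ha hz)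
      have e3 : Real.log (1 - r) ≤ 0 := Real.log_nonpos (by linarith) (by linarith)
      rw [abs_le]
      constructor <;> linarith
    · rw [Complex.log_im]
      exact Complex.abs_arg_le_pi _

lemma ff_self {p p' : ℝ} (hpp' : 1 / p + 1 / p' = 1) {a : ℂ} (ha : ‖a‖ < 1) :
    ENNReal.ofReal (LL a ^ (2 * (1 / p'))) ≤ 4 * ‖ff p a a‖ₑ ^ 2 := by
  have hL := LL_pos ha
  have ha2 := one_sub_sq_pos ha
  have h1 : LL a / 2 ≤ Real.log 2 - Real.log (1 - ‖a‖ ^ 2) := by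
    have e1 : Real.log (1 - ‖a‖ ^ 2) ≤ 0 := Real.log_nonpos ha2.le (by nlinarith [norm_nonneg a])
    have e2 : Real.log (1 - ‖a‖ ^ 2) ≤ Real.log 2 + Real.log (1 - ‖a‖) := by
      rw [← Real.log_mul (by norm_num) (by linarith)]
      exact Real.log_le_log ha2 (by nlinarith [norm_nonneg a])
    have e3 : LL a = Real.log 2 - Real.log (1 - ‖a‖) := by
      unfold LL
      rw [Real.log_div (by norm_num) (by linarith)]
    linarith
  have h2 : ‖ff p a a‖ = LL a ^ (-1 / p) * (Real.log 2 - Real.log (1 - ‖a‖ ^ 2)) := by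
    unfold ff
    have : 1 - (starRingEnd ℂ) a * a = ((1 - ‖a‖ ^ 2 : ℝ) : ℂ) := by
      rw [mul_comm, Complex.mul_conj, Complex.normSq_eq_norm_sq]; push_cast; ring
    rw [this, ← Complex.ofReal_log ha2.le, ← Complex.ofReal_sub, ← Complex.ofReal_mul, Complex.norm_real,
      Real.norm_of_nonneg]
    have : 0 ≤ Real.log 2 - Real.log (1 - ‖a‖ ^ 2) := le_trans (by positivity) h1
    positivity
  have h3 : LL a ^ (1 / p') / 2 ≤ ‖ff p a a‖ := by
    rw [h2]
    calc _ = LL a ^ (-1 / p) * (LL a / 2) := by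
          rw [← mul_div_assoc, ← Real.rpow_add_one hL.ne']
          congr 2
          rw [neg_div]; linarith
      _ ≤ _ := by gcongr
  rw [← ofReal_norm, ← ENNReal.ofReal_pow (norm_nonneg _), ← ENNReal.ofReal_ofNat 4, ← ENNReal.ofReal_mul (by norm_num)]
  apply ENNReal.ofReal_le_ofReal
  calc _ = 4 * (LL a ^ (1 / p') / 2) ^ 2 := by
        rw [mul_comm 2, Real.rpow_mul hL.le, Real.rpow_two]; ring
    _ ≤ _ := by gcongr

lemma int3 {s : ℝ} (X Z : ℂ → ℝ≥0∞) (y u : ℂ → ℂ) (A B : ℝ≥0∞) (hA : A ≠ ⊤) (hB : B ≠ ⊤) (a : ℂ)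
    (h : ∀ z, ‖z‖ < 1 → X z ≤ A * ‖deriv y z‖ₑ ^ 2 + B * ‖deriv u z‖ₑ ^ 2 + 2 * Z z) :
    ∫⁻ z in ball (0:ℂ) 1, X z * ENNReal.ofReal ((1 - ‖phi a z‖ ^ 2) ^ s) ≤ A * JJ s y a + B * JJ s u a +
      2 * ∫⁻ z in ball (0:ℂ) 1, Z z * ENNReal.ofReal ((1 - ‖phi a z‖ ^ 2) ^ s) := by
  have m1 := measurable_dv y
  have m2 := measurable_dv u
  have m3 := measurable_phi a
  rw [JJ_eq, JJ_eq, ← lintegral_const_mul' _ _ hA, ← lintegral_const_mul' _ _ hB,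
    ← lintegral_const_mul' 2 _ (by simp), ← lintegral_add_left (by fun_prop), ← lintegral_add_left (by fun_prop)]
  refine setLIntegral_mono' measurableSet_ball fun z hz => ?_
  refine (mul_le_mul_left (h z (mem_D.1 hz)) _).trans (le_of_eq ?_)
  ring

lemma sq3 (x y v : ℂ) : ‖x + y + v‖ₑ ^ 2 ≤ 4 * ‖x‖ₑ ^ 2 + 4 * ‖y‖ₑ ^ 2 + 2 * ‖v‖ₑ ^ 2 := by
  refine (enorm_add_sq _ _).trans ?_
  calc _ ≤ 2 * (2 * ‖x‖ₑ ^ 2 + 2 * ‖y‖ₑ ^ 2) + 2 * ‖v‖ₑ ^ 2 := by gcongr; exact enorm_add_sq _ _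
    _ = _ := by ring

lemma deriv_Mg {f g : ℂ → ℂ} (hf : HolOn f) (hg : HolOn g) {z : ℂ} (hz : ‖z‖ < 1) :
    deriv (Mg g f) z = deriv g z * f z + g z * deriv f z :=
  ((hg.at hz).hasDerivAt.mul (hf.at hz).hasDerivAt).deriv

lemma enorm_bd {B : ℝ} {x y : ℂ} (h : ‖x‖ ≤ B) : ‖x * y‖ₑ ^ 2 ≤ ENNReal.ofReal B ^ 2 * ‖y‖ₑ ^ 2 := by
  rw [enorm_mul, mul_pow]
  refine mul_le_mul_left ?_ _
  rw [← ofReal_norm]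
  gcongr

lemma split1 {s : ℝ} {f g : ℂ → ℂ} (hf : HolOn f) (hg : HolOn g) {B : ℝ} (hB : ∀ z, ‖z‖ < 1 → ‖g z‖ ≤ B) (a : ℂ) :
    ‖f a‖ₑ ^ 2 * JJ s g a ≤ 4 * JJ s (Mg g f) a + 4 * ENNReal.ofReal B ^ 2 * JJ s f a +
      2 * ∫⁻ z in ball (0:ℂ) 1, ‖f z - f a‖ₑ ^ 2 * ENNReal.ofReal (‖deriv g z‖ ^ 2 * (1 - ‖phi a z‖ ^ 2) ^ s) := by
  have h := int3 (s := s) (fun z => ‖f a‖ₑ ^ 2 * ‖deriv g z‖ₑ ^ 2) (fun z => ‖f z - f a‖ₑ ^ 2 * ‖deriv g z‖ₑ ^ 2)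
    (Mg g f) f 4 (4 * ENNReal.ofReal B ^ 2) (by simp) (ENNReal.mul_ne_top (by simp) (by simp)) a ?_
  · simp only [mul_assoc] at h
    rw [lintegral_const_mul' _ _ (by simp), ← JJ_eq] at h
    simp only [ofReal_split, mul_assoc]
    exact h
  · intro z hz
    have e : f a * deriv g z = deriv (Mg g f) z + (g z * (-deriv f z)) + ((f z - f a) * (-deriv g z)) := by
      rw [deriv_Mg hf hg hz]; ring
    rw [← mul_pow, ← enorm_mul, e]
    refine (sq3 _ _ _).trans ?_
    refine add_le_add (add_le_add le_rfl ?_) ?_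
    · rw [mul_assoc]
      refine mul_le_mul_right ?_ _
      have := enorm_bd (y := -deriv f z) (hB z hz)
      rwa [enorm_neg] at this
    · rw [enorm_mul, enorm_neg, mul_pow]

lemma split2 {s : ℝ} {f g : ℂ → ℂ} (hf : HolOn f) (hg : HolOn g) {B : ℝ} (hB : ∀ z, ‖z‖ < 1 → ‖g z‖ ≤ B) (a : ℂ) :
    JJ s (Mg g f) a ≤ 4 * ‖f a‖ₑ ^ 2 * JJ s g a + 4 * ENNReal.ofReal B ^ 2 * JJ s f a +
      2 * ∫⁻ z in ball (0:ℂ) 1, ‖f z - f a‖ₑ ^ 2 * ENNReal.ofReal (‖deriv g z‖ ^ 2 * (1 - ‖phi a z‖ ^ 2) ^ s) := by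
  have h := int3 (s := s) (fun z => ‖deriv (Mg g f) z‖ₑ ^ 2) (fun z => ‖f z - f a‖ₑ ^ 2 * ‖deriv g z‖ₑ ^ 2)
    g f (4 * ‖f a‖ₑ ^ 2) (4 * ENNReal.ofReal B ^ 2) (ENNReal.mul_ne_top (by simp) (by simp))
    (ENNReal.mul_ne_top (by simp) (by simp)) a ?_
  · rw [← JJ_eq] at h
    simp only [ofReal_split, mul_assoc] at h ⊢
    exact h
  · intro z hz
    have e : deriv (Mg g f) z = f a * deriv g z + (g z * deriv f z) + ((f z - f a) * deriv g z) := by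
      rw [deriv_Mg hf hg hz]; ring
    rw [e]
    refine (sq3 _ _ _).trans ?_
    refine add_le_add (add_le_add ?_ ?_) ?_
    · rw [enorm_mul, mul_pow, mul_assoc]
    · rw [mul_assoc]
      exact mul_le_mul_right (enorm_bd (hB z hz)) _
    · rw [enorm_mul, mul_pow]

lemma one_mem {p : ℝ} (hp : 2 < p) : (fun _ => (1:ℂ)) ∈ Besov p := by
  rw [Besov_iff]
  refine ⟨differentiableOn_const _, ?_⟩
  unfold BB
  simp [Real.zero_rpow (show p ≠ 0 by linarith)]

lemma necessity {p p' s : ℝ} (hp : 2 < p) (hpp' : 1 / p + 1 / p' = 1)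
    (hs0 : 1 - 2 / p < s) {g : ℂ → ℂ} (hg : HolOn g) (H : MapsInto (Mg g) (Besov p) (Qs s)) :
    g ∈ QsLog s (1 / p') ∩ Hinf := by
  have hp0 : 0 < 1 - 2 / p := by
    rw [sub_pos, div_lt_one (by linarith)]; exact hp
  obtain ⟨t, ht1, ht2⟩ := exists_between hs0
  obtain ⟨B, hB0, hB⟩ := nec_Hinf hp (hp0.trans hs0) hg H
  refine ⟨QsLog_iff.2 ⟨hg, ?_⟩, hg, B, fun z hz => hB z (mem_D.1 hz)⟩
  obtain ⟨M0, hM0, hgM⟩ : ∃ M : ℝ≥0∞, M ≠ ⊤ ∧ ∀ a, ‖a‖ < 1 → JJ s g a ≤ M := by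
    have h1 := (Qs_iff.1 (H _ (one_mem hp))).2
    have e : Mg g (fun _ => (1:ℂ)) = g := by ext z; simp [Mg]
    rwa [e] at h1
  obtain ⟨M1, hM1, hU⟩ := UB (ι := {a : ℂ // ‖a‖ < 1}) hp hg H (h := fun a => ff p a.1)
    (fun a => ff_hol p a.2) (fun r hr => ff_loc hp r hr) ENNReal.ofReal_ne_top (fun a => ff_BB hp a.2)
  obtain ⟨Cs, hCs, hes⟩ := emb hp hs0
  obtain ⟨Ct, hCt, het⟩ := emb hp ht1
  obtain ⟨Cc, hCc, hcar⟩ := carleson (hp0.trans ht1) ht2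
  have hP : ENNReal.ofReal (2 * π) ^ (2 / p) ≠ ⊤ :=
    ENNReal.rpow_ne_top_of_nonneg (by positivity) ENNReal.ofReal_ne_top
  set P := ENNReal.ofReal (2 * π) ^ (2 / p) with hPdef
  have hBB : ∀ a, ‖a‖ < 1 → BB p (ff p a) ^ (2 / p) ≤ P := fun a ha =>
    ENNReal.rpow_le_rpow (ff_BB hp ha) (by positivity)
  refine ⟨4 * (4 * M1 + 4 * ENNReal.ofReal B ^ 2 * (Cs * P) + 2 * (Cc * M0 * (Ct * P))), ?_, fun a ha => ?_⟩
  · have hB2 : ENNReal.ofReal B ^ 2 ≠ ⊤ := by simp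
    have h4 : (4 : ℝ≥0∞) ≠ ⊤ := by simp
    have h2 : (2 : ℝ≥0∞) ≠ ⊤ := by simp
    exact ENNReal.mul_ne_top h4 (ENNReal.add_ne_top.2 ⟨ENNReal.add_ne_top.2 ⟨ENNReal.mul_ne_top h4 hM1,
      ENNReal.mul_ne_top (ENNReal.mul_ne_top h4 hB2) (ENNReal.mul_ne_top hCs hP)⟩,
      ENNReal.mul_ne_top h2 (ENNReal.mul_ne_top (ENNReal.mul_ne_top hCc hM0) (ENNReal.mul_ne_top hCt hP))⟩)
  · have h1 := split1 (s := s) (ff_hol p ha) hg hB a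
    have h2 := hU ⟨a, ha⟩ a ha
    have h3 : JJ s (ff p a) a ≤ Cs * P := (hes _ a ha).trans (mul_le_mul_right (hBB a ha) _)
    have h4 : JJ t (ff p a) a ≤ Ct * P := (het _ a ha).trans (mul_le_mul_right (hBB a ha) _)
    have h5 := (hcar (ff p a) g M0 (ff_hol p ha) hg hgM a ha).trans (mul_le_mul_right h4 _)
    calc _ ≤ 4 * ‖ff p a a‖ₑ ^ 2 * JJ s g a := mul_le_mul_left (ff_self hpp' ha) _
      _ = 4 * (‖ff p a a‖ₑ ^ 2 * JJ s g a) := mul_assoc _ _ _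
      _ ≤ _ := by
        refine mul_le_mul_right (h1.trans ?_) _
        exact add_le_add (add_le_add (mul_le_mul_right h2 _) (mul_le_mul_right h3 _)) (mul_le_mul_right h5 _)

lemma sufficiency {p p' s : ℝ} (hp : 2 < p) (hpp' : 1 / p + 1 / p' = 1)
    (hs0 : 1 - 2 / p < s) {g : ℂ → ℂ} (hg : HolOn g) (H : g ∈ QsLog s (1 / p') ∩ Hinf) :
    MapsInto (Mg g) (Besov p) (Qs s) := by
  have hp0 : 0 < 1 - 2 / p := by
    rw [sub_pos, div_lt_one (by linarith)]; exact hp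
  have hpp : 0 < p := by linarith
  have hq : 2 * (1 / p') = (p - 1) * (2 / p) := by
    have : 1 / p' = 1 - 1 / p := by linarith
    rw [this]; field_simp
  have hq0 : 0 ≤ 2 * (1 / p') := by
    rw [hq]
    have : 0 < p - 1 := by linarith
    positivity
  obtain ⟨t, ht1, ht2⟩ := exists_between hs0
  obtain ⟨H1, -, B, hB'⟩ := H
  have hB : ∀ z, ‖z‖ < 1 → ‖g z‖ ≤ B := fun z hz => hB' z (mem_D.2 hz)
  obtain ⟨-, M, hM, hL⟩ := QsLog_iff.1 H1
  obtain ⟨Cs, hCs, hes⟩ := emb hp hs0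
  obtain ⟨Ct, hCt, het⟩ := emb hp ht1
  obtain ⟨Cc, hCc, hcar⟩ := carleson (hp0.trans ht1) ht2
  set l := ENNReal.ofReal (Real.log 2 ^ (2 * (1 / p'))) with hl
  have hl0 : l ≠ 0 := by
    have := log2_pos
    rw [hl, Ne, ENNReal.ofReal_eq_zero, not_le]
    positivity
  have hM0 : M / l ≠ ⊤ := ENNReal.div_ne_top hM hl0
  have hgM : ∀ a, ‖a‖ < 1 → JJ s g a ≤ M / l := by
    intro a ha
    rw [ENNReal.le_div_iff_mul_le (Or.inl hl0) (Or.inl ENNReal.ofReal_ne_top), mul_comm]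
    refine le_trans (mul_le_mul_left ?_ _) (hL a ha)
    apply ENNReal.ofReal_le_ofReal
    exact Real.rpow_le_rpow log2_pos.le (LL_ge ha) hq0
  intro f hfB
  obtain ⟨hf, hBf⟩ := Besov_iff.1 hfB
  refine Qs_iff.2 ⟨hg.mul hf, ?_⟩
  have hp2 : 0 ≤ 2 / p := by positivity
  have hP : BB p f ^ (2 / p) ≠ ⊤ := ENNReal.rpow_ne_top_of_nonneg hp2 hBf
  set P := BB p f ^ (2 / p) with hPdef
  have hQ : (KK (p - 2) * BB p f) ^ (2 / p) ≠ ⊤ :=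
    ENNReal.rpow_ne_top_of_nonneg hp2 (ENNReal.mul_ne_top (KK_ne_top _) hBf)
  set Q := (KK (p - 2) * BB p f) ^ (2 / p) with hQdef
  refine ⟨4 * (2 * (Q * M) + 2 * (‖f 0‖ₑ ^ 2 * (M / l))) + 4 * ENNReal.ofReal B ^ 2 * (Cs * P) +
    2 * (Cc * (M / l) * (Ct * P)), ?_, fun a ha => ?_⟩
  · have hB2 : ENNReal.ofReal B ^ 2 ≠ ⊤ := by simp
    have h4 : (4 : ℝ≥0∞) ≠ ⊤ := by simp
    have h2 : (2 : ℝ≥0∞) ≠ ⊤ := by simp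
    have hf0 : ‖f 0‖ₑ ^ 2 ≠ ⊤ := by simp
    exact ENNReal.add_ne_top.2 ⟨ENNReal.add_ne_top.2 ⟨ENNReal.mul_ne_top h4 (ENNReal.add_ne_top.2
      ⟨ENNReal.mul_ne_top h2 (ENNReal.mul_ne_top hQ hM), ENNReal.mul_ne_top h2 (ENNReal.mul_ne_top hf0 hM0)⟩),
      ENNReal.mul_ne_top (ENNReal.mul_ne_top h4 hB2) (ENNReal.mul_ne_top hCs hP)⟩,
      ENNReal.mul_ne_top h2 (ENNReal.mul_ne_top (ENNReal.mul_ne_top hCc hM0) (ENNReal.mul_ne_top hCt hP))⟩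
  · have h1 := split2 (s := s) hf hg hB a
    have h3 : JJ s f a ≤ Cs * P := hes _ a ha
    have h4 : JJ t f a ≤ Ct * P := het _ a ha
    have h5 := (hcar f g (M / l) hf hg hgM a ha).trans (mul_le_mul_right h4 _)
    have h6 : ‖f a - f 0‖ₑ ^ 2 ≤ Q * ENNReal.ofReal ((Real.log (2 / (1 - ‖a‖))) ^ (2 * (1 / p'))) := by
      have := ENNReal.rpow_le_rpow (besov_growth hp hf ha) hp2
      rw [ENNReal.mul_rpow_of_nonneg _ _ hp2, ← ENNReal.rpow_mul, ← ENNReal.rpow_mul,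
        mul_div_cancel₀ _ hpp.ne', ENNReal.rpow_two, ← hq,
        ENNReal.ofReal_rpow_of_nonneg (show 0 ≤ Real.log (2 / (1 - ‖a‖)) from (LL_pos ha).le) hq0] at this
      exact this
    have h7 : ‖f a‖ₑ ^ 2 * JJ s g a ≤ 2 * (Q * M) + 2 * (‖f 0‖ₑ ^ 2 * (M / l)) := by
      calc _ = ‖(f a - f 0) + f 0‖ₑ ^ 2 * JJ s g a := by rw [sub_add_cancel]
        _ ≤ (2 * ‖f a - f 0‖ₑ ^ 2 + 2 * ‖f 0‖ₑ ^ 2) * JJ s g a := mul_le_mul_left (enorm_add_sq _ _) _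
        _ = 2 * (‖f a - f 0‖ₑ ^ 2 * JJ s g a) + 2 * (‖f 0‖ₑ ^ 2 * JJ s g a) := by ring
        _ ≤ _ := by
          refine add_le_add (mul_le_mul_right ?_ _) (mul_le_mul_right (mul_le_mul_right (hgM a ha) _) _)
          refine (mul_le_mul_left h6 _).trans ?_
          rw [mul_assoc]
          exact mul_le_mul_right (hL a ha) _
    refine h1.trans ?_
    rw [mul_assoc]
    exact add_le_add (add_le_add (mul_le_mul_right h7 _) (mul_le_mul_right h3 _)) (mul_le_mul_right h5 _)

/-- For `2 < p < ∞`, `1 - 2/p < s ≤ 1`, `p'` the conjugate exponent of `p`,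
and `g` holomorphic on the unit disc: `M_g` maps `Bᵖ` into `Q_s` iff
`g ∈ Q_{s,log,1/p'} ∩ H^∞`. -/
theorem stmt12 (p p' s : ℝ) (hp : 2 < p) (hpp' : 1 / p + 1 / p' = 1)
    (hs0 : 1 - 2 / p < s) (hs1 : s ≤ 1) (g : ℂ → ℂ) (hg : HolOn g) :
    MapsInto (Mg g) (Besov p) (Qs s) ↔ g ∈ QsLog s (1 / p') ∩ Hinf := by
  exact ⟨fun H => necessity hp hpp' hs0 hg H, fun H => sufficiency hp hpp' hs0 hg H⟩
end

section
/- Suppose 2 < p < ∞ and 0 < s ≤ 1 − 2/p, and let g be holomorphic on the unit disc D. Then: (i) the operator I_g maps the Besov space B^p into Q_s if and only if g is identically zero; (ii) the multiplication operator M_g maps B^p into Q_s if and only if g is identically zero. -/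
open MeasureTheory Metric Complex Real Filter Set

noncomputable section

/-- Unnormalized Taylor coefficient as a circle integral. -/
def cf (r : ℝ) (m : ℕ) (h : ℂ → ℂ) : ℂ := ∮ z in C(0, r), (z ^ (m+1))⁻¹ * h z

lemma circ_ball {r θ : ℝ} (h0 : 0 < r) (h1 : r < 1) : circleMap 0 r θ ∈ ball (0:ℂ) 1 := by
  simp [abs_of_pos h0, h1]

lemma cf_le {h : ℂ → ℂ} (hh : HolOn h) {r R : ℝ} (h0 : 0 < r) (hrR : r ≤ R) (h1 : R < 1) (m : ℕ) :
    cf R m h = cf r m h := by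
  have key : ∀ z ∈ closedBall (0:ℂ) R \ ball 0 r,
      DifferentiableAt ℂ (fun z => (z ^ (m+1))⁻¹ * h z) z := by
    intro z hz
    have hz1 : ‖z‖ ≤ R := by simpa using hz.1
    have hz2 : r ≤ ‖z‖ := by simpa using hz.2
    have hz0 : z ≠ 0 := by
      rintro rfl
      simp at hz2; linarith
    have : DifferentiableAt ℂ h z := hh.differentiableAt (isOpen_ball.mem_nhds (by simp; linarith))
    exact ((differentiableAt_id.pow _).inv (pow_ne_zero _ hz0)).mul this
  refine circleIntegral_eq_of_differentiable_on_annulus_off_countable h0 hrR countable_empty ?_ ?_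
  · exact fun z hz => (key z hz).continuousAt.continuousWithinAt
  · intro z hz
    refine key z ⟨ball_subset_closedBall hz.1.1, fun h => hz.1.2 (ball_subset_closedBall h)⟩

lemma cf_indep {h : ℂ → ℂ} (hh : HolOn h) {r : ℝ} (h0 : 0 < r) (h1 : r < 1) (m : ℕ) :
    cf r m h = cf (1/2) m h := by
  rcases le_total r (1/2) with h | h
  · exact (cf_le hh h0 h (by norm_num) m).symm
  · exact cf_le hh (by norm_num) h h1 m

lemma cf_congr {h k : ℂ → ℂ} (hk : ∀ z ∈ ball (0:ℂ) 1, h z = k z) (m : ℕ) :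
    cf (1/2) m h = cf (1/2) m k := by
  refine circleIntegral.integral_congr (by norm_num) ?_
  intro z hz
  have : ‖z‖ = 1/2 := by simpa using hz
  simp only
  rw [hk z (by simp [this]; norm_num)]

lemma cf_pow {S : ℂ → ℂ} (hS : HolOn S) (m : ℕ) :
    cf (1/2) m (fun z => z ^ m * S z) = 2 * π * I * S 0 := by
  have h1 := (hS.mono (closedBall_subset_ball (by norm_num : (1/2:ℝ) < 1))).circleIntegral_sub_inv_smul
    (w := 0) (by simp)
  rw [← smul_eq_mul (a := 2 * (π:ℂ) * I), ← h1]
  refine circleIntegral.integral_congr (by norm_num) ?_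
  intro z hz
  have hz0 : z ≠ 0 := by
    rintro rfl
    simp at hz
  simp only [sub_zero, smul_eq_mul]
  field_simp
  ring

lemma cf_circ {h : ℂ → ℂ} (hh : HolOn h) (m : ℕ) :
    CircleIntegrable (fun z => (z ^ (m+1))⁻¹ * h z) 0 (1/2) := by
  refine ContinuousOn.circleIntegrable (by norm_num) ?_
  refine ContinuousOn.mul ?_ (hh.continuousOn.mono ?_)
  · refine ContinuousOn.inv₀ (by fun_prop) ?_
    intro z hz
    refine pow_ne_zero _ ?_
    rintro rfl
    simp at hz
  · intro z hz
    have : ‖z‖ = 1/2 := by simpa using hz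
    simp [this]; norm_num

lemma cf_add {h k : ℂ → ℂ} (hh : HolOn h) (hk : HolOn k) (c : ℂ) (m : ℕ) :
    cf (1/2) m (fun z => h z + c * k z) = cf (1/2) m h + c * cf (1/2) m k := by
  unfold cf
  rw [← smul_eq_mul c, ← circleIntegral.integral_smul, ← circleIntegral.integral_add (cf_circ hh m)]
  · congr 1; ext z; simp; ring
  · have := (cf_circ hk m).const_smul (a := c)
    exact this

lemma cf_bound (h : ℂ → ℂ) {r : ℝ} (h0 : 0 < r) (m : ℕ) :
    ‖cf r m h‖ * r ^ m ≤ ∫ θ in (0:ℝ)..2*π, ‖h (circleMap 0 r θ)‖ := by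
  have e : ∀ θ : ℝ, ‖deriv (circleMap 0 r) θ • ((circleMap 0 r θ ^ (m+1))⁻¹ * h (circleMap 0 r θ))‖
      = (r^m)⁻¹ * ‖h (circleMap 0 r θ)‖ := by
    intro θ
    simp [abs_of_pos h0]
    field_simp
    ring
  have : ‖cf r m h‖ ≤ ∫ θ in (0:ℝ)..2*π, (r^m)⁻¹ * ‖h (circleMap 0 r θ)‖ := by
    refine (intervalIntegral.norm_integral_le_integral_norm (by positivity)).trans (le_of_eq ?_)
    congr 1; ext θ; exact e θ
  rw [intervalIntegral.integral_const_mul] at this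
  calc _ ≤ _ := mul_le_mul_of_nonneg_right this (by positivity)
    _ = _ := by field_simp

lemma cf_bound_sq {h : ℂ → ℂ} (hh : HolOn h) {r : ℝ} (h0 : 0 < r) (h1 : r < 1) (m : ℕ) :
    (‖cf (1/2) m h‖ * r ^ m) ^ 2 / (2 * π) ≤ ∫ θ in (-π)..π, ‖h (circleMap 0 r θ)‖ ^ 2 := by
  have hc : Continuous (fun θ => ‖h (circleMap 0 r θ)‖) := by
    refine Continuous.norm ?_
    exact hh.continuousOn.comp_continuous (continuous_circleMap 0 r) (fun θ => circ_ball h0 h1)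
  have b := cf_bound h h0 m
  rw [cf_indep hh h0 h1 m] at b
  set A := ∫ θ in (0:ℝ)..2*π, ‖h (circleMap 0 r θ)‖ with hA
  have per : ∫ θ in (-π)..π, ‖h (circleMap 0 r θ)‖ ^ 2 =
      ∫ θ in (0:ℝ)..2*π, ‖h (circleMap 0 r θ)‖ ^ 2 := by
    have hp : Function.Periodic (fun θ => ‖h (circleMap 0 r θ)‖ ^ 2) (2*π) := by
      intro θ; simp only [(periodic_circleMap 0 r) θ]
    have := hp.intervalIntegral_add_eq (-π) 0
    convert! this using 2 <;> ring
  rw [per]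
  have pos : 0 < 2 * π := by positivity
  have : 0 ≤ ∫ θ in (0:ℝ)..2*π, (‖h (circleMap 0 r θ)‖ - A/(2*π)) ^ 2 :=
    intervalIntegral.integral_nonneg (by positivity) (fun _ _ => by positivity)
  have e2 : ∫ θ in (0:ℝ)..2*π, (‖h (circleMap 0 r θ)‖ - A/(2*π)) ^ 2 =
      (∫ θ in (0:ℝ)..2*π, ‖h (circleMap 0 r θ)‖^2) - A^2/(2*π) := by
    have : ∀ θ, (‖h (circleMap 0 r θ)‖ - A/(2*π)) ^ 2 = ‖h (circleMap 0 r θ)‖^2 -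
      (2 * (A/(2*π))) * ‖h (circleMap 0 r θ)‖ + (A/(2*π))^2 := by intro θ; ring
    simp_rw [this]
    rw [intervalIntegral.integral_add, intervalIntegral.integral_sub,
      intervalIntegral.integral_const_mul, ← hA, intervalIntegral.integral_const]
    · simp; field_simp; ring
    all_goals apply Continuous.intervalIntegrable; fun_prop
  rw [e2] at this
  have h3 : (‖cf (1/2) m h‖ * r ^ m) ^ 2 / (2 * π) ≤ A^2/(2*π) := by gcongr
  linarith
end

noncomputable section

lemma polar_formula {h : ℂ → ℂ} (hh : HolOn h) (W : ℝ → ENNReal) (hW : Measurable W) :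
    ∫⁻ z in ball (0:ℂ) 1, ENNReal.ofReal (‖h z‖^2) * W ‖z‖ =
    ∫⁻ r in Ioo (0:ℝ) 1, ENNReal.ofReal r * (W r *
      ∫⁻ θ in Ioo (-π) π, ENNReal.ofReal (‖h (circleMap 0 r θ)‖^2)) := by
  have hmb : MeasurableSet (ball (0:ℂ) 1) := isOpen_ball.measurableSet
  have hm : Measurable ((ball (0:ℂ) 1).indicator h) := by
    classical
    rw [← piecewise_eq_indicator]
    exact hh.continuousOn.measurable_piecewise continuousOn_const hmb
  have e1 : ∀ z, (ball (0:ℂ) 1).indicator (fun z => ENNReal.ofReal (‖h z‖^2) * W ‖z‖) z =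
      ENNReal.ofReal (‖(ball (0:ℂ) 1).indicator h z‖^2) * W ‖z‖ := by
    intro z
    by_cases hz : z ∈ ball (0:ℂ) 1
    · simp only [indicator_of_mem hz]
    · simp only [indicator_of_notMem hz]; simp
  rw [← lintegral_indicator hmb]
  simp_rw [e1]
  rw [← Complex.lintegral_comp_polarCoord_symm, polarCoord_target, Measure.volume_eq_prod,
    ← Measure.prod_restrict, lintegral_prod]
  · have : Ioo (0:ℝ) 1 = Iio 1 ∩ Ioi 0 := by ext; simp [and_comm]
    rw [this, ← Measure.restrict_restrict measurableSet_Iio,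
      ← lintegral_indicator (μ := volume.restrict (Ioi (0:ℝ))) measurableSet_Iio] 
    refine setLIntegral_congr_fun measurableSet_Ioi ?_
    intro r hr
    have hr0 : (0:ℝ) < r := hr
    have hn : ∀ θ, ‖Complex.polarCoord.symm (r, θ)‖ = r := by
      intro θ; rw [Complex.norm_polarCoord_symm]; simp [abs_of_pos hr0]
    have he : ∀ θ, Complex.polarCoord.symm (r, θ) = circleMap 0 r θ := by
      intro θ; simp [circleMap, Complex.exp_mul_I]
    simp only [hn, smul_eq_mul]
    by_cases hr1 : r < 1
    · rw [indicator_of_mem (by exact hr1)]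
      have hc : Continuous (fun θ => ‖h (circleMap 0 r θ)‖) :=
        (hh.continuousOn.comp_continuous (continuous_circleMap 0 r)
          (fun θ => circ_ball hr0 hr1)).norm
      have hc2 : Measurable (fun θ => ENNReal.ofReal (‖h (circleMap 0 r θ)‖^2)) := by
        have := hc.measurable
        fun_prop
      rw [← lintegral_const_mul _ hc2, ← lintegral_const_mul _ (by fun_prop)]
      congr 1
      ext θ
      rw [he, indicator_of_mem (circ_ball hr0 hr1), mul_comm (W r)]
    · rw [indicator_of_notMem (by exact hr1)]
      have : ∀ θ, Complex.polarCoord.symm (r, θ) ∉ ball (0:ℂ) 1 := by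
        intro θ; rw [mem_ball_zero_iff, hn]; exact hr1
      simp only [indicator_of_notMem (this _)]; simp
  · refine Measurable.aemeasurable ?_
    simp_rw [Complex.polarCoord_symm_apply]
    have h1 : Measurable (fun p : ℝ × ℝ =>
      ((p.1:ℂ) * ((Real.cos p.2 : ℂ) + (Real.sin p.2 : ℂ) * Complex.I))) := by fun_prop
    have h2 := hm.comp h1
    have h3 := hW.comp h1.norm
    simp only [Function.comp_def] at h2 h3
    exact (by fun_prop : Measurable fun p : ℝ × ℝ => ENNReal.ofReal p.1).mul
      ((h2.norm.pow_const 2).ennreal_ofReal.mul h3)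

lemma polar_radial (W : ℝ → ENNReal) (hW : Measurable W) :
    ∫⁻ z in ball (0:ℂ) 1, W ‖z‖ =
    ENNReal.ofReal (2 * π) * ∫⁻ r in Ioo (0:ℝ) 1, ENNReal.ofReal r * W r := by
  have := polar_formula (h := fun _ => 1) (differentiableOn_const _) W hW
  simp only [norm_one, one_pow, ENNReal.ofReal_one, one_mul, lintegral_const,
    Measure.restrict_apply_univ, Real.volume_Ioo] at this
  rw [this, ← lintegral_const_mul _ (by fun_prop)]
  congr 1
  ext r
  rw [show π - -π = 2 * π by ring]
  ring

/-- Lower bound of the weighted area integral by one coefficient on an annulus, pointwise in r. -/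
lemma circ_lower {h : ℂ → ℂ} (hh : HolOn h) {r : ℝ} (h0 : 0 < r) (h1 : r < 1) (m : ℕ) :
    ENNReal.ofReal ((‖cf (1/2) m h‖ * r ^ m) ^ 2 / (2 * π)) ≤
      ∫⁻ θ in Ioo (-π) π, ENNReal.ofReal (‖h (circleMap 0 r θ)‖^2) := by
  have hc : Continuous (fun θ => ‖h (circleMap 0 r θ)‖) :=
    (hh.continuousOn.comp_continuous (continuous_circleMap 0 r)
      (fun θ => circ_ball h0 h1)).norm
  have := cf_bound_sq hh h0 h1 m
  rw [intervalIntegral.integral_of_le (by linarith [Real.pi_pos]), integral_Ioc_eq_integral_Ioo] at this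
  rw [← ofReal_integral_eq_lintegral_ofReal]
  · exact ENNReal.ofReal_le_ofReal this
  · exact ((hc.pow 2).integrableOn_Icc (a := -π) (b := π)).mono_set Ioo_subset_Icc_self
  · exact Eventually.of_forall fun _ => by positivity

/-- The dyadic lower bound: if the coefficients are large, the weighted integral diverges. -/
lemma diverge {h : ℂ → ℂ} (hh : HolOn h) {s : ℝ} (hs : 0 < s) (m0 : ℕ) (δ : ℝ) (hδ : 0 < δ)
    (B : ∀ k : ℕ, δ * (1/((k:ℝ)+1)) * (4:ℝ)^(k*(1+s)) ≤ ‖cf (1/2) (4^k - 1 + m0) h‖^2) :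
    ∫⁻ z in ball (0:ℂ) 1, ENNReal.ofReal (‖h z‖^2 * (1 - ‖z‖^2)^s) = ⊤ := by
  have e : ∫⁻ z in ball (0:ℂ) 1, ENNReal.ofReal (‖h z‖^2 * (1 - ‖z‖^2)^s) =
    ∫⁻ z in ball (0:ℂ) 1, ENNReal.ofReal (‖h z‖^2) * (fun r : ℝ => ENNReal.ofReal ((1 - r^2)^s)) ‖z‖ := by
    congr 1; ext z; rw [ENNReal.ofReal_mul (by positivity)]
  rw [e, polar_formula hh (fun r : ℝ => ENNReal.ofReal ((1 - r^2)^s)) (by fun_prop)]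
  set κ : ℝ := (3/4) * (1/4)^s * (δ * (1/16 * (3/4)^(2*m0)) / (2*π)) with hκ
  have hκ0 : 0 < κ := by positivity
  let A : ℕ → Set ℝ := fun k => Ico (1 - (1/4:ℝ)^(k+1)) (1 - (1/4:ℝ)^(k+2))
  have hdisj : Pairwise (Function.onFun Disjoint A) := by
    have hmono : Monotone (fun k : ℕ => 1 - (1/4:ℝ)^(k+1)) := by
      intro a b hab
      have : (1/4:ℝ)^(b+1) ≤ (1/4:ℝ)^(a+1) :=
        pow_le_pow_of_le_one (by norm_num) (by norm_num) (by omega)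
      simp only; linarith
    exact hmono.pairwise_disjoint_on_Ico_succ
  have hsub : (⋃ k, A k) ⊆ Ioo (0:ℝ) 1 := by
    refine iUnion_subset fun k r hr => ?_
    have h1 : (1/4:ℝ)^(k+1) ≤ 1/4 := by
      simpa using pow_le_pow_of_le_one (by norm_num : (0:ℝ) ≤ 1/4) (by norm_num) (by omega : 1 ≤ k+1)
    have h2 : 0 < (1/4:ℝ)^(k+2) := by positivity
    exact ⟨by linarith [hr.1], by linarith [hr.2]⟩
  refine top_le_iff.mp ?_
  refine le_trans ?_ (lintegral_mono_set hsub)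
  rw [lintegral_iUnion (fun k => measurableSet_Ico) hdisj]
  have key : ∀ k : ℕ, ENNReal.ofReal (κ * (1/((k:ℝ)+2))) ≤
      ∫⁻ r in A k, ENNReal.ofReal r * (ENNReal.ofReal ((1 - r^2)^s) *
      ∫⁻ θ in Ioo (-π) π, ENNReal.ofReal (‖h (circleMap 0 r θ)‖^2)) := by
    intro k
    set m := 4^(k+1) - 1 + m0 with hm
    set b := ‖cf (1/2) m h‖ with hb
    have hB : δ * (1/((k:ℝ)+2)) * (4:ℝ)^(((k:ℝ)+1)*(1+s)) ≤ b^2 := by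
      have := B (k+1)
      push_cast at this
      rw [show (k:ℝ)+1+1 = k+2 by ring] at this
      exact this
    set ρ : ℝ := 1 - (1/4:ℝ)^(k+1) with hρ
    have hq4 : (1/4:ℝ)^(k+1) ≤ 1/4 := by
      simpa using pow_le_pow_of_le_one (by norm_num : (0:ℝ) ≤ 1/4) (by norm_num) (by omega : 1 ≤ k+1)
    have hq0 : 0 < (1/4:ℝ)^(k+1) := by positivity
    have hρ0 : 3/4 ≤ ρ := by linarith
    have hρ1 : ρ ≤ 1 := by linarith
    have hρn : 1/4 ≤ ρ^(4^(k+1)) := by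
      have hbern := one_add_mul_le_pow (a := -(1/4:ℝ)^(k+1)) (by linarith) (2 * 4^k)
      have e1 : 1 + ((2 * 4^k : ℕ):ℝ) * (-(1/4:ℝ)^(k+1)) = 1/2 := by
        push_cast
        rw [pow_succ, one_div, inv_pow]
        field_simp; norm_num
      rw [e1, ← sub_eq_add_neg, ← hρ] at hbern
      have e2 : ρ^(4^(k+1)) = (ρ^(2*4^k))^2 := by
        rw [← pow_mul]; congr 1; ring
      rw [e2]
      nlinarith
    have hρm : 1/16 * (3/4)^(2*m0) ≤ ρ^(2*m+1) := by
      have : 2*m+1 ≤ 4^(k+1)*2 + 2*m0 := by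
        have : 0 < 4^(k+1) := by positivity
        omega
      refine le_trans ?_ (pow_le_pow_of_le_one (by linarith) hρ1 this)
      rw [pow_add, pow_mul ρ (4^(k+1)) 2]
      have h1 : (3/4:ℝ)^(2*m0) ≤ ρ^(2*m0) := by gcongr
      have h2 : (1/16:ℝ) ≤ (ρ^(4^(k+1)))^2 := by nlinarith
      exact mul_le_mul h2 h1 (by positivity) (by positivity)
    have hpt : ∀ r ∈ A k, ENNReal.ofReal (((1/4:ℝ)^(k+2))^s * (ρ^(2*m+1) * b^2/(2*π))) ≤
        ENNReal.ofReal r * (ENNReal.ofReal ((1 - r^2)^s) *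
      ∫⁻ θ in Ioo (-π) π, ENNReal.ofReal (‖h (circleMap 0 r θ)‖^2)) := by
      intro r hr
      have hr0 : ρ ≤ r := hr.1
      have hr1 : (1/4:ℝ)^(k+2) ≤ 1 - r := by linarith [hr.2]
      have hr2 : r < 1 := by
        have : 0 < (1/4:ℝ)^(k+2) := by positivity
        linarith
      have hr3 : 0 < r := by linarith
      refine le_trans ?_ (mul_le_mul_right (mul_le_mul_right (circ_lower hh hr3 hr2 m) _) _)
      have hw : ((1/4:ℝ)^(k+2))^s ≤ (1-r^2)^s := by
        refine Real.rpow_le_rpow (by positivity) ?_ hs.le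
        nlinarith
      rw [← ENNReal.ofReal_mul (Real.rpow_nonneg (by nlinarith) _), ← ENNReal.ofReal_mul hr3.le]
      refine ENNReal.ofReal_le_ofReal ?_
      have hnn : 0 ≤ (1-r^2)^s := Real.rpow_nonneg (by nlinarith) _
      have hpw : ρ^(2*m+1) ≤ r^(2*m+1) := by gcongr
      calc _ ≤ (1-r^2)^s * (r^(2*m+1) * b^2/(2*π)) := by gcongr
        _ = _ := by rw [← hb]; ring
    refine le_trans ?_ (setLIntegral_mono' measurableSet_Ico hpt)
    rw [setLIntegral_const, Real.volume_Ico, ← ENNReal.ofReal_mul (by positivity)]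
    refine ENNReal.ofReal_le_ofReal ?_
    have e1 : (1 - (1/4:ℝ)^(k+2)) - (1 - (1/4:ℝ)^(k+1)) = 3/4 * (1/4)^(k+1) := by ring
    rw [e1]
    have e2 : ((1/4:ℝ)^(k+2))^s * (1/4)^(k+1) * (4:ℝ)^(((k:ℝ)+1)*(1+s)) = (1/4)^s := by
      rw [← Real.rpow_natCast, ← Real.rpow_natCast, ← Real.rpow_mul (by norm_num),
        ← Real.rpow_add (by norm_num), one_div, Real.inv_rpow (by norm_num),
        Real.inv_rpow (by norm_num), ← Real.rpow_neg (by norm_num), ← Real.rpow_neg (by norm_num),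
        ← Real.rpow_add (by norm_num)]
      congr 1; push_cast; ring
    calc κ * (1/((k:ℝ)+2)) = ((1/4:ℝ)^(k+2))^s * (1/16 * (3/4)^(2*m0) *
          (δ * (1/((k:ℝ)+2)) * (4:ℝ)^(((k:ℝ)+1)*(1+s)))/(2*π)) * (3/4 * (1/4)^(k+1)) := by
          rw [hκ, ← e2]; ring
      _ ≤ _ := by gcongr
  refine le_trans ?_ (ENNReal.tsum_le_tsum key)
  rw [top_le_iff]
  by_contra hne
  have h1 := ENNReal.summable_toReal hne
  have h2 : Summable fun k : ℕ => κ * (1/((k:ℝ)+2)) := by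
    refine h1.congr fun k => ?_
    rw [ENNReal.toReal_ofReal (by positivity)]
  have h3 := (summable_mul_left_iff hκ0.ne').mp h2
  have h4 : Summable fun k : ℕ => 1/(((k+2:ℕ):ℝ)) := by
    refine h3.congr fun k => ?_
    push_cast; rfl
  exact Real.not_summable_one_div_natCast ((summable_nat_add_iff 2).mp h4)

end

noncomputable section

lemma pser_bound {u : ℕ → ℂ} (hu : ∀ k, ‖u k‖ ≤ 1) {e : ℕ → ℕ} (he : ∀ k, k ≤ e k) {ρ : ℝ}
    (h1 : ρ < 1) (k : ℕ) (z : ℂ) (hz : z ∈ ball (0:ℂ) ρ) : ‖u k * z ^ (e k)‖ ≤ ρ ^ k := by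
  have hz' : ‖z‖ < ρ := by simpa using hz
  rw [norm_mul, norm_pow]
  calc ‖u k‖ * ‖z‖ ^ e k ≤ 1 * ‖z‖ ^ k := by
        exact mul_le_mul (hu k) (pow_le_pow_of_le_one (norm_nonneg _) (by linarith) (he k))
          (by positivity) (by norm_num)
    _ ≤ ρ ^ k := by rw [one_mul]; gcongr

lemma pser_summable {u : ℕ → ℂ} (hu : ∀ k, ‖u k‖ ≤ 1) {e : ℕ → ℕ} (he : ∀ k, k ≤ e k)
    {z : ℂ} (hz : z ∈ ball (0:ℂ) 1) : Summable (fun k => u k * z ^ (e k)) := by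
  have hz' : ‖z‖ < 1 := by simpa using hz
  obtain ⟨ρ, h1, h2⟩ := exists_between hz'
  exact Summable.of_norm_bounded (summable_geometric_of_lt_one ((norm_nonneg z).trans h1.le) h2)
    (fun k => pser_bound hu he h2 k z (by simpa using h1))

lemma pser_hol {u : ℕ → ℂ} (hu : ∀ k, ‖u k‖ ≤ 1) {e : ℕ → ℕ} (he : ∀ k, k ≤ e k) :
    HolOn (fun z => ∑' k, u k * z ^ (e k)) := by
  intro z hz
  have hz' : ‖z‖ < 1 := by simpa using hz
  obtain ⟨ρ, h1, h2⟩ := exists_between hz'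
  have := differentiableOn_tsum_of_summable_norm (F := fun k z => u k * z ^ (e k))
    (summable_geometric_of_lt_one ((norm_nonneg z).trans h1.le) h2)
    (fun k => by fun_prop) isOpen_ball (pser_bound hu he h2)
  exact (this.differentiableAt (isOpen_ball.mem_nhds (by simpa using h1))).differentiableWithinAt

lemma pser_deriv {u : ℕ → ℂ} (hu : ∀ k, ‖u k‖ ≤ 1) {e : ℕ → ℕ} (he : ∀ k, k ≤ e k)
    {z : ℂ} (hz : z ∈ ball (0:ℂ) 1) :
    deriv (fun z => ∑' k, u k * z ^ (e k)) z = ∑' k, u k * (e k * z ^ (e k - 1)) := by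
  have hz' : ‖z‖ < 1 := by simpa using hz
  obtain ⟨ρ, h1, h2⟩ := exists_between hz'
  have := hasSum_deriv_of_summable_norm (F := fun k z => u k * z ^ (e k))
    (summable_geometric_of_lt_one ((norm_nonneg z).trans h1.le) h2)
    (fun k => by fun_prop) isOpen_ball (pser_bound hu he h2) (z := z) (by simpa using h1)
  rw [← this.tsum_eq]
  congr 1; ext k
  simp

lemma holder_tsum {p q : ℝ} (hpq : p.HolderConjugate q) (f g : ℕ → ENNReal) :
    ∑' k, f k * g k ≤ (∑' k, f k ^ p) ^ (1/p) * (∑' k, g k ^ q) ^ (1/q) := by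
  have := ENNReal.lintegral_mul_le_Lp_mul_Lq (Measure.count : Measure ℕ) hpq (f := f) (g := g)
    (measurable_of_countable _).aemeasurable (measurable_of_countable _).aemeasurable
  simpa [lintegral_count] using this

lemma geo_sum {r : ℝ} (h0 : 0 ≤ r) (h1 : r < 1) :
    ∑' k : ℕ, ENNReal.ofReal (2^k * r^(4^k-1)) ≤ ENNReal.ofReal (4 * (1-r)^(-(1/2):ℝ)) := by
  set v : ℝ := (1-r)^(-(1/2):ℝ) with hv
  have hv0 : 0 < v := Real.rpow_pos_of_pos (by linarith) _
  have hv2 : v^2 * (1-r) = 1 := by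
    rw [hv, ← Real.rpow_natCast, ← Real.rpow_mul (by linarith)]
    norm_num
    rw [Real.rpow_neg_one]
    exact inv_mul_cancel₀ (by linarith)
  have hv1 : 1 ≤ v := by
    by_contra h
    push Not at h
    nlinarith
  obtain ⟨K, hK1, hK2⟩ := exists_nat_pow_near hv1 (by norm_num : (1:ℝ) < 2)
  have b1 : ∀ k : ℕ, (2:ℝ)^k * r^(4^k-1) ≤ 2^k := by
    intro k
    have : r^(4^k-1) ≤ 1 := pow_le_one₀ h0 h1.le
    nlinarith [pow_pos (by norm_num : (0:ℝ) < 2) k]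
  have b2 : ∀ k : ℕ, (2:ℝ)^k * r^(4^k-1) ≤ v^2 * (1/2)^k := by
    intro k
    have hb : (4^k : ℝ) * r^(4^k-1) * (1-r) ≤ 1 := by
      have hg := mul_neg_geom_sum r (4^k)
      have : ((4^k : ℕ):ℝ) * r^(4^k-1) ≤ ∑ i ∈ Finset.range (4^k), r^i := by
        calc _ = ∑ i ∈ Finset.range (4^k), r^(4^k-1) := by simp
          _ ≤ _ := Finset.sum_le_sum fun i hi => pow_le_pow_of_le_one h0 h1.le (by
            have := Finset.mem_range.mp hi; omega)
      push_cast at this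
      have hp : 0 ≤ r^(4^k) := by positivity
      nlinarith
    have e4 : (4:ℝ)^k = 2^k * 2^k := by rw [← mul_pow]; norm_num
    have e5 : (1/2:ℝ)^k * 2^k = 1 := by rw [← mul_pow]; norm_num
    have : (2:ℝ)^k * r^(4^k-1) = v^2 * (1/2)^k * ((4^k : ℝ) * r^(4^k-1) * (1-r)) := by
      rw [e4]
      linear_combination (-(2:ℝ)^k * r^(4^k-1)) * (hv2) - (2:ℝ)^k * r^(4^k-1) * v^2 * (1-r) * e5
    rw [this]
    exact mul_le_of_le_one_right (by positivity) hb
  rw [← ENNReal.summable.sum_add_tsum_nat_add' (k := K+1)]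
  have s1 : ∑ i ∈ Finset.range (K+1), ENNReal.ofReal (2^i * r^(4^i-1)) ≤ ENNReal.ofReal (2*v) := by
    rw [← ENNReal.ofReal_sum_of_nonneg (fun i _ => by positivity)]
    refine ENNReal.ofReal_le_ofReal ((Finset.sum_le_sum fun i _ => b1 i).trans ?_)
    rw [geom_sum_eq (by norm_num)]
    rw [pow_succ]; norm_num; linarith
  have s2 : ∑' i : ℕ, ENNReal.ofReal (2^(i+(K+1)) * r^(4^(i+(K+1))-1)) ≤ ENNReal.ofReal (2*v) := by
    refine (ENNReal.tsum_le_tsum fun i => ENNReal.ofReal_le_ofReal (b2 (i+(K+1)))).trans ?_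
    rw [← ENNReal.ofReal_tsum_of_nonneg (fun i => by positivity)]
    · refine ENNReal.ofReal_le_ofReal ?_
      simp_rw [pow_add _ _ (K+1), ← mul_assoc, mul_right_comm _ _ ((1/2:ℝ)^(K+1))]
      rw [tsum_mul_left, tsum_geometric_two]
      have e5 : (1/2:ℝ)^(K+1) * 2^(K+1) = 1 := by rw [← mul_pow]; norm_num
      have e6 : v * (1/2:ℝ)^(K+1) ≤ 1 := by
        have := mul_le_mul_of_nonneg_left hK2.le (by positivity : 0 ≤ (1/2:ℝ)^(K+1))
        linarith
      nlinarith
    · simp_rw [pow_add _ _ (K+1), ← mul_assoc]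
      exact (summable_geometric_two.mul_left _).mul_right _
  calc _ ≤ _ := add_le_add s1 s2
    _ = _ := by rw [← ENNReal.ofReal_add (by positivity) (by positivity)]; congr 1; ring

lemma beta_bound {β : ℝ} (hβ : 0 < β) {n : ℕ} (hn : 0 < n) :
    ∫⁻ r in Ioo (0:ℝ) 1, ENNReal.ofReal ((1-r)^(β-1) * r^n) ≤
      ENNReal.ofReal ((1/(n:ℝ))^β * Real.Gamma β) := by
  have hn' : (0:ℝ) < n := by exact_mod_cast hn
  have i1 := Real.integral_rpow_mul_exp_neg_mul_Ioi hβ hn'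
  have i2 : IntegrableOn (fun x : ℝ => x^(β-1) * Real.exp (-(n * x))) (Ioi 0) := by
    have := integrableOn_rpow_mul_exp_neg_mul_rpow (s := β-1) (p := 1) (by linarith) one_pos hn'
    simpa using this
  rw [← i1, ofReal_integral_eq_lintegral_ofReal i2]
  · set φ : ℝ → ENNReal := (Ioo (0:ℝ) 1).indicator
      (fun x => ENNReal.ofReal (x^(β-1) * Real.exp (-(n*x)))) with hφ
    calc _ ≤ ∫⁻ r, φ (1 - r) := by
          rw [← lintegral_indicator measurableSet_Ioo]
          refine lintegral_mono fun r => ?_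
          by_cases hr : r ∈ Ioo (0:ℝ) 1
          · rw [indicator_of_mem hr, hφ, indicator_of_mem (by constructor <;> linarith [hr.1, hr.2])]
            refine ENNReal.ofReal_le_ofReal ?_
            have h1 : 0 ≤ (1-r)^(β-1) := Real.rpow_nonneg (by linarith [hr.2]) _
            refine mul_le_mul_of_nonneg_left ?_ h1
            have : r ≤ Real.exp (-(1-r)) := by
              have := Real.add_one_le_exp (-(1-r)); linarith
            calc r^n ≤ (Real.exp (-(1-r)))^n := by gcongr; exact hr.1.le
              _ = _ := by rw [← Real.exp_nat_mul]; congr 1; ring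
          · rw [indicator_of_notMem hr]; exact zero_le
      _ = ∫⁻ r, φ r := lintegral_sub_left_eq_self φ 1
      _ ≤ _ := by
          rw [lintegral_indicator measurableSet_Ioo]
          exact lintegral_mono_set fun x hx => hx.1
  · rw [EventuallyLE, ae_restrict_iff' measurableSet_Ioi]
    refine Eventually.of_forall fun x hx => ?_
    have : (0:ℝ) < x := hx
    simp only [Pi.zero_apply]; positivity
end

noncomputable section

/-- moduli of the lacunary coefficients -/
def ac (p : ℝ) (k : ℕ) : ℝ := (1/((k:ℝ)+1))^(1/2:ℝ) * ((2:ℝ)^k)^(-2/p)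

lemma ac_pos (p : ℝ) (k : ℕ) : 0 < ac p k := by unfold ac; positivity

lemma ac_le (p : ℝ) (hp : 2 < p) (k : ℕ) : ac p k ≤ 1 := by
  unfold ac
  refine mul_le_one₀ (Real.rpow_le_one (by positivity) ?_ (by norm_num)) (by positivity) ?_
  · rw [div_le_one (by positivity)]; linarith [(Nat.cast_nonneg k : (0:ℝ) ≤ k)]
  · refine Real.rpow_le_one_of_one_le_of_nonpos (one_le_pow₀ (by norm_num)) ?_
    exact div_nonpos_of_nonpos_of_nonneg (by norm_num) (by linarith)

lemma dA_int (F : ℂ → ENNReal) :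
    ∫⁻ z in ball (0:ℂ) 1, F z ∂dA = (ENNReal.ofReal π)⁻¹ * ∫⁻ z in ball (0:ℂ) 1, F z := by
  unfold dA
  rw [Measure.restrict_smul, lintegral_smul_measure, smul_eq_mul]

lemma k_le (k : ℕ) : k ≤ 4^k := (Nat.lt_pow_self (by norm_num)).le

lemma ac_id {p q : ℝ} (hp : 2 < p) (hpq : p.HolderConjugate q) (k : ℕ) {x : ℝ} (hx : 0 ≤ x) :
    ((1/((k:ℝ)+1))^(p/2) * ((2:ℝ)^k)^(p-1) * x)^(1/p) * ((2:ℝ)^k * x)^(1/q) = ac p k * (4^k * x) := by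
  have hp0 : 0 < p := by linarith
  have hq0 : 0 < q := hpq.symm.pos
  have hsum : 1/p + 1/q = 1 := by
    have := hpq.inv_add_inv_eq_one; simpa [one_div] using this
  set w : ℝ := (2:ℝ)^k with hw
  have hw0 : 0 < w := by positivity
  have e4 : (4:ℝ)^k = w^(2:ℝ) := by
    rw [hw, Real.rpow_two, ← pow_mul, mul_comm k 2, pow_mul]; norm_num
  have ex : x^(1/p) * x^(1/q) = x := by
    rw [← Real.rpow_add_of_nonneg hx (by positivity) (by positivity), hsum, Real.rpow_one]
  rw [Real.mul_rpow (by positivity) hx, Real.mul_rpow (by positivity) (by positivity),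
    Real.mul_rpow (by positivity) hx, ← Real.rpow_mul (by positivity), ← Real.rpow_mul (by positivity)]
  have e1 : p/2 * (1/p) = 1/2 := by field_simp
  rw [e1, e4]
  have ew : w^((p-1)*(1/p)) * w^(1/q) = w^(-2/p) * w^(2:ℝ) := by
    rw [← Real.rpow_add hw0, ← Real.rpow_add hw0]
    congr 1
    have : 1/q = 1 - 1/p := by linarith
    rw [this]; field_simp; ring
  unfold ac
  rw [← hw]
  linear_combination ((1 / ((k:ℝ) + 1)) ^ (1 / 2:ℝ) * x^(1/p) * x^(1/q)) * ew +
    ((1 / ((k:ℝ) + 1)) ^ (1 / 2:ℝ) * w^(-2/p) * w^(2:ℝ)) * ex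

lemma besov_pt {p : ℝ} (hp : 2 < p) {u : ℕ → ℂ} (hu : ∀ k, ‖u k‖ = ac p k) {z : ℂ}
    (hz : z ∈ ball (0:ℂ) 1) :
    ENNReal.ofReal ((1-‖z‖)^(p-2) * ‖deriv (fun z => ∑' k, u k * z^(4^k)) z‖^p) ≤
    ENNReal.ofReal (4^(p-1)) * ∑' k : ℕ, ENNReal.ofReal ((1/((k:ℝ)+1))^(p/2) * ((2:ℝ)^k)^(p-1) *
      ((1-‖z‖)^((p-1)/2-1) * ‖z‖^(4^k-1))) := by
  have hr1 : ‖z‖ < 1 := by simpa using hz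
  have hp0 : 0 < p := by linarith
  set r := ‖z‖ with hr
  have hr0 : 0 ≤ r := norm_nonneg z
  have hpq : p.HolderConjugate (p.conjExponent) := Real.HolderConjugate.conjExponent (by linarith)
  set q := p.conjExponent with hq
  have hq0 : 0 < q := hpq.symm.pos
  rw [pser_deriv (fun k => (hu k).trans_le (ac_le p hp k)) (fun k => k_le k) hz]
  set U : ℕ → ℝ := fun k => (1/((k:ℝ)+1))^(p/2) * ((2:ℝ)^k)^(p-1) * r^(4^k-1) with hU
  set V : ℕ → ℝ := fun k => 2^k * r^(4^k-1) with hV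
  have s1 : ENNReal.ofReal ‖∑' k, u k * (((4^k:ℕ):ℂ) * z^(4^k-1))‖ ≤
      (∑' k, ENNReal.ofReal (U k))^(1/p) * (∑' k, ENNReal.ofReal (V k))^(1/q) := by
    rw [ofReal_norm]
    refine enorm_tsum_le_tsum_enorm.trans ?_
    have := holder_tsum hpq (fun k => (ENNReal.ofReal (U k))^(1/p)) (fun k => (ENNReal.ofReal (V k))^(1/q))
    simp only [← ENNReal.rpow_mul, one_div_mul_cancel hp0.ne', one_div_mul_cancel hq0.ne',
      ENNReal.rpow_one] at this
    refine le_trans (le_of_eq ?_) this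
    congr 1; ext k
    rw [ENNReal.ofReal_rpow_of_nonneg (by positivity) (by positivity),
      ENNReal.ofReal_rpow_of_nonneg (by positivity) (by positivity),
      ← ENNReal.ofReal_mul (by positivity), ← ofReal_norm,
      ac_id hp hpq k (by positivity)]
    simp [hu, hr]
  have s2 := ENNReal.rpow_le_rpow s1 hp0.le
  rw [ENNReal.mul_rpow_of_nonneg _ _ hp0.le, ← ENNReal.rpow_mul, ← ENNReal.rpow_mul,
    one_div_mul_cancel hp0.ne', ENNReal.rpow_one,
    ENNReal.ofReal_rpow_of_nonneg (norm_nonneg _) hp0.le] at s2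
  have e1 : 1/q*p = p-1 := by
    rw [hq, Real.conjExponent]; field_simp
  rw [e1] at s2
  have s3 := ENNReal.rpow_le_rpow (geo_sum hr0 hr1) (by linarith : 0 ≤ p-1)
  have hr1' : 0 < 1 - r := by linarith
  rw [ENNReal.ofReal_rpow_of_nonneg (by positivity) (by linarith),
    Real.mul_rpow (by norm_num) (by positivity), ← Real.rpow_mul hr1'.le] at s3
  have s4 := s2.trans (mul_le_mul_right s3 _)
  rw [ENNReal.ofReal_mul (by positivity)]
  refine (mul_le_mul_right s4 _).trans (le_of_eq ?_)
  have e2 : (1-r)^(p-2) * ((4:ℝ)^(p-1) * (1-r)^(-(1/2)*(p-1))) = 4^(p-1) * (1-r)^((p-1)/2-1) := by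
    have : (1-r)^((p-1)/2-1) = (1-r)^(p-2) * (1-r)^(-(1/2)*(p-1)) := by
      rw [← Real.rpow_add hr1']; congr 1; ring
    rw [this]; ring
  rw [mul_comm (∑' k, ENNReal.ofReal (U k)), ← mul_assoc, ← ENNReal.ofReal_mul (by positivity), e2,
    ENNReal.ofReal_mul (by positivity), mul_assoc, ← ENNReal.tsum_mul_left]
  congr 2; ext k
  rw [← ENNReal.ofReal_mul (by positivity)]
  congr 1
  rw [hU]; ring

lemma besov_mem {p : ℝ} (hp : 2 < p) {u : ℕ → ℂ} (hu : ∀ k, ‖u k‖ = ac p k) :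
    (fun z => ∑' k, u k * z^(4^k)) ∈ Besov p := by
  refine ⟨pser_hol (fun k => (hu k).trans_le (ac_le p hp k)) (fun k => k_le k), ?_⟩
  rw [dA_int]
  refine ENNReal.mul_lt_top (by simp [Real.pi_pos]) ?_
  refine (setLIntegral_mono' isOpen_ball.measurableSet (fun z hz => besov_pt hp hu hz)).trans_lt ?_
  have hm : ∀ k : ℕ, Measurable (fun r : ℝ => ENNReal.ofReal ((1/((k:ℝ)+1))^(p/2) * ((2:ℝ)^k)^(p-1) *
      ((1-r)^((p-1)/2-1) * r^(4^k-1)))) := by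
    intro k; fun_prop
  have hm2 : ∀ k : ℕ, Measurable (fun z : ℂ => ENNReal.ofReal ((1/((k:ℝ)+1))^(p/2) * ((2:ℝ)^k)^(p-1) *
      ((1-‖z‖)^((p-1)/2-1) * ‖z‖^(4^k-1)))) := fun k => (hm k).comp measurable_norm
  rw [lintegral_const_mul _ (Measurable.tsum hm2), lintegral_tsum (fun k => (hm2 k).aemeasurable)]
  refine ENNReal.mul_lt_top ENNReal.ofReal_lt_top ?_
  have key : ∀ k : ℕ, ∫⁻ z in ball (0:ℂ) 1, ENNReal.ofReal ((1/((k:ℝ)+1))^(p/2) * ((2:ℝ)^k)^(p-1) *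
      ((1-‖z‖)^((p-1)/2-1) * ‖z‖^(4^k-1))) ≤
      ENNReal.ofReal (2*π) * ENNReal.ofReal (Real.Gamma ((p-1)/2) * (1/((k:ℝ)+1))^(p/2)) := by
    intro k
    rw [polar_radial _ (hm k)]
    gcongr
    have e : ∀ r ∈ Ioo (0:ℝ) 1, ENNReal.ofReal r * ENNReal.ofReal ((1/((k:ℝ)+1))^(p/2) * ((2:ℝ)^k)^(p-1) *
      ((1-r)^((p-1)/2-1) * r^(4^k-1))) = ENNReal.ofReal ((1/((k:ℝ)+1))^(p/2) * ((2:ℝ)^k)^(p-1)) *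
        ENNReal.ofReal ((1-r)^((p-1)/2-1) * r^(4^k)) := by
      intro r hr
      rw [← ENNReal.ofReal_mul hr.1.le, ← ENNReal.ofReal_mul (by positivity)]
      congr 1
      have : r^(4^k) = r^(4^k-1) * r := by
        rw [← pow_succ]; congr 1
        have : 0 < 4^k := by positivity
        omega
      rw [this]; ring
    rw [setLIntegral_congr_fun measurableSet_Ioo e, lintegral_const_mul _ (by fun_prop)]
    refine (mul_le_mul_right (beta_bound (by linarith) (by positivity)) _).trans (le_of_eq ?_)
    rw [← ENNReal.ofReal_mul (by positivity)]
    congr 1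
    have : ((2:ℝ)^k)^(p-1) * (1/(((4^k:ℕ)):ℝ))^((p-1)/2) = 1 := by
      have e4 : (1/(((4^k:ℕ)):ℝ)) = ((2:ℝ)^k)^(-2:ℝ) := by
        rw [Real.rpow_neg (by positivity), Real.rpow_two, ← pow_mul, mul_comm k 2, pow_mul]; norm_num
      rw [e4, ← Real.rpow_mul (by positivity), ← Real.rpow_add (by positivity)]
      rw [show p - 1 + -2 * ((p-1)/2) = 0 by ring, Real.rpow_zero]
    linear_combination (Real.Gamma ((p-1)/2) * (1/((k:ℝ)+1))^(p/2)) * this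
  refine (ENNReal.tsum_le_tsum key).trans_lt ?_
  rw [ENNReal.tsum_mul_left]
  refine ENNReal.mul_lt_top ENNReal.ofReal_lt_top ?_
  have hG : 0 < Real.Gamma ((p-1)/2) := Real.Gamma_pos_of_pos (by linarith)
  rw [← ENNReal.ofReal_tsum_of_nonneg (fun k => by positivity)]
  · exact ENNReal.ofReal_lt_top
  · refine Summable.mul_left _ ?_
    have := (summable_nat_add_iff 1).mpr (Real.summable_one_div_nat_rpow.mpr (by linarith : 1 < p/2))
    refine this.congr fun k => ?_
    push_cast
    rw [Real.div_rpow (by norm_num) (by positivity), Real.one_rpow]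
end

noncomputable section

lemma ac_sq {p s : ℝ} (hp : 2 < p) (hs1 : s ≤ 1 - 2/p) (k : ℕ) :
    (1/((k:ℝ)+1)) * (4:ℝ)^(k*(1+s)) ≤ (ac p k * 4^k)^2 := by
  have e1 : (ac p k)^2 = (1/((k:ℝ)+1)) * (4:ℝ)^(k*(-2/p)) := by
    unfold ac
    rw [mul_pow, ← Real.rpow_natCast, ← Real.rpow_mul (by positivity), ← Real.rpow_natCast _ 2,
      ← Real.rpow_mul (by positivity)]
    congr 1
    · norm_num
    · rw [← Real.rpow_natCast 2 k, ← Real.rpow_mul (by norm_num), show (4:ℝ) = 2^(2:ℝ) by norm_num,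
        ← Real.rpow_mul (by norm_num)]
      congr 1; push_cast; ring
  have e2 : ((4:ℝ)^k)^2 = (4:ℝ)^((k:ℝ)*2) := by
    rw [Real.rpow_mul (by norm_num), Real.rpow_natCast, Real.rpow_two]
  rw [mul_pow, e1, e2, mul_assoc, ← Real.rpow_add (by norm_num)]
  refine mul_le_mul_of_nonneg_left ?_ (by positivity)
  refine Real.rpow_le_rpow_of_exponent_le (by norm_num) ?_
  rw [← mul_add]
  refine mul_le_mul_of_nonneg_left ?_ (by positivity)
  have : -2/p = -(2/p) := by ring
  rw [this]; linarith

lemma sign_choice (x y : ℂ) : ∃ ε : ℂ, ‖ε‖ = 1 ∧ ‖y‖ ≤ ‖x + ε * y‖ := by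
  by_contra h
  push Not at h
  have h1 := h 1 (by simp)
  have h2 := h (-1) (by simp)
  have : 2 * y = (x + 1 * y) - (x + -1 * y) := by ring
  have h3 := norm_sub_le (x + 1 * y) (x + -1 * y)
  rw [← this] at h3
  simp only [norm_mul, Complex.norm_ofNat] at h3
  linarith

lemma main_abs {p s : ℝ} (hp : 2 < p) (hs0 : 0 < s) (hs1 : s ≤ 1 - 2/p)
    (T : (ℂ → ℂ) → ℂ → ℂ) (m0 : ℕ) {γ : ℝ} (hγ : 0 < γ)
    (hol : ∀ f, HolOn f → HolOn (T f))
    (lin : ∀ f₁ f₂ : ℂ → ℂ, ∀ c : ℂ, HolOn f₁ → HolOn f₂ → ∀ z ∈ ball (0:ℂ) 1,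
      T (fun z => f₁ z + c * f₂ z) z = T f₁ z + c * T f₂ z)
    (cong : ∀ f₁ f₂ : ℂ → ℂ, (∀ z ∈ ball (0:ℂ) 1, f₁ z = f₂ z) →
      ∀ z ∈ ball (0:ℂ) 1, T f₁ z = T f₂ z)
    (mon : ∀ n : ℕ, 1 ≤ n → ∀ R, HolOn R → ∃ S, HolOn S ∧
      (∀ z ∈ ball (0:ℂ) 1, T (fun z => z^n * R z) z = z^(n-1+m0) * S z) ∧
      n * γ * ‖R 0‖ ≤ ‖S 0‖) :
    ∃ f ∈ Besov p, ∫⁻ z in ball (0:ℂ) 1, ENNReal.ofReal (‖T f z‖^2 * (1 - ‖z‖^2)^s) = ⊤ := by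
  have hone : HolOn (fun _ => (1:ℂ)) := differentiableOn_const _
  have hmonhol : ∀ n : ℕ, HolOn (fun z => z^n * (1:ℂ)) := by
    intro n
    have : Differentiable ℂ (fun z : ℂ => z^n * (1:ℂ)) := by fun_prop
    exact this.differentiableOn
  let c : ℕ → (ℂ → ℂ) → ℂ := fun k h => cf (1/2) (4^k-1+m0) h
  let y : ℕ → ℂ := fun k => (ac p k : ℂ) * c k (T (fun z => z^(4^k) * 1))
  have hpow : ∀ k : ℕ, 1 ≤ 4^k := fun k => Nat.one_le_pow _ _ (by norm_num)
  have hy : ∀ k : ℕ, γ * (ac p k * 4^k) ≤ ‖y k‖ := by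
    intro k
    obtain ⟨S, hS, hS1, hS2⟩ := mon (4^k) (hpow k) _ hone
    have : c k (T (fun z => z^(4^k) * 1)) = 2 * π * I * S 0 := by
      show cf (1/2) _ _ = _
      rw [cf_congr hS1, cf_pow hS]
    simp only [y]
    rw [this]
    simp only [norm_mul, Complex.norm_real, Complex.norm_I, Real.norm_eq_abs, abs_of_pos (ac_pos p k),
      abs_of_pos Real.pi_pos, Complex.norm_ofNat, mul_one]
    simp only [norm_one, mul_one] at hS2
    push_cast at hS2
    have h2 : ‖S 0‖ ≤ 2 * π * ‖S 0‖ := by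
      nlinarith [Real.pi_gt_three, norm_nonneg (S 0)]
    have := mul_le_mul_of_nonneg_left (hS2.trans h2) (ac_pos p k).le
    linarith
  choose E hE1 hE2 using fun (P : ℂ → ℂ) (k : ℕ) => sign_choice (c k (T P)) (y k)
  obtain ⟨P, hP0, hPs0⟩ : ∃ P : ℕ → ℂ → ℂ, P 0 = (fun _ => 0) ∧
      ∀ k, P (k+1) = fun z => P k z + (E (P k) k * (ac p k : ℂ)) * (z^(4^k) * 1) :=
    ⟨fun k => Nat.rec (fun _ => 0)
      (fun k P z => P z + (E P k * (ac p k : ℂ)) * (z^(4^k) * 1)) k, rfl, fun k => rfl⟩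
  obtain ⟨u, hudef⟩ : ∃ u : ℕ → ℂ, ∀ k, u k = E (P k) k * (ac p k : ℂ) := ⟨_, fun _ => rfl⟩
  have hPs : ∀ k, P (k+1) = fun z => P k z + u k * (z^(4^k) * 1) := by
    intro k
    rw [hPs0, hudef]
  have hPsum : ∀ k z, P k z = ∑ j ∈ Finset.range k, u j * z^(4^j) := by
    intro k z
    induction k with
    | zero => simp [hP0]
    | succ k ih => rw [hPs, Finset.sum_range_succ, ← ih]; simp
  have hPhol : ∀ k, HolOn (P k) := by
    intro k
    have : P k = fun z => ∑ j ∈ Finset.range k, u j * z^(4^j) := funext (hPsum k)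
    rw [this]
    have : Differentiable ℂ (fun z => ∑ j ∈ Finset.range k, u j * z^(4^j)) := by fun_prop
    exact this.differentiableOn
  have hu : ∀ k, ‖u k‖ = ac p k := by
    intro k
    rw [hudef]
    simp only [norm_mul, hE1, one_mul, Complex.norm_real, Real.norm_eq_abs, abs_of_pos (ac_pos p k)]
  have hu1 : ∀ k, ‖u k‖ ≤ 1 := fun k => (hu k).trans_le (ac_le p hp k)
  have hf := besov_mem hp hu
  refine ⟨_, hf, ?_⟩
  set f : ℂ → ℂ := fun z => ∑' k, u k * z^(4^k) with hfdef
  refine diverge (hol f hf.1) hs0 m0 (γ^2) (by positivity) ?_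
  intro k
  have hck : ‖y k‖ ≤ ‖c k (T f)‖ := by
    let R : ℂ → ℂ := fun z => ∑' j, u (j+(k+1)) * z^(4^(j+(k+1)) - 4^(k+1))
    have hR : HolOn R := by
      refine pser_hol (u := fun j => u (j+(k+1))) (e := fun j => 4^(j+(k+1)) - 4^(k+1))
        (fun j => hu1 _) ?_
      intro j
      have h1 : j + 1 ≤ 4^j := Nat.lt_pow_self (by norm_num)
      have h2 := hpow (k+1)
      have : j + 4^(k+1) ≤ 4^(j+(k+1)) := by
        rw [pow_add 4 j (k+1)]; nlinarith
      omega
    have hdec : ∀ z ∈ ball (0:ℂ) 1, f z = P (k+1) z + 1 * (z^(4^(k+1)) * R z) := by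
      intro z hz
      have hsm := pser_summable hu1 (fun k => k_le k) hz
      rw [hfdef, hPsum, one_mul]
      simp only
      rw [← hsm.sum_add_tsum_nat_add (k+1), ← tsum_mul_left]
      congr 2
      ext j
      have : 4^(k+1) ≤ 4^(j+(k+1)) := Nat.pow_le_pow_right (by norm_num) (by omega)
      have : z^(4^(j+(k+1))) = z^(4^(k+1)) * z^(4^(j+(k+1)) - 4^(k+1)) := by
        rw [← pow_add]; congr 1; omega
      rw [this]; ring
    have hRhol : HolOn (fun z => z^(4^(k+1)) * R z) := by
      refine DifferentiableOn.mul ?_ hR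
      exact (differentiable_id.pow _).differentiableOn
    obtain ⟨S, hS, hS1, -⟩ := mon (4^(k+1)) (hpow _) R hR
    have z0 : c k (T (fun z => z^(4^(k+1)) * R z)) = 0 := by
      show cf (1/2) _ _ = _
      have hlt : 4^k < 4^(k+1) := Nat.pow_lt_pow_right (by norm_num) (by omega)
      have hS' : HolOn (fun z => z^(4^(k+1) - 4^k) * S z) := by
        refine DifferentiableOn.mul ?_ hS
        exact (differentiable_id.pow _).differentiableOn
      have : ∀ z ∈ ball (0:ℂ) 1, T (fun z => z^(4^(k+1)) * R z) z =
          z^(4^k-1+m0) * (z^(4^(k+1) - 4^k) * S z) := by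
        intro z hz
        rw [hS1 z hz, ← mul_assoc, ← pow_add]
        congr 2
        have := hpow k
        omega
      rw [cf_congr this, cf_pow hS']
      have : 4^(k+1) - 4^k ≠ 0 := by omega
      simp [this]
    have h1 : c k (T f) = c k (T (P (k+1))) := by
      have : c k (T f) = c k (T (P (k+1))) + 1 * c k (T (fun z => z^(4^(k+1)) * R z)) := by
        show cf (1/2) _ _ = cf (1/2) _ _ + 1 * cf (1/2) _ _
        rw [← cf_add (hol _ (hPhol _)) (hol _ hRhol)]
        refine cf_congr (fun z hz => ?_) _
        rw [cong _ _ hdec z hz, lin _ _ _ (hPhol _) hRhol z hz]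
      rw [this, z0]; ring
    have h2 : c k (T (P (k+1))) = c k (T (P k)) + E (P k) k * y k := by
      have : c k (T (P (k+1))) = c k (T (P k)) + u k * c k (T (fun z => z^(4^k) * 1)) := by
        show cf (1/2) _ _ = cf (1/2) _ _ + u k * cf (1/2) _ _
        rw [← cf_add (hol _ (hPhol _)) (hol _ (hmonhol _))]
        refine cf_congr (fun z hz => ?_) _
        rw [hPs, lin _ _ _ (hPhol _) (hmonhol _) z hz]
      rw [this, hudef]; simp only [y]; ring
    rw [h1, h2]
    exact hE2 _ _
  have h3 := (hy k).trans hck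
  have hac := ac_pos p k
  calc γ^2 * (1/((k:ℝ)+1)) * (4:ℝ)^(k*(1+s)) ≤ γ^2 * (ac p k * 4^k)^2 := by
        rw [mul_assoc]; exact mul_le_mul_of_nonneg_left (ac_sq hp hs1 k) (by positivity)
    _ = (γ * (ac p k * 4^k))^2 := by ring
    _ ≤ _ := by
      exact pow_le_pow_left₀ (by positivity) h3 2
end

noncomputable section

lemma factor {g : ℂ → ℂ} (hg : HolOn g) (hne : ¬ ∀ z ∈ ball (0:ℂ) 1, g z = 0) :
    ∃ (m0 : ℕ) (G : ℂ → ℂ), HolOn G ∧ G 0 ≠ 0 ∧ ∀ z ∈ ball (0:ℂ) 1, g z = z^m0 * G z := by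
  have h0 : (0:ℂ) ∈ ball (0:ℂ) 1 := by simp
  have han : AnalyticOnNhd ℂ g (ball 0 1) := DifferentiableOn.analyticOnNhd hg isOpen_ball
  have hnz : ¬ ∀ᶠ z in nhds (0:ℂ), g z = 0 := by
    intro h
    apply hne
    intro z hz
    exact han.eqOn_zero_of_preconnected_of_eventuallyEq_zero
      (convex_ball (0:ℂ) 1).isPreconnected h0 h hz
  obtain ⟨m0, G0, hG0, hG0n, hev⟩ := (han 0 h0).exists_eventuallyEq_pow_smul_nonzero_iff.mpr hnz
  simp only [sub_zero, smul_eq_mul] at hev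
  let G : ℂ → ℂ := fun z => if z = 0 then G0 0 else g z / z^m0
  have hGe : G =ᶠ[nhds 0] G0 := by
    filter_upwards [hev] with z hz
    by_cases h : z = 0
    · simp [G, h]
    · simp only [G, h, if_false]
      rw [hz, mul_div_cancel_left₀]
      exact pow_ne_zero _ h
  refine ⟨m0, G, ?_, by simpa [G] using hG0n, ?_⟩
  · intro z hz
    by_cases h : z = 0
    · rw [h]
      exact (hG0.differentiableAt.congr_of_eventuallyEq hGe).differentiableWithinAt
    · have hd : DifferentiableAt ℂ g z := (han z hz).differentiableAt
      have : DifferentiableAt ℂ (fun w => g w / w^m0) z :=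
        hd.div (by fun_prop) (pow_ne_zero _ h)
      refine (this.congr_of_eventuallyEq ?_).differentiableWithinAt
      filter_upwards [isOpen_ne.mem_nhds h] with w hw
      have hw' : w ≠ 0 := hw
      simp [G, hw']
  · intro z hz
    by_cases h : z = 0
    · rw [h, hev.self_of_nhds]; simp [G]
    · simp only [G, h, if_false]
      rw [mul_div_cancel₀]
      exact pow_ne_zero _ h

lemma hol_at {f : ℂ → ℂ} (hf : HolOn f) {z : ℂ} (hz : z ∈ ball (0:ℂ) 1) :
    DifferentiableAt ℂ f z := hf.differentiableAt (isOpen_ball.mem_nhds hz)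

lemma hol_deriv {f : ℂ → ℂ} (hf : HolOn f) : HolOn (deriv f) :=
  DifferentiableOn.deriv hf isOpen_ball

lemma deriv_cong {f h : ℂ → ℂ} (H : ∀ z ∈ ball (0:ℂ) 1, f z = h z) :
    ∀ z ∈ ball (0:ℂ) 1, deriv f z = deriv h z := by
  intro z hz
  apply Filter.EventuallyEq.deriv_eq
  filter_upwards [isOpen_ball.mem_nhds hz] with w hw using H w hw

lemma pow_mul_deriv {R : ℂ → ℂ} (hR : HolOn R) {n : ℕ} (hn : 1 ≤ n) :
    ∀ z ∈ ball (0:ℂ) 1, deriv (fun z => z^n * R z) z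
      = z^(n-1) * (n * R z + z * deriv R z) := by
  intro z hz
  have h := ((hasDerivAt_pow n z).mul (hol_at hR hz).hasDerivAt).deriv
  have e : (fun z : ℂ => z^n * R z) = (fun z => z^n) * R := rfl
  rw [e, h]
  obtain ⟨k, rfl⟩ : ∃ k, n = k + 1 := ⟨n - 1, by omega⟩
  simp only [Nat.add_sub_cancel, pow_succ]
  ring

lemma deriv_lin {f₁ f₂ : ℂ → ℂ} (h1 : HolOn f₁) (h2 : HolOn f₂) (c : ℂ) :
    ∀ z ∈ ball (0:ℂ) 1, deriv (fun z => f₁ z + c * f₂ z) z = deriv f₁ z + c * deriv f₂ z := by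
  intro z hz
  exact ((hol_at h1 hz).hasDerivAt.add ((hol_at h2 hz).hasDerivAt.const_mul c)).deriv

lemma bad_Ig {p s : ℝ} (hp : 2 < p) (hs0 : 0 < s) (hs1 : s ≤ 1 - 2/p)
    {g : ℂ → ℂ} (hg : HolOn g) (hne : ¬ ∀ z ∈ ball (0:ℂ) 1, g z = 0) :
    ∃ f ∈ Besov p, ∫⁻ z in ball (0:ℂ) 1,
      ENNReal.ofReal (‖g z * deriv f z‖^2 * (1 - ‖z‖^2)^s) = ⊤ := by
  obtain ⟨m0, G, hG, hG0, hgG⟩ := factor hg hne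
  refine main_abs hp hs0 hs1 (fun f z => g z * deriv f z) m0 (γ := ‖G 0‖) (by simpa using hG0)
    ?_ ?_ ?_ ?_
  · intro f hf
    exact hg.mul (hol_deriv hf)
  · intro f₁ f₂ c h1 h2 z hz
    rw [deriv_lin h1 h2 c z hz]; ring
  · intro f₁ f₂ H z hz
    rw [deriv_cong H z hz]
  · intro n hn R hR
    refine ⟨fun z => G z * (n * R z + z * deriv R z), ?_, ?_, ?_⟩
    · refine DifferentiableOn.mul hG (DifferentiableOn.add (DifferentiableOn.const_mul hR _) ?_)
      exact DifferentiableOn.mul differentiableOn_id (hol_deriv hR)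
    · intro z hz
      simp only
      rw [pow_mul_deriv hR hn z hz, hgG z hz, pow_add]; ring
    · simp only [zero_mul, add_zero, norm_mul, Complex.norm_natCast]
      apply le_of_eq; ring

lemma bad_Mg {p s : ℝ} (hp : 2 < p) (hs0 : 0 < s) (hs1 : s ≤ 1 - 2/p)
    {g : ℂ → ℂ} (hg : HolOn g) (hne : ¬ ∀ z ∈ ball (0:ℂ) 1, g z = 0) :
    ∃ f ∈ Besov p, ∫⁻ z in ball (0:ℂ) 1,
      ENNReal.ofReal (‖deriv (Mg g f) z‖^2 * (1 - ‖z‖^2)^s) = ⊤ := by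
  obtain ⟨m0, G, hG, hG0, hgG⟩ := factor hg hne
  refine main_abs hp hs0 hs1 (fun f => deriv (Mg g f)) m0 (γ := ‖G 0‖) (by simpa using hG0)
    ?_ ?_ ?_ ?_
  · intro f hf
    exact hol_deriv (hg.mul hf)
  · intro f₁ f₂ c h1 h2 z hz
    have e : Mg g (fun z => f₁ z + c * f₂ z) = fun z => Mg g f₁ z + c * Mg g f₂ z := by
      ext z; simp only [Mg]; ring
    rw [e]
    exact deriv_lin (hg.mul h1) (hg.mul h2) c z hz
  · intro f₁ f₂ H z hz
    refine deriv_cong (fun w hw => ?_) z hz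
    simp only [Mg]; rw [H w hw]
  · intro n hn R hR
    have hGR : HolOn (fun z => G z * R z) := DifferentiableOn.mul hG hR
    refine ⟨fun z => ((n+m0 : ℕ):ℂ) * (G z * R z) + z * deriv (fun z => G z * R z) z, ?_, ?_, ?_⟩
    · refine DifferentiableOn.add (DifferentiableOn.const_mul hGR _) ?_
      exact DifferentiableOn.mul differentiableOn_id (hol_deriv hGR)
    · intro z hz
      have h1 : ∀ z ∈ ball (0:ℂ) 1, Mg g (fun z => z^n * R z) z = z^(n+m0) * (G z * R z) := by
        intro z hz
        simp only [Mg]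
        rw [hgG z hz, pow_add]; ring
      simp only
      rw [deriv_cong h1 z hz, pow_mul_deriv hGR (by omega) z hz]
      congr 2
      omega
    · simp only [zero_mul, add_zero, norm_mul, Complex.norm_natCast]
      push_cast
      have : 0 ≤ (m0:ℝ) * (‖G 0‖ * ‖R 0‖) := by positivity
      nlinarith

lemma Ig_prim {g f : ℂ → ℂ} (hg : HolOn g) (hf : HolOn f) :
    ∃ F : ℂ → ℂ, (∀ z ∈ ball (0:ℂ) 1, HasDerivAt F (g z * deriv f z) z) ∧
      ∀ z ∈ ball (0:ℂ) 1, Ig g f z = F z - F 0 := by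
  have hh : HolOn (fun z => g z * deriv f z) := DifferentiableOn.mul hg (hol_deriv hf)
  obtain ⟨F, hF⟩ := DifferentiableOn.isExactOn_ball hh
  refine ⟨F, hF, ?_⟩
  intro z hz
  have hmem : ∀ t ∈ uIcc (0:ℝ) 1, (t:ℂ) * z ∈ ball (0:ℂ) 1 := by
    intro t ht
    rw [uIcc_of_le zero_le_one] at ht
    simp only [mem_ball_zero_iff] at hz ⊢
    rw [norm_mul, Complex.norm_real, Real.norm_eq_abs, abs_of_nonneg ht.1]
    nlinarith [ht.1, ht.2, norm_nonneg z]
  have hd : ∀ t ∈ uIcc (0:ℝ) 1, HasDerivAt (fun t : ℝ => F ((t:ℂ) * z))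
      (g ((t:ℂ)*z) * deriv f ((t:ℂ)*z) * z) t := by
    intro t ht
    have h1 : HasDerivAt (fun w : ℂ => w * z) z (t:ℂ) := by
      simpa using (hasDerivAt_id (t:ℂ)).mul_const z
    exact ((hF _ (hmem t ht)).comp (t:ℂ) h1).comp_ofReal
  have hitv : IntervalIntegrable (fun t : ℝ => g ((t:ℂ)*z) * deriv f ((t:ℂ)*z) * z) volume 0 1 := by
    apply ContinuousOn.intervalIntegrable
    refine ContinuousOn.mul ?_ continuousOn_const
    refine ContinuousOn.comp (g := fun z => g z * deriv f z) (t := ball 0 1) hh.continuousOn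
      (by fun_prop) hmem
  have := intervalIntegral.integral_eq_sub_of_hasDerivAt hd hitv
  rw [intervalIntegral.integral_mul_const] at this
  simp only [Ig]
  rw [mul_comm, this]
  simp

lemma Ig_deriv {g f : ℂ → ℂ} (hg : HolOn g) (hf : HolOn f) :
    ∀ z ∈ ball (0:ℂ) 1, deriv (Ig g f) z = g z * deriv f z := by
  obtain ⟨F, hF, hI⟩ := Ig_prim hg hf
  intro z hz
  rw [deriv_cong hI z hz]
  exact ((hF z hz).sub_const _).deriv

lemma Qs_fin {s : ℝ} {h : ℂ → ℂ} (hh : h ∈ Qs s)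
    (hinf : ∫⁻ z in ball (0:ℂ) 1, ENNReal.ofReal (‖deriv h z‖^2 * (1 - ‖z‖^2)^s) = ⊤) : False := by
  have h1 := hh.2
  have h2 := le_iSup₂ (f := fun (a : ℂ) (_ : a ∈ ball (0:ℂ) 1) => ∫⁻ z in Metric.ball (0:ℂ) 1,
      ENNReal.ofReal (‖deriv h z‖ ^ 2 * (1 - ‖phi a z‖ ^ 2) ^ s) ∂dA) 0 (by simp)
  have h3 := h2.trans_lt h1
  rw [dA_int] at h3
  have e : ∀ z, phi 0 z = -z := by intro z; simp [phi]
  simp only [e, norm_neg] at h3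
  rw [hinf, ENNReal.mul_top] at h3
  · exact lt_irrefl _ h3
  · simp

lemma Qs_zero {s : ℝ} {h : ℂ → ℂ} (hh : ∀ z ∈ ball (0:ℂ) 1, h z = 0) : h ∈ Qs s := by
  have hd : ∀ z ∈ ball (0:ℂ) 1, deriv h z = 0 := by
    intro z hz
    rw [deriv_cong (h := fun _ => 0) hh z hz]; simp
  refine ⟨(differentiableOn_const (0:ℂ)).congr hh, ?_⟩
  have : ∀ a : ℂ, ∫⁻ z in Metric.ball (0:ℂ) 1,
      ENNReal.ofReal (‖deriv h z‖ ^ 2 * (1 - ‖phi a z‖ ^ 2) ^ s) ∂dA = 0 := by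
    intro a
    rw [setLIntegral_congr_fun (g := fun _ => 0) measurableSet_ball]
    · simp
    · intro z hz
      simp [hd z hz]
  simp only [this]
  simp

end

/-- For `2 < p < ∞`, `0 < s ≤ 1 - 2/p`, and `g` holomorphic on the unit
disc: (i) `I_g` maps `Bᵖ` into `Q_s` iff `g ≡ 0`; (ii) `M_g` maps `Bᵖ` into `Q_s` iff
`g ≡ 0` (on the disc). -/
theorem stmt13 (p s : ℝ) (hp : 2 < p) (hs0 : 0 < s) (hs1 : s ≤ 1 - 2 / p)
    (g : ℂ → ℂ) (hg : HolOn g) :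
    (MapsInto (Ig g) (Besov p) (Qs s) ↔ ∀ z ∈ Metric.ball (0:ℂ) 1, g z = 0) ∧
    (MapsInto (Mg g) (Besov p) (Qs s) ↔ ∀ z ∈ Metric.ball (0:ℂ) 1, g z = 0) := by
  refine ⟨⟨?_, ?_⟩, ⟨?_, ?_⟩⟩
  · intro hM
    by_contra hne
    obtain ⟨f, hf, hinf⟩ := bad_Ig hp hs0 hs1 hg hne
    refine Qs_fin (hM f hf) ?_
    rw [← hinf]
    refine setLIntegral_congr_fun measurableSet_ball ?_
    intro z hz
    simp only [Ig_deriv hg hf.1 z hz]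
  · intro h0 f _
    refine Qs_zero ?_
    intro z hz
    have : ∫ t in (0:ℝ)..1, g ((t : ℂ) * z) * deriv f ((t : ℂ) * z)
        = ∫ t in (0:ℝ)..1, (0:ℂ) := by
      refine intervalIntegral.integral_congr ?_
      intro t ht
      rw [uIcc_of_le zero_le_one] at ht
      have hm : (t:ℂ) * z ∈ ball (0:ℂ) 1 := by
        simp only [mem_ball_zero_iff] at hz ⊢
        rw [norm_mul, Complex.norm_real, Real.norm_eq_abs, abs_of_nonneg ht.1]
        nlinarith [ht.1, ht.2, norm_nonneg z]
      simp only [h0 _ hm, zero_mul]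
    simp only [Ig]
    rw [this]; simp
  · intro hM
    by_contra hne
    obtain ⟨f, hf, hinf⟩ := bad_Mg hp hs0 hs1 hg hne
    exact Qs_fin (hM f hf) hinf
  · intro h0 f _
    refine Qs_zero ?_
    intro z hz
    simp [Mg, h0 z hz]
end
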